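/- Scaling law with periodic boundary conditions (Theorem 6.1): (i) there is a constant C > 0 such that for every ε ∈ (0,1/2) and δ ∈ (0,1) there exists u ∈ S₀^{per}(ε) with E_{ε,δ}(u) ≤ C · min{δ², ε·δ^{3/2}·(|ln(ε/δ^{1/2})| + 1), ε·δ^{1/2}}; (ii) there exist δ̄ ∈ (0,1) and c > 0 such that for all ε ∈ (0,1/2) and δ ∈ [δ̄,1) every u ∈ S₀^{per}(ε) satisfies E_{ε,δ}(u) ≥ c·ε·δ^{1/2}, and for all δ ∈ (0,δ̄) and ε ∈ [δ,1/2) every u ∈ S₀^{per}(ε) satisfies E_{ε,δ}(u) ≥ c · min{δ², ε·δ^{3/2}·(|ln(ε/δ^{1/2})| + 1)}. -/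

import Mathlib

open Real Finset

noncomputable section

/-- `Kof ε` is the largest integer `K` with `K * ε < 1`. -/
def Kof (ε : ℝ) : ℤ := ⌈1 / ε⌉ - 1

/-- Index set of the lattice `[0,1)² ∩ εℤ²`. -/
def Idx (ε : ℝ) : Finset (ℤ × ℤ) :=
  Finset.Icc 0 (Kof ε) ×ˢ Finset.Icc 0 (Kof ε)

/-- Indices `(i,j)` with `i + 2 ≤ K`. -/
def IdxH (ε : ℝ) : Finset (ℤ × ℤ) :=
  Finset.Icc 0 (Kof ε - 2) ×ˢ Finset.Icc 0 (Kof ε)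

/-- Indices `(i,j)` with `j + 2 ≤ K`. -/
def IdxV (ε : ℝ) : Finset (ℤ × ℤ) :=
  Finset.Icc 0 (Kof ε) ×ˢ Finset.Icc 0 (Kof ε - 2)

/-- Squared Euclidean norm on `ℝ × ℝ`. -/
def sqnorm (v : ℝ × ℝ) : ℝ := v.1 ^ 2 + v.2 ^ 2

/-- Euclidean scalar product on `ℝ × ℝ`. -/
def dotp (a b : ℝ × ℝ) : ℝ := a.1 * b.1 + a.2 * b.2

/-- Cross product `a × b = a₁b₂ − a₂b₁`. -/
def crossp (a b : ℝ × ℝ) : ℝ := a.1 * b.2 - a.2 * b.1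

/-- sign with convention `sign 0 = -1`. -/
def sgn (x : ℝ) : ℝ := if 0 < x then 1 else -1

/-- A spin field: unit vectors on the lattice. -/
def IsSpin (ε : ℝ) (u : ℤ × ℤ → ℝ × ℝ) : Prop :=
  ∀ p ∈ Idx ε, sqnorm (u p) = 1

/-- Spin fields with ferromagnetic Dirichlet boundary condition on the left boundary. -/
def InS0 (ε : ℝ) (u : ℤ × ℤ → ℝ × ℝ) : Prop :=
  IsSpin ε u ∧ ∀ j ∈ Finset.Icc (0 : ℤ) (Kof ε), u (0, j) = (0, 1)

/-- Horizontal part of the energy. -/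
def Ehor (ε δ : ℝ) (u : ℤ × ℤ → ℝ × ℝ) : ℝ :=
  ε ^ 2 / 2 * ∑ p ∈ IdxH ε,
    sqnorm (u p - (2 * (1 - δ)) • u (p.1 + 1, p.2) + u (p.1 + 2, p.2))

/-- Vertical part of the energy. -/
def Ever (ε δ : ℝ) (u : ℤ × ℤ → ℝ × ℝ) : ℝ :=
  ε ^ 2 / 2 * ∑ p ∈ IdxV ε,
    sqnorm (u p - (2 * (1 - δ)) • u (p.1, p.2 + 1) + u (p.1, p.2 + 2))

/-- The total energy `E_{ε,δ}`. -/
def E (ε δ : ℝ) (u : ℤ × ℤ → ℝ × ℝ) : ℝ := Ehor ε δ u + Ever ε δ u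

/-- The scaling function `s(ε,δ)`. -/
def sfun (ε δ : ℝ) : ℝ :=
  min (δ ^ 2)
    (min (ε * (δ * Real.sqrt δ) * (|Real.log (ε / Real.sqrt δ)| + 1)) (ε * Real.sqrt δ))

/-- Horizontal angular velocity of a spin field. -/
def thetaH (u : ℤ × ℤ → ℝ × ℝ) (p : ℤ × ℤ) : ℝ :=
  sgn (crossp (u p) (u (p.1 + 1, p.2))) * Real.arccos (dotp (u p) (u (p.1 + 1, p.2)))

/-- Vertical angular velocity of a spin field. -/
def thetaV (u : ℤ × ℤ → ℝ × ℝ) (p : ℤ × ℤ) : ℝ :=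
  sgn (crossp (u p) (u (p.1, p.2 + 1))) * Real.arccos (dotp (u p) (u (p.1, p.2 + 1)))

/-- The function `p` of Lemma 3.1. -/
def pfun (θ₁ θ₂ : ℝ) : ℝ :=
  if θ₁ = θ₂ then 1
  else (Real.sin θ₁ ^ 2 + Real.sin θ₂ ^ 2 - (1 - Real.cos (θ₁ + θ₂))) /
    (2 * (Real.sin (θ₂ / 2) - Real.sin (θ₁ / 2)) ^ 2)

end

/-- The periodic class `S₀^{per}(ε)`. -/
def InS0per (ε : ℝ) (u : ℤ × ℤ → ℝ × ℝ) : Prop :=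
  InS0 ε u ∧ ∀ k ∈ Finset.Icc (0 : ℤ) (Kof ε),
    dotp (u (0, k)) (u (1, k)) = dotp (u (Kof ε - 1, k)) (u (Kof ε, k)) ∧
    dotp (u (k, 0)) (u (k, 1)) = dotp (u (k, Kof ε - 1)) (u (k, Kof ε))



/-! ### Basic facts on `Kof` -/

lemma Kof_facts {ε : ℝ} (h0 : 0 < ε) (h1 : ε < 1 / 2) :
    ∃ k : ℕ, Kof ε = (k : ℤ) ∧ 2 ≤ k ∧ (k : ℝ) * ε < 1 ∧ 1 ≤ ((k : ℝ) + 1) * ε := by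
  have hpos : 0 < 1 / ε := by positivity
  have h2 : (2 : ℝ) < 1 / ε := by
    rw [lt_div_iff₀ h0]; linarith
  have hc1 : (1 / ε) ≤ ((⌈1 / ε⌉ : ℤ) : ℝ) := Int.le_ceil _
  have hc2 : ((⌈1 / ε⌉ : ℤ) : ℝ) < 1 / ε + 1 := Int.ceil_lt_add_one _
  have hc3 : (2 : ℤ) < ⌈1 / ε⌉ := by
    have : (2 : ℝ) < ((⌈1 / ε⌉ : ℤ) : ℝ) := lt_of_lt_of_le h2 hc1
    exact_mod_cast this
  have hK : 2 ≤ Kof ε := by unfold Kof; omega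
  obtain ⟨k, hk⟩ := Int.eq_ofNat_of_zero_le (by omega : 0 ≤ Kof ε)
  have hkr : (k : ℝ) = ((⌈1 / ε⌉ : ℤ) : ℝ) - 1 := by
    have : (k : ℤ) = ⌈1 / ε⌉ - 1 := by rw [← hk]; rfl
    have h3 : ((k : ℤ) : ℝ) = ((⌈1 / ε⌉ - 1 : ℤ) : ℝ) := by rw [this]
    push_cast at h3; exact h3
  refine ⟨k, hk, by omega, ?_, ?_⟩
  · have : (k : ℝ) < 1 / ε := by rw [hkr]; linarith
    rwa [lt_div_iff₀ h0] at this
  · have : 1 / ε ≤ (k : ℝ) + 1 := by rw [hkr]; linarith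
    rwa [div_le_iff₀ h0] at this

/-- triple energy density -/
noncomputable def tri (δ : ℝ) (a b c : ℝ × ℝ) : ℝ := sqnorm (a - (2 * (1 - δ)) • b + c)

lemma tri_nonneg (δ : ℝ) (a b c : ℝ × ℝ) : 0 ≤ tri δ a b c := by
  unfold tri sqnorm; positivity

lemma sum_Icc_int (n : ℕ) (f : ℤ → ℝ) :
    ∑ i ∈ Finset.Icc (0 : ℤ) ((n : ℤ) - 1), f i = ∑ i ∈ Finset.range n, f (i : ℤ) := by
  symm
  refine Finset.sum_bij (fun (i : ℕ) _ => (i : ℤ)) ?_ ?_ ?_ ?_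
  · intro i hi; simp at hi ⊢; omega
  · intro a _ b _ h; simpa using h
  · intro b hb
    simp at hb
    exact ⟨b.toNat, by simp; omega, by omega⟩
  · intros; rfl

lemma Ehor_eq {ε δ : ℝ} {k : ℕ} (hk : Kof ε = (k : ℤ)) (h2 : 2 ≤ k) (u : ℤ × ℤ → ℝ × ℝ) :
    Ehor ε δ u = ε ^ 2 / 2 * ∑ j ∈ range (k + 1), ∑ i ∈ range (k - 1),
      tri δ (u (i, j)) (u (i + 1, j)) (u (i + 2, j)) := by
  unfold Ehor IdxH
  rw [hk, Finset.sum_product]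
  have e1 : (k : ℤ) - 2 = ((k - 1 : ℕ) : ℤ) - 1 := by omega
  have e2 : (k : ℤ) = ((k + 1 : ℕ) : ℤ) - 1 := by omega
  rw [e1, Finset.sum_comm]
  conv_lhs => rw [e2]
  rw [sum_Icc_int]
  simp only [sum_Icc_int]
  rfl

lemma Ever_eq {ε δ : ℝ} {k : ℕ} (hk : Kof ε = (k : ℤ)) (h2 : 2 ≤ k) (u : ℤ × ℤ → ℝ × ℝ) :
    Ever ε δ u = ε ^ 2 / 2 * ∑ i ∈ range (k + 1), ∑ j ∈ range (k - 1),
      tri δ (u (i, j)) (u (i, j + 1)) (u (i, j + 2)) := by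
  unfold Ever IdxV
  rw [hk, Finset.sum_product]
  have e1 : (k : ℤ) - 2 = ((k - 1 : ℕ) : ℤ) - 1 := by omega
  have e2 : (k : ℤ) = ((k + 1 : ℕ) : ℤ) - 1 := by omega
  rw [e1]
  conv_lhs => rw [e2]
  rw [sum_Icc_int]
  simp only [sum_Icc_int]
  rfl

/-- algebraic form of the density for unit vectors -/
lemma tri_eq {δ : ℝ} {a b c : ℝ × ℝ} (hb : sqnorm b = 1) :
    tri δ a b c = (dotp a b + dotp b c - 2 * (1 - δ)) ^ 2 + (crossp b c - crossp a b) ^ 2 := by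
  obtain ⟨a1, a2⟩ := a; obtain ⟨b1, b2⟩ := b; obtain ⟨c1, c2⟩ := c
  simp only [tri, sqnorm, dotp, crossp, Prod.mk_sub_mk, Prod.smul_mk, Prod.mk_add_mk, smul_eq_mul] at *
  have h2 : b2 ^ 2 = 1 - b1 ^ 2 := by linarith
  set s := a1 + c1; set t := a2 + c2
  have e1 : a1 * b1 + a2 * b2 + (b1 * c1 + b2 * c2) - 2 * (1 - δ)
      = s * b1 + t * b2 - 2 * (1 - δ) := by simp only [s, t]; ring
  have e2 : b1 * c2 - b2 * c1 - (a1 * b2 - a2 * b1) = b1 * t - b2 * s := by simp only [s, t]; ring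
  have e3 : a1 - 2 * (1 - δ) * b1 + c1 = s - 2 * (1 - δ) * b1 := by simp only [s]; ring
  have e4 : a2 - 2 * (1 - δ) * b2 + c2 = t - 2 * (1 - δ) * b2 := by simp only [t]; ring
  rw [e1, e2, e3, e4]
  linear_combination (4 * (1 - δ) ^ 2 - s ^ 2 - t ^ 2) * hb

lemma dot_cross {a b : ℝ × ℝ} (ha : sqnorm a = 1) (hb : sqnorm b = 1) :
    dotp a b ^ 2 + crossp a b ^ 2 = 1 := by
  simp only [sqnorm, dotp, crossp] at *
  calc _ = (a.1 ^ 2 + a.2 ^ 2) * (b.1 ^ 2 + b.2 ^ 2) := by ring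
    _ = 1 := by rw [ha, hb]; norm_num

/-- signed angle (valid when the scalar product is positive) -/
noncomputable def ang (a b : ℝ × ℝ) : ℝ := Real.arcsin (crossp a b)

lemma sin_ang {a b : ℝ × ℝ} (ha : sqnorm a = 1) (hb : sqnorm b = 1) :
    Real.sin (ang a b) = crossp a b := by
  have h := dot_cross ha hb
  apply Real.sin_arcsin <;> nlinarith [sq_nonneg (dotp a b)]

lemma cos_ang {a b : ℝ × ℝ} (ha : sqnorm a = 1) (hb : sqnorm b = 1) (hp : 0 ≤ dotp a b) :
    Real.cos (ang a b) = dotp a b := by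
  have h := dot_cross ha hb
  unfold ang
  rw [Real.cos_arcsin, show 1 - crossp a b ^ 2 = dotp a b ^ 2 by linarith, Real.sqrt_sq hp]

lemma abs_ang_lt {a b : ℝ × ℝ} (ha : sqnorm a = 1) (hb : sqnorm b = 1) (hp : 9 / 10 ≤ dotp a b) :
    |ang a b| < π / 4 := by
  have hc := cos_ang ha hb (by linarith)
  by_contra hcon
  push Not at hcon
  have h1 : |ang a b| ≤ π := by
    unfold ang
    rw [abs_le]
    constructor <;> linarith [Real.pi_pos, Real.neg_pi_div_two_le_arcsin (crossp a b),
      Real.arcsin_le_pi_div_two (crossp a b)]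
  have h2 : Real.cos |ang a b| ≤ Real.cos (π / 4) :=
    Real.cos_le_cos_of_nonneg_of_le_pi (by positivity) h1 hcon
  rw [Real.cos_abs, hc, Real.cos_pi_div_four] at h2
  have h3 : √2 < 1.5 := by
    rw [Real.sqrt_lt' (by norm_num)]; norm_num
  linarith

/-- The discrete curl vanishes. -/
lemma curl_ang {a b c d : ℝ × ℝ} (ha : sqnorm a = 1) (hb : sqnorm b = 1) (hc : sqnorm c = 1)
    (hd : sqnorm d = 1) (hab : 9 / 10 ≤ dotp a b) (hbd : 9 / 10 ≤ dotp b d)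
    (hac : 9 / 10 ≤ dotp a c) (hcd : 9 / 10 ≤ dotp c d) :
    ang a b + ang b d = ang a c + ang c d := by
  have key : ∀ {x y z : ℝ × ℝ}, sqnorm y = 1 →
      crossp x y * dotp y z + dotp x y * crossp y z = crossp x z := by
    intro x y z hy
    simp only [sqnorm, dotp, crossp] at *
    linear_combination (x.1 * z.2 - x.2 * z.1) * hy
  have h1 := abs_lt.1 (abs_ang_lt ha hb hab)
  have h2 := abs_lt.1 (abs_ang_lt hb hd hbd)
  have h3 := abs_lt.1 (abs_ang_lt ha hc hac)
  have h4 := abs_lt.1 (abs_ang_lt hc hd hcd)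
  apply Real.injOn_sin
  · constructor <;> linarith
  · constructor <;> linarith
  · rw [Real.sin_add, Real.sin_add, sin_ang ha hb, sin_ang hb hd, sin_ang ha hc, sin_ang hc hd,
      cos_ang ha hb (by linarith), cos_ang hb hd (by linarith), cos_ang ha hc (by linarith),
      cos_ang hc hd (by linarith), key hb, key hc]


lemma sq_diff_le (s : ℕ → ℝ) (a w : ℕ) {l l' : ℕ} (hl : a ≤ l) (hll : l ≤ l') (hl' : l' ≤ a + w) :
    (s l' - s l) ^ 2 ≤ w * ∑ k ∈ Ico a (a + w), (s (k + 1) - s k) ^ 2 := by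
  have h1 : s l' - s l = ∑ k ∈ Ico l l', (s (k + 1) - s k) := by
    rw [Finset.sum_Ico_sub s hll]
  have h2 := @sq_sum_le_card_mul_sum_sq _ ℝ _ _ _ _ (Ico l l') (fun k => s (k + 1) - s k)
  rw [h1]
  refine h2.trans ?_
  apply mul_le_mul
  · simp only [Nat.card_Ico]; exact_mod_cast (by omega : l' - l ≤ w)
  · apply Finset.sum_le_sum_of_subset_of_nonneg
    · intro x hx; simp at hx ⊢; omega
    · intros; positivity
  · exact Finset.sum_nonneg (fun _ _ => by positivity)
  · positivity

/-- one-dimensional column lemma -/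
lemma column_lemma {δ : ℝ} (hδ : 0 < δ) (hδ1 : δ < 1) (N : ℕ) (hN : 1 ≤ N) (s p : ℕ → ℝ)
    (hp : ∀ l ≤ N, p l ≤ s l ^ 2)
    (hV : ∑ l ∈ range N, ((2 * δ - p l - p (l + 1)) ^ 2 + (s (l + 1) - s l) ^ 2)
      < 1 / 32 * min (N * δ ^ 2) (δ * √δ)) :
    (∀ l ≤ N, √δ / 2 ≤ s l) ∨ (∀ l ≤ N, s l ≤ - (√δ / 2)) := by
  set V := ∑ l ∈ range N, ((2 * δ - p l - p (l + 1)) ^ 2 + (s (l + 1) - s l) ^ 2) with hVdef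
  have hr : 0 < √δ := Real.sqrt_pos.2 hδ
  have hrr : √δ * √δ = δ := Real.mul_self_sqrt hδ.le
  have hr1 : √δ < 1 := by nlinarith
  have hV1 : V < 1 / 32 * (N * δ ^ 2) := lt_of_lt_of_le hV (by gcongr; exact min_le_left _ _)
  have hV2 : V < 1 / 32 * (δ * √δ) := lt_of_lt_of_le hV (by gcongr; exact min_le_right _ _)
  -- lower bound on the modulus
  have habs : ∀ l ≤ N, √δ / 2 ≤ |s l| := by
    intro l0 hl0
    by_contra hcon
    push Not at hcon
    set w := min N ⌈1 / √δ⌉₊ with hw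
    have hwN : w ≤ N := min_le_left _ _
    have hwub : (w : ℝ) ≤ 2 / √δ := by
      have h1 : (w : ℝ) ≤ ⌈1 / √δ⌉₊ := by exact_mod_cast min_le_right _ _
      have h2 := (Nat.ceil_lt_add_one (by positivity : 0 ≤ 1 / √δ)).le
      have h3 : (1 : ℝ) ≤ 1 / √δ := by rw [le_div_iff₀ hr]; linarith
      have h4 : 2 / √δ = 1 / √δ + 1 / √δ := by ring
      linarith
    set a := min l0 (N - w) with ha
    have ha1 : a ≤ l0 := min_le_left _ _
    have ha2 : l0 ≤ a + w := by omega
    have ha3 : a + w ≤ N := by omega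
    have hsub : Ico a (a + w) ⊆ range N := by intro x hx; simp at hx ⊢; omega
    have hVw : ∑ l ∈ Ico a (a + w), ((2 * δ - p l - p (l + 1)) ^ 2 + (s (l + 1) - s l) ^ 2) ≤ V :=
      Finset.sum_le_sum_of_subset_of_nonneg hsub (by intros; positivity)
    have hVw1 : ∑ l ∈ Ico a (a + w), (s (l + 1) - s l) ^ 2 ≤ V :=
      le_trans (Finset.sum_le_sum (fun l _ => by nlinarith [sq_nonneg (2 * δ - p l - p (l + 1))])) hVw
    have hVw2 : ∑ l ∈ Ico a (a + w), (2 * δ - p l - p (l + 1)) ^ 2 ≤ V :=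
      le_trans (Finset.sum_le_sum (fun l _ => by nlinarith [sq_nonneg (s (l + 1) - s l)])) hVw
    have hwV : w * ∑ l ∈ Ico a (a + w), (s (l + 1) - s l) ^ 2 ≤ δ / 16 := by
      calc _ ≤ 2 / √δ * (1 / 32 * (δ * √δ)) := by
            apply mul_le_mul hwub (hVw1.trans hV2.le) (Finset.sum_nonneg (by intros; positivity))
            positivity
        _ = δ / 16 := by field_simp; norm_num
    have hclose : ∀ l, a ≤ l → l ≤ a + w → |s l| ≤ 3 / 4 * √δ := by
      intro l h1 h2
      have h3 : (s l - s l0) ^ 2 ≤ δ / 16 := by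
        rcases le_total l l0 with h | h
        · have := sq_diff_le s a w h1 h ha2
          nlinarith
        · have := sq_diff_le s a w ha1 h h2
          nlinarith
      have h4 : |s l - s l0| ≤ √δ / 4 := by
        apply abs_le_of_sq_le_sq _ (by positivity)
        nlinarith
      have h5 := abs_sub_abs_le_abs_sub (s l) (s l0)
      linarith
    have hpl : ∀ l, a ≤ l → l ≤ a + w → p l ≤ 9 / 16 * δ := by
      intro l h1 h2
      have h3 := hclose l h1 h2
      have h4 := hp l (by omega)
      have h5 : s l ^ 2 ≤ 9 / 16 * δ := by
        rw [← sq_abs]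
        nlinarith [abs_nonneg (s l)]
      linarith
    have hlow : (w : ℝ) * (δ ^ 2 / 2) ≤ V := by
      refine le_trans ?_ hVw2
      have : (w : ℝ) * (δ ^ 2 / 2) = ∑ l ∈ Ico a (a + w), (δ ^ 2 / 2) := by
        simp
      rw [this]
      apply Finset.sum_le_sum
      intro l hl
      simp only [mem_Ico] at hl
      have h1 := hpl l hl.1 (by omega)
      have h2 := hpl (l + 1) (by omega) (by omega)
      nlinarith
    rcases min_choice N ⌈1 / √δ⌉₊ with h | h
    · rw [← hw] at h
      rw [h] at hlow
      have : (0:ℝ) < N * δ ^ 2 := by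
        have : (0:ℝ) < N := by exact_mod_cast hN
        positivity
      linarith
    · rw [← hw] at h
      have h1 : 1 / √δ ≤ (w : ℝ) := by rw [h]; exact Nat.le_ceil _
      have h2 : 1 / √δ * (δ ^ 2 / 2) ≤ V := le_trans (by gcongr) hlow
      have h3 : 1 / √δ * (δ ^ 2 / 2) = δ * √δ / 2 := by
        field_simp
        nlinarith
      have : 0 < δ * √δ := by positivity
      linarith
  -- no sign change
  have hstep : ∀ l < N, |s (l + 1) - s l| < √δ := by
    intro l hl
    have h1 : (s (l + 1) - s l) ^ 2 ≤ V := by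
      have := Finset.single_le_sum
        (f := fun l => ((2 * δ - p l - p (l + 1)) ^ 2 + (s (l + 1) - s l) ^ 2))
        (fun i _ => by positivity) (mem_range.2 hl)
      nlinarith [sq_nonneg (2 * δ - p l - p (l + 1))]
    apply abs_lt_of_sq_lt_sq _ hr.le
    nlinarith
  rcases le_total 0 (s 0) with h0 | h0
  · left
    intro l
    induction l with
    | zero =>
      intro _
      have := habs 0 (by omega); rwa [abs_of_nonneg h0] at this
    | succ l ih =>
      intro hl
      have h1 := ih (by omega)
      have h2 := habs (l + 1) hl
      have h3 := abs_lt.1 (hstep l (by omega))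
      rcases le_abs.1 h2 with h | h <;> linarith
  · right
    intro l
    induction l with
    | zero =>
      intro _
      have := habs 0 (by omega); rw [abs_of_nonpos h0] at this; linarith
    | succ l ih =>
      intro hl
      have h1 := ih (by omega)
      have h2 := habs (l + 1) hl
      have h3 := abs_lt.1 (hstep l (by omega))
      rcases le_abs.1 h2 with h | h <;> linarith

/-- one-dimensional row lemma -/
lemma row_lemma {δ : ℝ} (hδ : 0 < δ) (i : ℕ) (hi : 2 ≤ i) (t p : ℕ → ℝ)
    (hp0 : ∀ l < i, 0 ≤ p l) (hp : ∀ l < i, t l ^ 2 ≤ 5 * p l)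
    (hR : ∑ l ∈ range (i - 1), (2 * δ - p l - p (l + 1)) ^ 2 ≤ i * δ ^ 2) :
    ∑ l ∈ range i, |t l| ≤ 5 * i * √δ := by
  have hsum : ∑ l ∈ range i, p l ≤ 4 * δ * i := by
    obtain ⟨q, rfl⟩ : ∃ q, i = q + 2 := ⟨i - 2, by omega⟩
    have e : q + 2 - 1 = q + 1 := by omega
    rw [e] at hR
    have h1 : ∑ l ∈ range (q + 2), p l ≤ ∑ l ∈ range (q + 1), (p l + p (l + 1)) := by
      rw [Finset.sum_add_distrib]
      rw [Finset.sum_range_succ _ (q+1), Finset.sum_range_succ (fun l => p (l+1)) q]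
      have : 0 ≤ ∑ l ∈ range q, p (l + 1) :=
        Finset.sum_nonneg (fun l hl => hp0 _ (by simp at hl; omega))
      linarith
    have h2 : ∀ l, p l + p (l + 1) ≤ 3 * δ + (2 * δ - p l - p (l + 1)) ^ 2 / (4 * δ) := by
      intro l
      rw [← sub_nonneg]
      have : 3 * δ + (2 * δ - p l - p (l + 1)) ^ 2 / (4 * δ) - (p l + p (l + 1))
        = ((2 * δ - (p l + p (l+1))) + 2 * δ) ^ 2 / (4 * δ) := by
        field_simp; ring
      rw [this]; positivity
    have h3 : ∑ l ∈ range (q + 1), (p l + p (l + 1))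
        ≤ (q + 1) * (3 * δ) + (∑ l ∈ range (q + 1), (2 * δ - p l - p (l + 1)) ^ 2) / (4 * δ) := by
      refine (Finset.sum_le_sum (fun l _ => h2 l)).trans ?_
      rw [Finset.sum_add_distrib, Finset.sum_div]
      simp
    have h4 : (∑ l ∈ range (q + 1), (2 * δ - p l - p (l + 1)) ^ 2) / (4 * δ)
        ≤ ((q + 2 : ℕ) : ℝ) * δ / 4 := by
      rw [div_le_iff₀ (by positivity)]
      nlinarith
    push_cast at *
    have : (0 : ℝ) ≤ q := by positivity
    nlinarith
  have hsq : ∑ l ∈ range i, t l ^ 2 ≤ 20 * δ * i := by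
    calc _ ≤ ∑ l ∈ range i, 5 * p l := Finset.sum_le_sum (fun l hl => hp l (by simpa using hl))
      _ = 5 * ∑ l ∈ range i, p l := by rw [Finset.mul_sum]
      _ ≤ _ := by linarith
  have hcs := @sq_sum_le_card_mul_sum_sq _ ℝ _ _ _ _ (range i) (fun k => |t k|)
  simp only [sq_abs, card_range] at hcs
  have hrr : √δ * √δ = δ := Real.mul_self_sqrt hδ.le
  apply le_of_sq_le_sq _ (by positivity)
  have hi0 : (0 : ℝ) ≤ i := by positivity
  calc _ ≤ (i : ℝ) * ∑ l ∈ range i, t l ^ 2 := hcs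
    _ ≤ i * (20 * δ * i) := by gcongr
    _ ≤ (5 * i * √δ) ^ 2 := by nlinarith [mul_nonneg hi0 hi0, mul_nonneg (mul_nonneg hi0 hi0) hδ.le]


lemma dotp_le_one {a b : ℝ × ℝ} (ha : sqnorm a = 1) (hb : sqnorm b = 1) : dotp a b ≤ 1 := by
  have h := dot_cross ha hb
  nlinarith [sq_nonneg (crossp a b)]

lemma dot_ge_of_tri {δ : ℝ} (hδ : δ ≤ 1 / 100) {a b c : ℝ × ℝ} (ha : sqnorm a = 1)
    (hb : sqnorm b = 1) (hc : sqnorm c = 1) (h : tri δ a b c ≤ 1 / 400) :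
    9 / 10 ≤ dotp a b ∧ 9 / 10 ≤ dotp b c := by
  rw [tri_eq hb] at h
  have h1 := dotp_le_one ha hb
  have h2 := dotp_le_one hb hc
  have h3 : (dotp a b + dotp b c - 2 * (1 - δ)) ^ 2 ≤ (1 / 20) ^ 2 := by
    nlinarith [sq_nonneg (crossp b c - crossp a b)]
  have h4 := abs_le.1 (abs_le_of_sq_le_sq h3 (by norm_num))
  constructor <;> linarith [h4.1]

lemma ang_sq_le {a b : ℝ × ℝ} (ha : sqnorm a = 1) (hb : sqnorm b = 1) (hp : 9 / 10 ≤ dotp a b) :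
    ang a b ^ 2 ≤ 5 * (1 - dotp a b) := by
  have h1 := abs_ang_lt ha hb hp
  have h2 := Real.cos_le_one_sub_mul_cos_sq (x := ang a b) (by linarith [Real.pi_pos])
  rw [cos_ang ha hb (by linarith)] at h2
  have hpi : π ^ 2 ≤ 10 := by
    have := Real.pi_lt_d2
    nlinarith [Real.pi_pos]
  have h3 : 1 / 5 ≤ 2 / π ^ 2 := by
    rw [div_le_div_iff₀ (by norm_num) (by positivity)]; linarith
  nlinarith [sq_nonneg (ang a b)]

lemma one_sub_dot_le {a b : ℝ × ℝ} (ha : sqnorm a = 1) (hb : sqnorm b = 1) (hp : 9 / 10 ≤ dotp a b) :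
    1 - dotp a b ≤ crossp a b ^ 2 := by
  have h := dot_cross ha hb
  have h1 := dotp_le_one ha hb
  nlinarith

lemma core_column {δ : ℝ} (hδ : 0 < δ) (hδ1 : δ ≤ 1 / 100) (k : ℕ) (v : ℕ → ℕ → ℝ × ℝ)
    (hu : ∀ i ≤ k, ∀ j ≤ k, sqnorm (v i j) = 1)
    (h0 : ∀ j ≤ k, v 0 j = (0, 1))
    (hHs : ∀ i j, i + 2 ≤ k → j ≤ k → tri δ (v i j) (v (i + 1) j) (v (i + 2) j) ≤ 1 / 400)
    (hVs : ∀ i j, i ≤ k → j + 2 ≤ k → tri δ (v i j) (v i (j + 1)) (v i (j + 2)) ≤ 1 / 400)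
    (i : ℕ) (hi : 2 ≤ i) (hik : 84 * i ≤ k)
    (hR : ∑ j ∈ range (k + 1), ∑ i' ∈ range (k - 1),
      tri δ (v i' j) (v (i' + 1) j) (v (i' + 2) j) ≤ k / 8 * (i * δ ^ 2)) :
    (k : ℝ) / 64 * min (δ ^ 2) (δ * √δ / (21 * i)) ≤
      ∑ j ∈ range (k - 1), tri δ (v i j) (v i (j + 1)) (v i (j + 2)) := by
  have hr : 0 < √δ := Real.sqrt_pos.2 hδ
  have hi0 : (0 : ℝ) < i := by exact_mod_cast (by omega : 0 < i)
  -- dots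
  have hdH : ∀ a j, a < k → j ≤ k → 9 / 10 ≤ dotp (v a j) (v (a + 1) j) := by
    intro a j ha hj
    by_cases h : a + 2 ≤ k
    · exact (dot_ge_of_tri hδ1 (hu _ (by omega) _ hj) (hu _ (by omega) _ hj) (hu _ (by omega) _ hj)
        (hHs a j h hj)).1
    · obtain ⟨b, rfl⟩ : ∃ b, a = b + 1 := ⟨a - 1, by omega⟩
      exact (dot_ge_of_tri hδ1 (hu _ (by omega) _ hj) (hu _ (by omega) _ hj) (hu _ (by omega) _ hj)
        (hHs b j (by omega) hj)).2
  have hdV : ∀ a j, a ≤ k → j < k → 9 / 10 ≤ dotp (v a j) (v a (j + 1)) := by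
    intro a j ha hj
    by_cases h : j + 2 ≤ k
    · exact (dot_ge_of_tri hδ1 (hu _ ha _ (by omega)) (hu _ ha _ (by omega)) (hu _ ha _ (by omega))
        (hVs a j ha h)).1
    · obtain ⟨b, rfl⟩ : ∃ b, j = b + 1 := ⟨j - 1, by omega⟩
      exact (dot_ge_of_tri hδ1 (hu _ ha _ (by omega)) (hu _ ha _ (by omega)) (hu _ ha _ (by omega))
        (hVs a b ha (by omega))).2
  set tH : ℕ → ℕ → ℝ := fun a j => ang (v a j) (v (a + 1) j) with htH
  set tV : ℕ → ℕ → ℝ := fun a j => ang (v a j) (v a (j + 1)) with htV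
  set X : ℕ → ℝ := fun j => ∑ a ∈ range i, tH a j with hX
  have hcurl : ∀ j < k, ∀ a ≤ k, tV a j = ∑ b ∈ range a, tH b (j + 1) - ∑ b ∈ range a, tH b j := by
    intro j hj a
    induction a with
    | zero =>
      intro _
      simp only [htV, range_zero, sum_empty, sub_zero]
      rw [h0 j (by omega), h0 (j + 1) (by omega)]
      simp [ang, crossp]
    | succ a ih =>
      intro ha
      have h1 := ih (by omega)
      have h2 := curl_ang (hu a (by omega) j (by omega)) (hu (a + 1) (by omega) j (by omega))
        (hu a (by omega) (j + 1) (by omega)) (hu (a + 1) (by omega) (j + 1) (by omega))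
        (hdH a j (by omega) (by omega)) (hdV (a + 1) j (by omega) hj)
        (hdV a j (by omega) hj) (hdH a (j + 1) (by omega) (by omega))
      rw [Finset.sum_range_succ, Finset.sum_range_succ]
      simp only [htH, htV] at *
      linarith
  have htel : ∀ j n, j + n ≤ k → ∑ l ∈ range n, tV i (j + l) = X (j + n) - X j := by
    intro j n hn
    have : ∀ l ∈ range n, tV i (j + l) = X (j + (l + 1)) - X (j + l) := by
      intro l hl
      simp at hl
      rw [hcurl (j + l) (by omega) i (by omega)]
      rfl
    rw [Finset.sum_congr rfl this, Finset.sum_range_sub (fun l => X (j + l))]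
    simp
  set R : ℕ → ℝ := fun j => ∑ i' ∈ range (k - 1), tri δ (v i' j) (v (i' + 1) j) (v (i' + 2) j) with hRdef
  have hgood : ∀ j ≤ k, R j ≤ i * δ ^ 2 → |X j| ≤ 5 * i * √δ := by
    intro j hj hRj
    refine (Finset.abs_sum_le_sum_abs _ _).trans ?_
    apply row_lemma hδ i hi (fun a => tH a j) (fun a => 1 - dotp (v a j) (v (a + 1) j))
    · intro l hl
      have := dotp_le_one (hu l (by omega) j hj) (hu (l + 1) (by omega) j hj)
      linarith
    · intro l hl
      exact ang_sq_le (hu l (by omega) j hj) (hu (l + 1) (by omega) j hj) (hdH l j (by omega) hj)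
    · refine le_trans ?_ hRj
      refine le_trans (b := ∑ l ∈ range (i - 1), tri δ (v l j) (v (l + 1) j) (v (l + 2) j)) ?_ ?_
      · apply Finset.sum_le_sum
        intro l hl
        simp at hl
        rw [tri_eq (hu (l + 1) (by omega) j hj)]
        nlinarith [sq_nonneg (crossp (v (l + 1) j) (v (l + 2) j) - crossp (v l j) (v (l + 1) j))]
      · apply Finset.sum_le_sum_of_subset_of_nonneg
        · intro x hx; simp at hx ⊢; omega
        · intros; exact tri_nonneg _ _ _ _
  set N := 21 * i with hN
  set f : ℕ → ℝ := fun l => tri δ (v i l) (v i (l + 1)) (v i (l + 2)) with hf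
  have hf0 : ∀ l, 0 ≤ f l := fun l => tri_nonneg _ _ _ _
  set A := ∑ j ∈ range (k - 1), f j with hA
  set μ := 1 / 32 * min ((N : ℝ) * δ ^ 2) (δ * √δ) with hμ
  have hμ0 : 0 ≤ μ := by positivity
  have hwin : ∀ j, j < k - N → R j ≤ i * δ ^ 2 → R (j + (N + 1)) ≤ i * δ ^ 2 →
      μ ≤ ∑ l ∈ range N, f (j + l) := by
    intro j hj hg1 hg2
    by_contra hcon
    push Not at hcon
    have hx1 := hgood j (by omega) hg1
    have hx2 := hgood (j + (N + 1)) (by omega) hg2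
    have ht := htel j (N + 1) (by omega)
    have hlt : ∀ l ≤ N, |tV i (j + l)| < π / 4 := fun l hl =>
      abs_ang_lt (hu i (by omega) _ (by omega)) (hu i (by omega) _ (by omega))
        (hdV i (j + l) (by omega) (by omega))
    have hsin : ∀ l ≤ N, Real.sin (tV i (j + l)) = crossp (v i (j + l)) (v i (j + l + 1)) :=
      fun l hl => sin_ang (hu i (by omega) _ (by omega)) (hu i (by omega) _ (by omega))
    have hcol := column_lemma hδ (by linarith) N (by omega)
      (fun l => crossp (v i (j + l)) (v i (j + l + 1)))
      (fun l => 1 - dotp (v i (j + l)) (v i (j + l + 1)))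
      (fun l hl => one_sub_dot_le (hu i (by omega) _ (by omega)) (hu i (by omega) _ (by omega))
        (hdV i (j + l) (by omega) (by omega)))
      (by
        refine lt_of_le_of_lt (le_of_eq ?_) hcon
        apply Finset.sum_congr rfl
        intro l hl
        simp at hl
        simp only [hf]
        rw [tri_eq (hu i (by omega) (j + l + 1) (by omega))]
        simp only [← add_assoc]
        ring_nf)
    have hX2 : |X (j + (N + 1)) - X j| ≤ 10 * i * √δ := by
      have := abs_sub (X (j + (N + 1))) (X j)
      linarith
    have hbig : (10 : ℝ) * i * √δ < (N + 1) * (√δ / 2) := by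
      rw [hN]; push_cast
      nlinarith [mul_pos hi0 hr]
    have hX3 := abs_le.1 hX2
    rcases hcol with hc | hc
    · have : ((N + 1 : ℕ) : ℝ) * (√δ / 2) ≤ ∑ l ∈ range (N + 1), tV i (j + l) := by
        have h1 : ((N + 1 : ℕ) : ℝ) * (√δ / 2) = ∑ l ∈ range (N + 1), √δ / 2 := by simp
        rw [h1]
        apply Finset.sum_le_sum
        intro l hl
        simp at hl
        have h2 := hc l (by omega)
        rw [← hsin l (by omega)] at h2
        have h3 := abs_lt.1 (hlt l (by omega))
        have h4 : 0 ≤ tV i (j + l) := by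
          by_contra h5
          push Not at h5
          have := Real.sin_neg_of_neg_of_neg_pi_lt h5 (by linarith [Real.pi_pos])
          linarith
        linarith [Real.sin_le h4]
      rw [ht] at this
      push_cast at this
      linarith [hX3.2]
    · have : ((N + 1 : ℕ) : ℝ) * (√δ / 2) ≤ ∑ l ∈ range (N + 1), - tV i (j + l) := by
        have h1 : ((N + 1 : ℕ) : ℝ) * (√δ / 2) = ∑ l ∈ range (N + 1), √δ / 2 := by simp
        rw [h1]
        apply Finset.sum_le_sum
        intro l hl
        simp at hl
        have h2 := hc l (by omega)
        rw [← hsin l (by omega)] at h2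
        have h3 := abs_lt.1 (hlt l (by omega))
        have h4 : 0 ≤ - tV i (j + l) := by
          by_contra h5
          push Not at h5
          have := Real.sin_pos_of_pos_of_lt_pi (x := tV i (j + l)) (by linarith) (by linarith [Real.pi_pos])
          linarith
        have h6 := Real.sin_le h4
        rw [Real.sin_neg] at h6
        linarith
      rw [Finset.sum_neg_distrib, ht] at this
      push_cast at this
      linarith [hX3.1]
  -- counting
  classical
  set B := (range (k + 1)).filter (fun j => ¬ R j ≤ i * δ ^ 2) with hB
  have hBcard : (B.card : ℝ) ≤ k / 8 := by
    have h1 : (B.card : ℝ) * (i * δ ^ 2) ≤ k / 8 * (i * δ ^ 2) := by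
      refine le_trans ?_ hR
      have : (B.card : ℝ) * (i * δ ^ 2) = ∑ j ∈ B, (i * δ ^ 2) := by simp
      rw [this]
      refine le_trans (Finset.sum_le_sum (g := R) ?_) (Finset.sum_le_sum_of_subset_of_nonneg (Finset.filter_subset _ _) ?_)
      · intro j hj
        simp only [hB, mem_filter, not_le] at hj
        exact hj.2.le
      · intro j _ _
        exact Finset.sum_nonneg (fun _ _ => tri_nonneg _ _ _ _)
    exact le_of_mul_le_mul_right h1 (by positivity)
  set G := (range (k - N)).filter (fun j => R j ≤ i * δ ^ 2 ∧ R (j + (N + 1)) ≤ i * δ ^ 2) with hG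
  have hGcard : k - N ≤ G.card + (B.card + B.card) := by
    have hsub : range (k - N) ⊆ G ∪ (B ∪ B.image (fun j => j - (N + 1))) := by
      intro j hj
      have hj' := mem_range.1 hj
      simp only [mem_union]
      by_cases h1 : R j ≤ i * δ ^ 2
      · by_cases h2 : R (j + (N + 1)) ≤ i * δ ^ 2
        · left; simp only [hG, mem_filter]; exact ⟨hj, h1, h2⟩
        · right; right
          simp only [mem_image]
          exact ⟨j + (N + 1), by simp only [hB, mem_filter, mem_range]; exact ⟨by omega, h2⟩, by omega⟩
      · right; left
        simp only [hB, mem_filter, mem_range]; exact ⟨by omega, h1⟩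
    have h1 := Finset.card_le_card hsub
    rw [card_range] at h1
    have h2 := Finset.card_union_le G (B ∪ B.image (fun j => j - (N + 1)))
    have h3 := Finset.card_union_le B (B.image (fun j => j - (N + 1)))
    have h4 : (B.image (fun j => j - (N + 1))).card ≤ B.card := Finset.card_image_le
    omega
  have hGr : (k : ℝ) / 2 ≤ G.card := by
    have h1 : ((k : ℝ)) ≤ N + (G.card + (B.card + B.card)) := by
      exact_mod_cast (by omega : k ≤ N + (G.card + (B.card + B.card)))
    have h2 : (4 : ℝ) * N ≤ k := by exact_mod_cast (by omega : 4 * N ≤ k)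
    linarith
  have hlow : (k : ℝ) / 2 * μ ≤ N * A := by
    calc (k : ℝ) / 2 * μ ≤ G.card * μ := by gcongr
      _ = ∑ j ∈ G, μ := by simp
      _ ≤ ∑ j ∈ G, ∑ l ∈ range N, f (j + l) := by
          apply Finset.sum_le_sum
          intro j hj
          simp only [hG, mem_filter, mem_range] at hj
          exact hwin j hj.1 hj.2.1 hj.2.2
      _ ≤ ∑ j ∈ range (k - N), ∑ l ∈ range N, f (j + l) :=
          Finset.sum_le_sum_of_subset_of_nonneg (Finset.filter_subset _ _)
            (fun _ _ _ => Finset.sum_nonneg (fun _ _ => hf0 _))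
      _ = ∑ l ∈ range N, ∑ j ∈ range (k - N), f (j + l) := Finset.sum_comm
      _ ≤ ∑ l ∈ range N, A := by
          apply Finset.sum_le_sum
          intro l hl
          simp at hl
          have : ∑ j ∈ range (k - N), f (j + l) = ∑ j ∈ (range (k - N)).image (fun j => j + l), f j := by
            rw [Finset.sum_image]; intro a _ b _ h; simpa using h
          rw [this]
          apply Finset.sum_le_sum_of_subset_of_nonneg
          · intro x hx; simp at hx ⊢; omega
          · intros; exact hf0 _
      _ = N * A := by simp
  have hNpos : (0 : ℝ) < N := by exact_mod_cast (by omega : 0 < N)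
  have hmin : min (δ ^ 2) (δ * √δ / (21 * i)) * N = min (N * δ ^ 2) (δ * √δ) := by
    rw [min_mul_of_nonneg _ _ hNpos.le]
    congr 1
    · ring
    · rw [hN]; push_cast; field_simp
  have : (k : ℝ) / 64 * min (δ ^ 2) (δ * √δ / (21 * i)) * N ≤ A * N := by
    rw [mul_assoc, hmin]
    rw [hμ] at hlow
    linarith
  exact le_of_mul_le_mul_right this hNpos


lemma log_le_sum_inv (a b : ℕ) (ha : 1 ≤ a) (hab : a ≤ b) :
    Real.log (b / a) ≤ ∑ i ∈ Ico a b, (1 : ℝ) / i := by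
  have ha0 : (0 : ℝ) < a := by exact_mod_cast ha
  induction b, hab using Nat.le_induction with
  | base => simp [ha0.ne']
  | succ b hab ih =>
    have hb0 : (0 : ℝ) < b := by exact_mod_cast (by omega : 0 < b)
    rw [Finset.sum_Ico_succ_top hab]
    have h1 : ((b + 1 : ℕ) : ℝ) / a = (b / a) * ((b + 1) / b) := by
      push_cast; field_simp
    rw [h1, Real.log_mul (by positivity) (by positivity)]
    have h2 := Real.log_le_sub_one_of_pos (x := ((b : ℝ) + 1) / b) (by positivity)
    have h3 : ((b : ℝ) + 1) / b - 1 = 1 / b := by field_simp; ring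
    linarith

lemma log_bound {σ : ℝ} (h0 : 0 < σ) (h1 : σ < 1) :
    |Real.log σ| + 1 = Real.log (1 / σ) + 1 ∧ σ * (Real.log (1 / σ) + 1) ≤ 2 * √σ ∧
      0 < Real.log (1 / σ) := by
  have hneg := Real.log_neg h0 h1
  have hinv : Real.log (1 / σ) = - Real.log σ := by rw [one_div, Real.log_inv]
  have hs : 0 < √σ := Real.sqrt_pos.2 h0
  have hss : √σ * √σ = σ := Real.mul_self_sqrt h0.le
  refine ⟨by rw [abs_of_neg hneg, hinv], ?_, by rw [hinv]; linarith⟩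
  have h2 : Real.log (1 / σ) = 2 * Real.log (1 / √σ) := by
    rw [one_div, one_div, Real.log_inv, Real.log_inv, Real.log_sqrt h0.le]; ring
  have h3 := Real.log_le_sub_one_of_pos (x := 1 / √σ) (by positivity)
  rw [h2]
  have h4 : σ * (2 * Real.log (1 / √σ) + 1) ≤ σ * (2 * (1 / √σ)) := by
    apply mul_le_mul_of_nonneg_left _ h0.le; linarith
  have h5 : σ * (2 * (1 / √σ)) = 2 * √σ := by
    field_simp; nlinarith
  linarith

/-- `E` in natural-number indexing together with the column-zero bound. -/
lemma E_ge_col0 {ε δ : ℝ} {k : ℕ} (hk : Kof ε = (k : ℤ)) (h2 : 2 ≤ k)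
    (u : ℤ × ℤ → ℝ × ℝ) (hu : InS0 ε u) :
    ε ^ 2 / 2 * (((k : ℝ) - 1) * (4 * δ ^ 2)) ≤ E ε δ u := by
  unfold E
  rw [Ehor_eq hk h2, Ever_eq hk h2]
  have hH : 0 ≤ ε ^ 2 / 2 * ∑ j ∈ range (k + 1), ∑ i ∈ range (k - 1),
      tri δ (u (i, j)) (u (i + 1, j)) (u (i + 2, j)) :=
    mul_nonneg (by positivity) (Finset.sum_nonneg fun _ _ => Finset.sum_nonneg fun _ _ => tri_nonneg _ _ _ _)
  have hV : ((k : ℝ) - 1) * (4 * δ ^ 2) ≤ ∑ i ∈ range (k + 1), ∑ j ∈ range (k - 1),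
      tri δ (u (i, j)) (u (i, j + 1)) (u (i, j + 2)) := by
    have h0 := Finset.single_le_sum (f := fun i : ℕ => ∑ j ∈ range (k - 1),
      tri δ (u (i, j)) (u (i, j + 1)) (u (i, j + 2)))
      (fun i _ => Finset.sum_nonneg fun _ _ => tri_nonneg _ _ _ _)
      (mem_range.2 (by omega : 0 < k + 1))
    refine le_trans (le_of_eq ?_) h0
    have : ∀ j ∈ range (k - 1), tri δ (u (((0 : ℕ) : ℤ), (j : ℤ))) (u (((0 : ℕ) : ℤ), (j : ℤ) + 1))
        (u (((0 : ℕ) : ℤ), (j : ℤ) + 2)) = 4 * δ ^ 2 := by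
      intro j hj
      simp only [mem_range] at hj
      have hb := hu.2
      rw [hk] at hb
      simp only [Nat.cast_zero]
      rw [hb j (by simp; omega), hb (j + 1) (by simp; omega), hb (j + 2) (by simp; omega)]
      simp only [tri, sqnorm, Prod.mk_sub_mk, Prod.smul_mk, Prod.mk_add_mk, smul_eq_mul]
      ring
    rw [Finset.sum_congr rfl this]
    simp only [sum_const, card_range, nsmul_eq_mul]
    rw [Nat.cast_sub (by omega)]; simp
  have := mul_le_mul_of_nonneg_left hV (by positivity : 0 ≤ ε ^ 2 / 2)
  linarith

lemma lower_large {ε δ : ℝ} (hε : ε ∈ Set.Ioo (0 : ℝ) (1 / 2)) (hδ : δ ∈ Set.Ico (1 / 100 : ℝ) 1)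
    (u : ℤ × ℤ → ℝ × ℝ) (hu : InS0 ε u) : (1 / 20000) * (ε * √δ) ≤ E ε δ u := by
  obtain ⟨k, hk, h2, hk1, hk2⟩ := Kof_facts hε.1 hε.2
  have h := E_ge_col0 (δ := δ) hk h2 u hu
  have hs : √δ ≤ 1 := by
    rw [Real.sqrt_le_left (by norm_num)]; linarith [hδ.2]
  have h2r : (2 : ℝ) ≤ k := by exact_mod_cast h2
  have h3 : ε * ((k : ℝ) - 1) ≥ 1 / 4 := by nlinarith [hε.1, hε.2]
  have h4 : (1 / 10000 : ℝ) ≤ δ ^ 2 := by nlinarith [hδ.1]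
  have h5 : ε ^ 2 / 2 * (((k : ℝ) - 1) * (4 * δ ^ 2)) = 2 * ε * (ε * ((k : ℝ) - 1)) * δ ^ 2 := by ring
  have h6 : 2 * ε * (1 / 4) * (1 / 10000) ≤ 2 * ε * (ε * ((k : ℝ) - 1)) * δ ^ 2 := by
    have := hε.1
    gcongr
  have h7 : ε * √δ ≤ ε * 1 := by
    have := hε.1
    gcongr
  linarith

set_option maxHeartbeats 4000000 in
lemma lower_small {ε δ c σ0 : ℝ} (hσ0 : σ0 = 1 / 336 ^ 4) (hc : c = σ0 / 10 ^ 6)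
    (hδ : 0 < δ) (hδ1 : δ < 1 / 100) (hεδ : δ ≤ ε) (hε2 : ε < 1 / 2)
    (u : ℤ × ℤ → ℝ × ℝ) (hu : InS0 ε u) :
    c * min (δ ^ 2) (ε * (δ * √δ) * (|Real.log (ε / √δ)| + 1)) ≤ E ε δ u := by
  have hε0 : 0 < ε := by linarith
  have hsigpos : 0 < σ0 := by rw [hσ0]; positivity
  have hcp : 0 < c := by rw [hc]; positivity
  obtain ⟨k, hk, h2, hk1, hk2⟩ := Kof_facts hε0 hε2
  have hr : 0 < √δ := Real.sqrt_pos.2 hδ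
  have hrr : √δ * √δ = δ := Real.mul_self_sqrt hδ.le
  have h2r : (2 : ℝ) ≤ k := by exact_mod_cast h2
  have hkε : 1 / 2 ≤ k * ε := by nlinarith
  have hkinv : 1 ≤ 2 * k * ε := by linarith
  by_contra hcon
  push Not at hcon
  set e := E ε δ u with he
  set T := |Real.log (ε / √δ)| + 1 with hT
  have hcon1 : e < c * δ ^ 2 := lt_of_lt_of_le hcon (by gcongr; exact min_le_left _ _)
  have hcon2 : e < c * (ε * (δ * √δ) * T) := lt_of_lt_of_le hcon (by gcongr; exact min_le_right _ _)
  set v : ℕ → ℕ → ℝ × ℝ := fun i j => u (i, j) with hv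
  set SH := ∑ j ∈ range (k + 1), ∑ i' ∈ range (k - 1),
      tri δ (v i' j) (v (i' + 1) j) (v (i' + 2) j) with hSH
  set A : ℕ → ℝ := fun i => ∑ j ∈ range (k - 1), tri δ (v i j) (v i (j + 1)) (v i (j + 2)) with hA
  have hE : e = ε ^ 2 / 2 * SH + ε ^ 2 / 2 * ∑ i ∈ range (k + 1), A i := by
    rw [he]; unfold E; rw [Ehor_eq hk h2, Ever_eq hk h2]
    simp only [hSH, hA, hv]; push_cast; rfl
  have hA0 : ∀ i, 0 ≤ A i := fun i => Finset.sum_nonneg fun _ _ => tri_nonneg _ _ _ _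
  have hSH0 : 0 ≤ SH := Finset.sum_nonneg fun _ _ => Finset.sum_nonneg fun _ _ => tri_nonneg _ _ _ _
  have hSA0 : 0 ≤ ∑ i ∈ range (k + 1), A i := Finset.sum_nonneg fun i _ => hA0 i
  have hepspos : 0 < ε ^ 2 / 2 := by positivity
  have hEH : ε ^ 2 / 2 * SH ≤ e := by rw [hE]; nlinarith [mul_nonneg hepspos.le hSA0]
  have hEV : ε ^ 2 / 2 * ∑ i ∈ range (k + 1), A i ≤ e := by
    rw [hE]; nlinarith [mul_nonneg hepspos.le hSH0]
  have hsmall : ∀ x, ε ^ 2 / 2 * x ≤ e → x ≤ 1 / 400 := by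
    intro x hx
    have h1 : ε ^ 2 / 2 * x ≤ ε ^ 2 / 2 * (1 / 400) := by
      have h3 : δ ^ 2 ≤ ε ^ 2 := by gcongr
      have h4 : c ≤ 1 / 1000 := by rw [hc, hσ0]; norm_num
      have h5 : c * δ ^ 2 ≤ 1 / 1000 * ε ^ 2 := by gcongr
      nlinarith [sq_nonneg ε]
    exact le_of_mul_le_mul_left h1 hepspos
  have hSHs := hsmall _ hEH
  have hSVs := hsmall _ hEV
  have hunit : ∀ i ≤ k, ∀ j ≤ k, sqnorm (v i j) = 1 := by
    intro i hi j hj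
    apply hu.1
    simp [Idx, hk]; omega
  have h0 : ∀ j ≤ k, v 0 j = (0, 1) := by
    intro j hj
    have := hu.2 (j : ℤ) (by rw [hk]; simp; omega)
    simpa [hv] using this
  have hHs : ∀ i j, i + 2 ≤ k → j ≤ k → tri δ (v i j) (v (i + 1) j) (v (i + 2) j) ≤ 1 / 400 := by
    intro i j hi hj
    refine le_trans ?_ hSHs
    refine le_trans ?_ (Finset.single_le_sum (f := fun j => ∑ i' ∈ range (k - 1),
      tri δ (v i' j) (v (i' + 1) j) (v (i' + 2) j))
      (fun _ _ => Finset.sum_nonneg fun _ _ => tri_nonneg _ _ _ _) (mem_range.2 (by omega : j < k + 1)))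
    exact Finset.single_le_sum (f := fun i' => tri δ (v i' j) (v (i' + 1) j) (v (i' + 2) j))
      (fun _ _ => tri_nonneg _ _ _ _) (mem_range.2 (by omega : i < k - 1))
  have hVs : ∀ i j, i ≤ k → j + 2 ≤ k → tri δ (v i j) (v i (j + 1)) (v i (j + 2)) ≤ 1 / 400 := by
    intro i j hi hj
    refine le_trans ?_ hSVs
    refine le_trans ?_ (Finset.single_le_sum (f := A)
      (fun _ _ => hA0 _) (mem_range.2 (by omega : i < k + 1)))
    exact Finset.single_le_sum (f := fun j => tri δ (v i j) (v i (j + 1)) (v i (j + 2)))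
      (fun _ _ => tri_nonneg _ _ _ _) (mem_range.2 (by omega : j < k - 1))
  -- the core estimate
  have hcore : ∀ i, 2 ≤ i → 84 * i ≤ k → e ≤ 1 / 32 * (ε * (i * δ ^ 2)) →
      (k : ℝ) / 64 * min (δ ^ 2) (δ * √δ / (21 * i)) ≤ A i := by
    intro i hi hik hei
    apply core_column hδ hδ1.le k v hunit h0 hHs hVs i hi hik
    have h1 : ε ^ 2 / 2 * SH ≤ ε ^ 2 / 2 * (k / 8 * (i * δ ^ 2)) := by
      have h3 : 0 ≤ ε * (i * δ ^ 2) := by positivity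
      have h4 : ε * (i * δ ^ 2) ≤ 2 * k * ε * (ε * (i * δ ^ 2)) := le_mul_of_one_le_left h3 hkinv
      have h5 : 2 * k * ε * (ε * (i * δ ^ 2)) = 32 * (ε ^ 2 / 2 * (k / 8 * (i * δ ^ 2))) := by ring
      linarith
    exact le_of_mul_le_mul_left h1 hepspos
  have hsub : ∀ s : Finset ℕ, s ⊆ range (k + 1) → ε ^ 2 / 2 * ∑ i ∈ s, A i ≤ e := by
    intro s hs
    refine le_trans ?_ hEV
    exact mul_le_mul_of_nonneg_left
      (Finset.sum_le_sum_of_subset_of_nonneg hs (fun i _ _ => hA0 i)) hepspos.le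
  set σ := ε / √δ with hσ
  have hσp : 0 < σ := by positivity
  have hεσ : ε = σ * √δ := by rw [hσ]; field_simp
  by_cases hσc : σ < σ0
  · -- logarithmic regime
    have hσ1 : σ < 1 := hσc.trans (by rw [hσ0]; norm_num)
    obtain ⟨hT1, hT2, hT3⟩ := log_bound hσp hσ1
    have hs : 0 < √σ := Real.sqrt_pos.2 hσp
    have hss : √σ * √σ = σ := Real.mul_self_sqrt hσp.le
    have hs1 : √σ < 1 / 336 ^ 2 := by
      rw [Real.sqrt_lt' (by norm_num)]
      calc σ < σ0 := hσc
        _ = _ := by rw [hσ0]; norm_num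
    have hinvσ : 1 / √δ ≤ √σ / ε := by
      rw [div_le_div_iff₀ hr hε0, one_mul, hεσ]
      have h1 : σ ≤ √σ := by
        calc σ = √σ * √σ := hss.symm
          _ ≤ √σ * 1 := by
            apply mul_le_mul_of_nonneg_left _ hs.le
            refine hs1.le.trans ?_
            norm_num
          _ = √σ := mul_one _
      exact mul_le_mul_of_nonneg_right h1 hr.le
    have hbig : 2 ≤ √σ / ε := by
      rw [le_div_iff₀ hε0, hεσ]
      have h1 : √δ ≤ 1 := by
        rw [Real.sqrt_le_left (by norm_num)]; linarith
      have h2 : √σ ≤ 1 / 2 := by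
        refine hs1.le.trans ?_
        norm_num
      calc 2 * (σ * √δ) ≤ 2 * (σ * 1) := by gcongr
        _ = 2 * (√σ * √σ) := by rw [hss, mul_one]
        _ ≤ 2 * (√σ * (1 / 2)) := by gcongr
        _ = √σ := by ring
    set i0 := ⌈√σ / ε⌉₊ with hi0
    have hi0l : √σ / ε ≤ i0 := Nat.le_ceil _
    have hi0u : (i0 : ℝ) ≤ 2 * (√σ / ε) := by
      have := Nat.ceil_lt_add_one (by positivity : 0 ≤ √σ / ε)
      linarith
    have hi02 : 2 ≤ i0 := by
      have : (2 : ℝ) ≤ i0 := hbig.trans hi0l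
      exact_mod_cast this
    set i1 := k / 84 with hi1
    have hi1l : 1 / (168 * ε) ≤ ((i1 + 1 : ℕ) : ℝ) := by
      have h1 : (k : ℝ) ≤ 84 * ((i1 + 1 : ℕ) : ℝ) := by
        exact_mod_cast (by omega : k ≤ 84 * (i1 + 1))
      rw [div_le_iff₀ (by positivity)]
      nlinarith
    have hratio : 1 / (336 * √σ) ≤ ((i1 + 1 : ℕ) : ℝ) / i0 := by
      rw [le_div_iff₀ (by positivity)]
      calc 1 / (336 * √σ) * i0 ≤ 1 / (336 * √σ) * (2 * (√σ / ε)) := by gcongr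
        _ = 1 / (168 * ε) := by field_simp; norm_num
        _ ≤ _ := hi1l
    have hi01 : i0 ≤ i1 + 1 := by
      have h1 : (1 : ℝ) ≤ ((i1 + 1 : ℕ) : ℝ) / i0 := by
        refine le_trans ?_ hratio
        rw [le_div_iff₀ (by positivity)]
        nlinarith
      rw [le_div_iff₀ (by positivity)] at h1
      exact_mod_cast (by linarith : (i0 : ℝ) ≤ ((i1 + 1 : ℕ) : ℝ))
    have hlogr : T / 8 ≤ Real.log (((i1 + 1 : ℕ) : ℝ) / i0) := by
      have h1 : Real.log (1 / (336 * √σ)) ≤ Real.log (((i1 + 1 : ℕ) : ℝ) / i0) :=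
        Real.log_le_log (by positivity) hratio
      refine le_trans ?_ h1
      have h3 : Real.log (1 / (336 * √σ)) = 1 / 2 * Real.log (1 / σ) - Real.log 336 := by
        rw [one_div (336 * √σ), one_div σ, Real.log_inv, Real.log_inv,
          Real.log_mul (by norm_num) hs.ne', Real.log_sqrt hσp.le]; ring
      have h4 : 4 * Real.log 336 ≤ Real.log (1 / σ) := by
        have : 4 * Real.log 336 = Real.log (336 ^ 4) := by rw [Real.log_pow]; norm_num
        rw [this]
        apply Real.log_le_log (by norm_num)
        rw [le_div_iff₀ hσp]
        rw [hσ0] at hσc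
        rw [lt_div_iff₀ (by norm_num)] at hσc
        linarith
      have h5 : 1 ≤ Real.log 336 := by
        rw [Real.le_log_iff_exp_le (by norm_num)]
        linarith [Real.exp_one_lt_d9]
      rw [h3, hT, hT1]
      linarith
    have hlow : ∀ i ∈ Ico i0 (i1 + 1), (k : ℝ) / 64 * (δ * √δ / 21) * (1 / i) ≤ A i := by
      intro i hi
      simp only [mem_Ico] at hi
      have hir : (i0 : ℝ) ≤ i := by exact_mod_cast hi.1
      have hip : (0 : ℝ) < i := by exact_mod_cast (by omega : 0 < i)
      have h1 : √σ ≤ ε * i := by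
        have := hi0l.trans hir
        rw [div_le_iff₀ hε0] at this; linarith
      have h3 := hcore i (by omega) (by omega) (by
        refine hcon2.le.trans ?_
        have h4 : c * (ε * (δ * √δ) * T) = c * δ ^ 2 * (σ * T) := by
          rw [hεσ]
          have : δ ^ 2 = δ * (√δ * √δ) := by rw [hrr]; ring
          rw [this]; ring
        rw [h4, hT, hT1]
        calc c * δ ^ 2 * (σ * (Real.log (1 / σ) + 1)) ≤ c * δ ^ 2 * (2 * (ε * i)) := by
              apply mul_le_mul_of_nonneg_left _ (by positivity)
              linarith
          _ = 2 * c * (ε * (i * δ ^ 2)) := by ring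
          _ ≤ 1 / 32 * (ε * (i * δ ^ 2)) := by
              gcongr; rw [hc, hσ0]; norm_num)
      have h5 : min (δ ^ 2) (δ * √δ / (21 * i)) = δ * √δ / (21 * i) := by
        apply min_eq_right
        rw [div_le_iff₀ (by positivity)]
        have h6 : 1 / √δ ≤ i := hinvσ.trans (hi0l.trans hir)
        rw [div_le_iff₀ hr] at h6
        have : √δ ≤ 21 * i * δ := by
          calc √δ ≤ √δ * (i * √δ) := le_mul_of_one_le_right hr.le h6
            _ = i * δ := by rw [← hrr]; simp only [Real.sqrt_mul_self hr.le]; ring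
            _ ≤ 21 * i * δ := by nlinarith [mul_pos hip hδ]
        calc δ * √δ ≤ δ * (21 * i * δ) := by gcongr
          _ = _ := by ring
      rw [h5] at h3
      refine le_trans (le_of_eq ?_) h3
      field_simp
    have hsum : (k : ℝ) / 64 * (δ * √δ / 21) * (T / 8) ≤ ∑ i ∈ Ico i0 (i1 + 1), A i := by
      calc _ ≤ (k : ℝ) / 64 * (δ * √δ / 21) * ∑ i ∈ Ico i0 (i1 + 1), (1 : ℝ) / i := by
            gcongr
            exact hlogr.trans (log_le_sum_inv i0 (i1 + 1) (by omega) hi01)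
        _ = ∑ i ∈ Ico i0 (i1 + 1), (k : ℝ) / 64 * (δ * √δ / 21) * (1 / i) := by rw [Finset.mul_sum]
        _ ≤ _ := Finset.sum_le_sum hlow
    have hfin := hsub (Ico i0 (i1 + 1)) (by intro x hx; simp at hx ⊢; omega)
    have hTp : 0 < T := by rw [hT]; positivity
    have hX : 0 < ε * (δ * √δ) * T := by positivity
    have h7 := mul_le_mul_of_nonneg_left hsum hepspos.le
    have h8 : ε ^ 2 / 2 * ((k : ℝ) / 64 * (δ * √δ / 21) * (T / 8))
      = (k * ε) * (ε * (δ * √δ) * T) / 21504 := by ring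
    have h9 : 1 / 2 * (ε * (δ * √δ) * T) ≤ (k * ε) * (ε * (δ * √δ) * T) := by gcongr
    have h10 : c ≤ 1 / 100000 := by rw [hc, hσ0]; norm_num
    have h11 : c * (ε * (δ * √δ) * T) ≤ 1 / 100000 * (ε * (δ * √δ) * T) := by gcongr
    linarith
  · push Not at hσc
    have hδ2 : 0 < δ ^ 2 := by positivity
    by_cases hk0 : k ≤ 336
    · have h := E_ge_col0 (δ := δ) hk h2 u hu
      have hkr : (k : ℝ) ≤ 336 := by exact_mod_cast hk0
      have h3 : 1 / 337 ≤ ε := by nlinarith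
      have h4 : ε ^ 2 / 2 * (4 * δ ^ 2) ≤ ε ^ 2 / 2 * (((k : ℝ) - 1) * (4 * δ ^ 2)) := by
        apply mul_le_mul_of_nonneg_left _ hepspos.le
        exact le_mul_of_one_le_left (by positivity) (by linarith)
      have h5 : (1 / 337 : ℝ) ^ 2 ≤ ε ^ 2 := by gcongr
      have h6 : (1 / 337 : ℝ) ^ 2 / 2 * (4 * δ ^ 2) ≤ ε ^ 2 / 2 * (4 * δ ^ 2) := by gcongr
      have h7 : c ≤ (1 / 337 : ℝ) ^ 2 := by rw [hc, hσ0]; norm_num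
      have h8 : c * δ ^ 2 ≤ (1 / 337 : ℝ) ^ 2 * δ ^ 2 := by gcongr
      linarith
    · push Not at hk0
      set q := k / 168 with hq
      have hq2 : 2 ≤ q := by omega
      have hqk : (k : ℝ) ≤ 336 * q := by exact_mod_cast (by omega : k ≤ 336 * q)
      have hlow : ∀ i ∈ Ico (q + 1) (2 * q + 1), (k : ℝ) / 64 * (4 * σ0 * δ ^ 2) ≤ A i := by
        intro i hi
        simp only [mem_Ico] at hi
        have hip : (0 : ℝ) < i := by exact_mod_cast (by omega : 0 < i)
        have hik : (k : ℝ) ≤ 168 * i := by exact_mod_cast (by omega : k ≤ 168 * i)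
        have hik2 : (84 : ℝ) * i ≤ k := by exact_mod_cast (by omega : 84 * i ≤ k)
        have h3 := hcore i (by omega) (by omega) (by
          refine hcon1.le.trans ?_
          have h4 : 1 / 336 ≤ ε * i := by nlinarith
          have h5 : c ≤ 1 / 32 * (1 / 336) := by rw [hc, hσ0]; norm_num
          calc c * δ ^ 2 ≤ 1 / 32 * (1 / 336) * δ ^ 2 := by gcongr
            _ ≤ 1 / 32 * (ε * i) * δ ^ 2 := by gcongr
            _ = _ := by ring)
        refine le_trans ?_ h3
        gcongr
        apply le_min
        · have : 4 * σ0 ≤ 1 := by rw [hσ0]; norm_num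
          nlinarith
        · rw [le_div_iff₀ (by positivity)]
          have h4 : σ0 * √δ ≤ ε := by rw [hεσ]; gcongr
          have h5 : 84 * i * ε ≤ 1 := by nlinarith
          calc 4 * σ0 * δ ^ 2 * (21 * i) = 84 * i * (σ0 * √δ) * (δ * √δ) := by
                have : δ ^ 2 = δ * (√δ * √δ) := by rw [hrr]; ring
                rw [this]; ring
            _ ≤ 84 * i * ε * (δ * √δ) := by gcongr
            _ ≤ 1 * (δ * √δ) := by gcongr
            _ = _ := by ring
      have hsum : (q : ℝ) * ((k : ℝ) / 64 * (4 * σ0 * δ ^ 2)) ≤ ∑ i ∈ Ico (q + 1) (2 * q + 1), A i := by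
        refine le_trans (le_of_eq ?_) (Finset.sum_le_sum hlow)
        simp only [sum_const, Nat.card_Ico, nsmul_eq_mul]
        congr 2
        omega
      have hfin := hsub (Ico (q + 1) (2 * q + 1)) (by intro x hx; simp at hx ⊢; omega)
      have h7 := mul_le_mul_of_nonneg_left hsum hepspos.le
      have h8 : ε ^ 2 / 2 * ((k / 336 : ℝ) * ((k : ℝ) / 64 * (4 * σ0 * δ ^ 2))) ≤
          ε ^ 2 / 2 * ((q : ℝ) * ((k : ℝ) / 64 * (4 * σ0 * δ ^ 2))) := by
        gcongr; linarith
      have h9 : ε ^ 2 / 2 * ((k / 336 : ℝ) * ((k : ℝ) / 64 * (4 * σ0 * δ ^ 2)))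
        = (k * ε) ^ 2 * (σ0 * δ ^ 2) / 10752 := by ring
      have h10 : (1 / 2) ^ 2 * (σ0 * δ ^ 2) ≤ (k * ε) ^ 2 * (σ0 * δ ^ 2) := by gcongr
      have h11 : c * δ ^ 2 = σ0 * δ ^ 2 / 10 ^ 6 := by rw [hc]; ring
      have : 0 < σ0 * δ ^ 2 := by positivity
      linarith


lemma tri_ang (δ a b c : ℝ) :
    tri δ (sin a, cos a) (sin b, cos b) (sin c, cos c)
      = (cos (b - a) + cos (c - b) - 2 * (1 - δ)) ^ 2 + (sin (c - b) - sin (b - a)) ^ 2 := by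
  rw [tri_eq (by simp [sqnorm])]
  have h1 : dotp (sin a, cos a) (sin b, cos b) = cos (b - a) := by
    simp only [dotp]; rw [cos_sub]; ring
  have h2 : dotp (sin b, cos b) (sin c, cos c) = cos (c - b) := by
    simp only [dotp]; rw [cos_sub]; ring
  have h3 : crossp (sin b, cos b) (sin c, cos c) = - sin (c - b) := by
    simp only [crossp]; rw [sin_sub]; ring
  have h4 : crossp (sin a, cos a) (sin b, cos b) = - sin (b - a) := by
    simp only [crossp]; rw [sin_sub]; ring
  rw [h1, h2, h3, h4]; ring

lemma theta_facts {δ : ℝ} (h0 : 0 < δ) (h1 : δ < 1) :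
    cos (arccos (1 - δ)) = 1 - δ ∧ 0 < arccos (1 - δ) ∧ arccos (1 - δ) ≤ π ∧
    2 * δ ≤ arccos (1 - δ) ^ 2 ∧ arccos (1 - δ) ^ 2 ≤ 5 * δ := by
  have hc : cos (arccos (1 - δ)) = 1 - δ := cos_arccos (by linarith) (by linarith)
  have hp : 0 < arccos (1 - δ) := arccos_pos.2 (by linarith)
  have hpi := arccos_le_pi (1 - δ)
  refine ⟨hc, hp, hpi, ?_, ?_⟩
  · have := Real.one_sub_sq_div_two_le_cos (x := arccos (1 - δ))
    linarith
  · have h := Real.cos_le_one_sub_mul_cos_sq (x := arccos (1 - δ)) (by rw [abs_of_pos hp]; exact hpi)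
    rw [hc] at h
    have hpi2 : π ^ 2 ≤ 10 := by nlinarith [pi_lt_d2, pi_pos]
    have h2 : 2 / π ^ 2 ≥ 1 / 5 := by
      rw [ge_iff_le, div_le_div_iff₀ (by norm_num) (by positivity)]; linarith
    have h3 : 1 / 5 * arccos (1 - δ) ^ 2 ≤ 2 / π ^ 2 * arccos (1 - δ) ^ 2 := by gcongr
    linarith

lemma m_facts {δ : ℝ} (h0 : 0 < δ) (h1 : δ < 1) :
    ∃ m : ℕ, 1 ≤ m ∧ 1 ≤ m * √δ ∧ m * √δ ≤ 2 := by
  have hr : 0 < √δ := Real.sqrt_pos.2 h0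
  have hr1 : √δ ≤ 1 := by rw [Real.sqrt_le_left (by norm_num)]; linarith
  refine ⟨⌈1 / √δ⌉₊, Nat.one_le_ceil_iff.2 (by positivity), ?_, ?_⟩
  · have := Nat.le_ceil (1 / √δ)
    rwa [div_le_iff₀ hr] at this
  · have := Nat.ceil_lt_add_one (by positivity : 0 ≤ 1 / √δ)
    have h3 : (⌈1 / √δ⌉₊ : ℝ) * √δ ≤ (1 / √δ + 1) * √δ := by gcongr
    have h4 : (1 / √δ + 1) * √δ = 1 + √δ := by field_simp
    linarith

lemma const_bound {ε δ : ℝ} (h0 : 0 < ε) (h1 : ε < 1 / 2) :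
    InS0per ε (fun _ => (0, 1)) ∧ E ε δ (fun _ => (0, 1)) ≤ 4 * δ ^ 2 := by
  obtain ⟨k, hk, h2, hk1, hk2⟩ := Kof_facts h0 h1
  constructor
  · refine ⟨⟨fun p _ => by simp [sqnorm], fun j _ => rfl⟩, fun k _ => ⟨rfl, rfl⟩⟩
  · unfold E
    rw [Ehor_eq hk h2, Ever_eq hk h2]
    have : tri δ (0, 1) (0, 1) (0, 1) = 4 * δ ^ 2 := by
      simp only [tri, sqnorm, Prod.mk_sub_mk, Prod.smul_mk, Prod.mk_add_mk, smul_eq_mul]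
      ring
    simp only [this, sum_const, card_range, nsmul_eq_mul]
    rw [Nat.cast_sub (by omega)]
    push_cast
    have h3 : (k * ε) ^ 2 ≤ 1 := by
      have : 0 ≤ k * ε := by positivity
      nlinarith
    have h4 : 0 ≤ ε ^ 2 * δ ^ 2 := by positivity
    have h5 : (k * ε) ^ 2 * δ ^ 2 ≤ 1 * δ ^ 2 := by gcongr
    nlinarith

lemma caseA {ε δ : ℝ} (h0 : 0 < ε) (h1 : ε < 1 / 2) (hδ : 0 < δ) (hδ1 : δ < 1)
    (hσ : 1 / 100 ≤ ε / √δ) : 4 * δ ^ 2 ≤ 400 * sfun ε δ := by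
  have hr : 0 < √δ := Real.sqrt_pos.2 hδ
  have hrr : √δ * √δ = δ := Real.mul_self_sqrt hδ.le
  rw [le_div_iff₀ hr] at hσ
  have h3 : δ ^ 2 ≤ δ := by nlinarith
  have hA : 1 / 100 * δ ≤ ε * √δ := by
    calc 1 / 100 * δ = (1 / 100 * √δ) * √δ := by rw [← hrr]; simp only [Real.sqrt_mul_self hr.le]; ring
      _ ≤ ε * √δ := by gcongr
  have : 1 / 100 * δ ^ 2 ≤ sfun ε δ := by
    unfold sfun
    apply le_min
    · nlinarith [sq_nonneg δ]
    · apply le_min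
      · have h4 : 1 / 100 * δ ^ 2 ≤ ε * (δ * √δ) := by nlinarith
        refine h4.trans (le_mul_of_one_le_right (by positivity) ?_)
        linarith [abs_nonneg (Real.log (ε / √δ))]
      · linarith
  linarith


/-- dyadic scale of `x`. -/
def hh (x : ℤ) : ℤ := 2 ^ (Nat.log 2 x.toNat)

/-- distance of `y` to `pℤ`. -/
def Rr (p y : ℤ) : ℤ := min (y % p) (p - y % p)

/-- the integer valued branching profile. -/
def Ph0 (x y : ℤ) : ℤ := if x ≤ 0 then 0 else |x - Rr (4 * hh x) y|

/-- the folded branching profile. -/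
def Ph (K m i j : ℤ) : ℤ := Ph0 (min i (K - i) - m) (min j (K - j))

lemma hh_pos (x : ℤ) : 1 ≤ hh x := by
  unfold hh
  exact one_le_pow₀ (by norm_num)

lemma hh_eq {x : ℤ} {n : ℕ} (h1 : (2 : ℤ) ^ n ≤ x) (h2 : x < 2 * 2 ^ n) : hh x = 2 ^ n := by
  unfold hh
  congr 1
  have hx : ((x.toNat : ℕ) : ℤ) = x := Int.toNat_of_nonneg (le_trans (by positivity) h1)
  apply Nat.log_eq_of_pow_le_of_lt_pow
  · have : ((2 ^ n : ℕ) : ℤ) ≤ (x.toNat : ℤ) := by rw [hx]; push_cast; exact h1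
    exact_mod_cast this
  · have : (x.toNat : ℤ) < ((2 ^ (n + 1) : ℕ) : ℤ) := by rw [hx]; push_cast; rw [pow_succ]; linarith
    exact_mod_cast this

lemma hh_spec {x : ℤ} (h : 1 ≤ x) : hh x ≤ x ∧ x < 2 * hh x := by
  unfold hh
  have hx : ((x.toNat : ℕ) : ℤ) = x := Int.toNat_of_nonneg (by omega)
  constructor
  · have := Nat.pow_log_le_self 2 (x := x.toNat) (by omega)
    have h2 : ((2 ^ Nat.log 2 x.toNat : ℕ) : ℤ) ≤ (x.toNat : ℤ) := by exact_mod_cast this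
    rw [hx] at h2; push_cast at h2; exact h2
  · have := Nat.lt_pow_succ_log_self (b := 2) (by norm_num) x.toNat
    have h2 : (x.toNat : ℤ) < ((2 ^ (Nat.log 2 x.toNat + 1) : ℕ) : ℤ) := by exact_mod_cast this
    rw [hx] at h2; push_cast at h2; rw [pow_succ] at h2; linarith

lemma hh_succ {x : ℤ} (h : 1 ≤ x) : hh (x + 1) = hh x ∨ (x + 1 = 2 * hh x ∧ hh (x + 1) = 2 * hh x) := by
  obtain ⟨h1, h2⟩ := hh_spec h
  by_cases h3 : x + 1 < 2 * hh x
  · left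
    exact hh_eq (n := Nat.log 2 x.toNat) (by have : hh x ≤ x + 1 := by omega
                                             exact this) h3
  · right
    have h4 : x + 1 = 2 * hh x := by omega
    refine ⟨h4, ?_⟩
    have h6 : (2 : ℤ) ^ (Nat.log 2 x.toNat + 1) = 2 * hh x := by rw [pow_succ]; unfold hh; ring
    have h7 := hh_pos x
    have h5 := hh_eq (x := x + 1) (n := Nat.log 2 x.toNat + 1) (by rw [h6]; omega) (by rw [h6]; omega)
    rw [h5, h6]

lemma Rr_bd {p : ℤ} (hp : 0 < p) (y : ℤ) : 0 ≤ Rr p y ∧ 2 * Rr p y ≤ p := by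
  have h1 := Int.emod_nonneg y hp.ne'
  have h2 := Int.emod_lt_of_pos y hp
  unfold Rr
  omega

lemma emod_add_small {p : ℤ} (y b : ℤ) (h1 : 0 ≤ y % p + b) (h2 : y % p + b < p) :
    (y + b) % p = y % p + b := by
  rw [← Int.emod_add_emod]
  exact Int.emod_eq_of_lt h1 h2

lemma Rr_lip {p : ℤ} (hp : 0 < p) (y : ℤ) : |Rr p (y + 1) - Rr p y| ≤ 1 := by
  have h1 := Int.emod_nonneg y hp.ne'
  have h2 := Int.emod_lt_of_pos y hp
  by_cases h : y % p + 1 < p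
  · have := emod_add_small y 1 (by omega) h
    unfold Rr
    rw [this, abs_le]; omega
  · have h3 : (y + 1) % p = 0 := by
      rw [← Int.emod_add_emod]
      have : y % p + 1 = p := by omega
      rw [this]; exact Int.emod_self
    unfold Rr
    rw [h3, abs_le]; omega

lemma emod_double {p : ℤ} (hp : 0 < p) (y : ℤ) :
    y % (2 * p) = y % p ∨ y % (2 * p) = y % p + p := by
  have h1 := Int.emod_nonneg y (by omega : 2 * p ≠ 0)
  have h2 := Int.emod_lt_of_pos y (by omega : 0 < 2 * p)
  have h3 : (y % (2 * p)) % p = y % p := Int.emod_emod_of_dvd y ⟨2, by ring⟩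
  by_cases h : y % (2 * p) < p
  · left
    rw [← h3]; exact (Int.emod_eq_of_lt h1 h).symm
  · right
    have h4 : (y % (2 * p) - p) % p = y % p := by rw [← h3]; simp
    rw [Int.emod_eq_of_lt (by omega) (by omega)] at h4
    omega

lemma Rr_dbl {h : ℤ} (hp : 0 < h) (y : ℤ) : |2 * h - Rr (4 * (2 * h)) y| = 2 * h - Rr (4 * h) y := by
  have h1 := Int.emod_nonneg y (by omega : 4 * h ≠ 0)
  have h2 := Int.emod_lt_of_pos y (by omega : 0 < 4 * h)
  have h3 := emod_double (p := 4 * h) (by omega) y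
  rw [show 2 * (4 * h) = 4 * (2 * h) by ring] at h3
  unfold Rr
  rcases h3 with h3 | h3
  · rw [h3]
    rcases abs_cases (2 * h - min (y % (4 * h)) (4 * (2 * h) - y % (4 * h))) with h4 | h4 <;> omega
  · rw [h3]
    rcases abs_cases (2 * h - min (y % (4 * h) + 4 * h) (4 * (2 * h) - (y % (4 * h) + 4 * h))) with h4 | h4 <;> omega

lemma Ph0_lip_x (x y : ℤ) : |Ph0 (x + 1) y - Ph0 x y| ≤ 1 := by
  unfold Ph0
  by_cases hx : x ≤ 0
  · rw [if_pos hx]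
    by_cases hx1 : x + 1 ≤ 0
    · rw [if_pos hx1]; simp
    · rw [if_neg hx1]
      have : x = 0 := by omega
      subst this
      have h1 : hh (0 + 1) = 1 := by simp [hh]
      rw [h1]
      have := Rr_bd (p := 4 * 1) (by norm_num) y
      rw [sub_zero, abs_abs, abs_le]; omega
  · rw [if_neg hx, if_neg (by omega)]
    have h1 := hh_spec (x := x) (by omega)
    have h0 := hh_pos x
    rcases hh_succ (x := x) (by omega) with h | ⟨h, h'⟩
    · rw [h]
      refine (abs_abs_sub_abs_le _ _).trans ?_
      rw [abs_le]; omega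
    · rw [h', h, Rr_dbl (by omega)]
      have := Rr_bd (p := 4 * hh x) (by omega) y
      rw [abs_le]
      rcases abs_cases (x - Rr (4 * hh x) y) with h4 | h4 <;> omega

lemma Ph0_lip_y (x y : ℤ) : |Ph0 x (y + 1) - Ph0 x y| ≤ 1 := by
  unfold Ph0
  by_cases hx : x ≤ 0
  · simp [hx]
  · rw [if_neg hx, if_neg hx]
    refine (abs_abs_sub_abs_le _ _).trans ?_
    have := Rr_lip (p := 4 * hh x) (by have := hh_pos x; omega) y
    rw [abs_le] at this ⊢; omega

lemma lip_near {f : ℤ → ℤ} (hf : ∀ x, |f (x + 1) - f x| ≤ 1) {x y : ℤ} (h : |x - y| ≤ 1) :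
    |f x - f y| ≤ 1 := by
  rw [abs_le] at h
  rcases (by omega : x = y + 1 ∨ x = y ∨ y = x + 1) with h1 | h1 | h1
  · rw [h1]; exact hf y
  · rw [h1]; simp
  · rw [h1, abs_sub_comm]; exact hf x

lemma Ph_lip_x (K m i j : ℤ) : |Ph K m (i + 1) j - Ph K m i j| ≤ 1 := by
  unfold Ph
  apply lip_near (f := fun x => Ph0 x (min j (K - j))) (fun x => Ph0_lip_x x _)
  rw [abs_le]; omega

lemma Ph_lip_y (K m i j : ℤ) : |Ph K m i (j + 1) - Ph K m i j| ≤ 1 := by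
  unfold Ph
  apply lip_near (f := fun y => Ph0 (min i (K - i) - m) y) (fun x => Ph0_lip_y _ x)
  rw [abs_le]; omega

lemma Ph_refl_x (K m i j : ℤ) : Ph K m (K - i) j = Ph K m i j := by
  unfold Ph
  congr 2
  rw [sub_sub_cancel, min_comm]

lemma Ph_refl_y (K m i j : ℤ) : Ph K m i (K - j) = Ph K m i j := by
  unfold Ph
  congr 1
  rw [sub_sub_cancel, min_comm]

lemma Ph_zero (K m i j : ℤ) (h : i ≤ m) : Ph K m i j = 0 := by
  unfold Ph Ph0
  rw [if_pos]; omega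

/-- Sites (in folded coordinates) around which the profile is affine. -/
def Gd (W x y : ℤ) : Prop :=
  hh x + W ≤ x ∧ x + W < 2 * hh x ∧
    ((W ≤ y % (4 * hh x) ∧ y % (4 * hh x) ≤ 2 * hh x - W) ∨
      (2 * hh x + W ≤ y % (4 * hh x) ∧ y % (4 * hh x) < 4 * hh x - W)) ∧
    2 * W ≤ |x - Rr (4 * hh x) y|

/-- `f` is affine with slopes `±1` in a window. -/
def Aff (W : ℤ) (f : ℤ → ℤ → ℤ) (i j : ℤ) : Prop :=
  ∃ A s t : ℤ, (s = 1 ∨ s = -1) ∧ (t = 1 ∨ t = -1) ∧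
    ∀ a b, |a| ≤ W → |b| ≤ W → f (i + a) (j + b) = A + s * a + t * b

lemma Ph0_aff {W x y : ℤ} (hW : 0 ≤ W) (hx : 1 ≤ x) (h : Gd W x y) : Aff W Ph0 x y := by
  obtain ⟨h1, h2, h3, h4⟩ := h
  have hp := hh_pos x
  have hhc : ∀ a, |a| ≤ W → hh (x + a) = hh x := by
    intro a ha
    rw [abs_le] at ha
    exact hh_eq (n := Nat.log 2 x.toNat) (by change hh x ≤ _; omega) (by change _ < 2 * hh x; omega)
  set h := hh x with hh
  have hR : ∃ t : ℤ, (t = 1 ∨ t = -1) ∧ ∀ b, |b| ≤ W → Rr (4 * h) (y + b) = Rr (4 * h) y + t * b := by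
    rcases h3 with h3 | h3
    · refine ⟨1, Or.inl rfl, fun b hb => ?_⟩
      rw [abs_le] at hb
      unfold Rr
      rw [emod_add_small y b (by omega) (by omega)]
      omega
    · refine ⟨-1, Or.inr rfl, fun b hb => ?_⟩
      rw [abs_le] at hb
      unfold Rr
      rw [emod_add_small y b (by omega) (by omega)]
      omega
  obtain ⟨t, ht, hR⟩ := hR
  have key : ∀ a b, |a| ≤ W → |b| ≤ W → Ph0 (x + a) (y + b) = |x + a - (Rr (4 * h) y + t * b)| := by
    intro a b ha hb
    unfold Ph0
    rw [hhc a ha, hR b hb, if_neg]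
    rw [abs_le] at ha; omega
  have htb : ∀ b, |b| ≤ W → -W ≤ t * b ∧ t * b ≤ W := by
    intro b hb
    rw [abs_le] at hb
    rcases ht with rfl | rfl <;> omega
  rcases abs_cases (x - Rr (4 * h) y) with h5 | h5
  · refine ⟨x - Rr (4 * h) y, 1, -t, Or.inl rfl, by omega, fun a b ha hb => ?_⟩
    rw [key a b ha hb]
    have := htb b hb
    rw [abs_le] at ha
    rw [abs_of_nonneg (by omega)]; ring
  · refine ⟨-(x - Rr (4 * h) y), -1, t, Or.inr rfl, by omega, fun a b ha hb => ?_⟩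
    rw [key a b ha hb]
    have := htb b hb
    rw [abs_le] at ha
    rw [abs_of_nonpos (by omega)]; ring

lemma fold_aff {W K i : ℤ} (hi : 2 * W < |2 * i - K|) :
    ∃ s : ℤ, (s = 1 ∨ s = -1) ∧ ∀ a, |a| ≤ W → min (i + a) (K - (i + a)) = min i (K - i) + s * a := by
  rcases abs_cases (2 * i - K) with h | h
  · refine ⟨-1, Or.inr rfl, fun a ha => ?_⟩
    rw [abs_le] at ha; omega
  · refine ⟨1, Or.inl rfl, fun a ha => ?_⟩
    rw [abs_le] at ha; omega

lemma Ph_aff {W K m i j : ℤ} (hW : 0 ≤ W) (hx : 1 ≤ min i (K - i) - m)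
    (hi : 2 * W < |2 * i - K|) (hj : 2 * W < |2 * j - K|)
    (h : Gd W (min i (K - i) - m) (min j (K - j))) : Aff W (Ph K m) i j := by
  obtain ⟨A, s, t, hs, ht, hA⟩ := Ph0_aff hW hx h
  obtain ⟨s', hs', hs2⟩ := fold_aff hi
  obtain ⟨t', ht', ht2⟩ := fold_aff hj
  refine ⟨A, s * s', t * t', ?_, ?_, fun a b ha hb => ?_⟩
  · rcases hs with rfl | rfl <;> rcases hs' with rfl | rfl <;> simp
  · rcases ht with rfl | rfl <;> rcases ht' with rfl | rfl <;> simp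
  · unfold Ph
    rw [hs2 a ha, ht2 b hb]
    have h1 : |s' * a| ≤ W := by rw [abs_mul]; rcases hs' with rfl | rfl <;> simpa using ha
    have h2 : |t' * b| ≤ W := by rw [abs_mul]; rcases ht' with rfl | rfl <;> simpa using hb
    have := hA (s' * a) (t' * b) h1 h2
    rw [show min i (K - i) + s' * a - m = min i (K - i) - m + s' * a by ring, this]; ring


/-- mollification over a `(2m+1) × (2m+1)` window. -/
noncomputable def mol (m : ℕ) (f : ℤ → ℤ → ℤ) (i j : ℤ) : ℝ :=
  (∑ a ∈ range (2 * m + 1), ∑ b ∈ range (2 * m + 1), (f (i - m + a) (j - m + b) : ℝ)) /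
    (2 * (m : ℝ) + 1) ^ 2

lemma mol_swap (m : ℕ) (f : ℤ → ℤ → ℤ) (i j : ℤ) :
    mol m f i j = mol m (fun a b => f b a) j i := by
  unfold mol
  rw [Finset.sum_comm]

lemma sum_shift (g : ℤ → ℝ) (z : ℤ) (n : ℕ) :
    ∑ a ∈ range n, (g (z + 1 + a) - g (z + a)) = g (z + n) - g z := by
  have := Finset.sum_range_sub (fun a : ℕ => g (z + a)) n
  simp only [Nat.cast_zero, add_zero] at this
  rw [← this]
  apply Finset.sum_congr rfl
  intro a _
  push_cast
  rw [show z + 1 + (a : ℤ) = z + (a + 1) by ring]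

lemma mol_sub (m : ℕ) (f : ℤ → ℤ → ℤ) (i j : ℤ) :
    mol m f (i + 1) j - mol m f i j =
      (∑ a ∈ range (2 * m + 1), ∑ b ∈ range (2 * m + 1),
        ((f (i - m + a + 1) (j - m + b) : ℝ) - f (i - m + a) (j - m + b))) / (2 * (m : ℝ) + 1) ^ 2 := by
  unfold mol
  rw [← sub_div, ← Finset.sum_sub_distrib]
  congr 1
  apply Finset.sum_congr rfl
  intro a _
  rw [← Finset.sum_sub_distrib]
  apply Finset.sum_congr rfl
  intro b _
  rw [show i + 1 - (m : ℤ) + a = i - m + a + 1 by ring]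

lemma mol_sub' (m : ℕ) (f : ℤ → ℤ → ℤ) (i j : ℤ) :
    mol m f (i + 1) j - mol m f i j =
      (∑ b ∈ range (2 * m + 1),
        ((f (i + m + 1) (j - m + b) : ℝ) - f (i - m) (j - m + b))) / (2 * (m : ℝ) + 1) ^ 2 := by
  rw [mol_sub, Finset.sum_comm]
  congr 1
  apply Finset.sum_congr rfl
  intro b _
  have := sum_shift (fun z => (f z (j - m + b) : ℝ)) (i - m) (2 * m + 1)
  rw [show i - (m : ℤ) + ((2 * m + 1 : ℕ) : ℤ) = i + m + 1 by push_cast; ring] at this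
  rw [← this]
  apply Finset.sum_congr rfl
  intro a _
  rw [show i - (m : ℤ) + a + 1 = i - m + 1 + a by ring]

lemma mol_dx (m : ℕ) {f : ℤ → ℤ → ℤ} (hf : ∀ i j, |f (i + 1) j - f i j| ≤ 1) (i j : ℤ) :
    |mol m f (i + 1) j - mol m f i j| ≤ 1 := by
  rw [mol_sub, abs_div, abs_of_pos (by positivity : (0 : ℝ) < (2 * (m : ℝ) + 1) ^ 2),
    div_le_one (by positivity)]
  refine (Finset.abs_sum_le_sum_abs _ _).trans ?_
  have : ∀ a ∈ range (2 * m + 1), |∑ b ∈ range (2 * m + 1),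
        ((f (i - m + a + 1) (j - m + b) : ℝ) - f (i - m + a) (j - m + b))| ≤ 2 * (m : ℝ) + 1 := by
    intro a _
    refine (Finset.abs_sum_le_sum_abs _ _).trans ?_
    have : ∀ b ∈ range (2 * m + 1),
      |(f (i - m + a + 1) (j - m + b) : ℝ) - f (i - m + a) (j - m + b)| ≤ 1 := by
      intro b _
      exact_mod_cast hf (i - m + a) (j - m + b)
    refine (Finset.sum_le_sum this).trans ?_
    simp
  refine (Finset.sum_le_sum this).trans ?_
  simp only [sum_const, card_range, nsmul_eq_mul]
  push_cast
  nlinarith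

lemma mol_ddx (m : ℕ) {f : ℤ → ℤ → ℤ} (hf : ∀ i j, |f (i + 1) j - f i j| ≤ 1) (i j : ℤ) :
    |(mol m f (i + 2) j - mol m f (i + 1) j) - (mol m f (i + 1) j - mol m f i j)|
      ≤ 2 / (2 * (m : ℝ) + 1) := by
  have e : i + 2 = i + 1 + 1 := by ring
  rw [e, mol_sub', mol_sub', ← sub_div, ← Finset.sum_sub_distrib, abs_div,
    abs_of_pos (by positivity : (0 : ℝ) < (2 * (m : ℝ) + 1) ^ 2),
    div_le_div_iff₀ (by positivity) (by positivity)]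
  have : |∑ b ∈ range (2 * m + 1),
      (((f (i + 1 + m + 1) (j - m + b) : ℝ) - f (i + 1 - m) (j - m + b)) -
        ((f (i + m + 1) (j - m + b) : ℝ) - f (i - m) (j - m + b)))| ≤ 2 * (2 * (m : ℝ) + 1) := by
    refine (Finset.abs_sum_le_sum_abs _ _).trans ?_
    have : ∀ b ∈ range (2 * m + 1),
      |(((f (i + 1 + m + 1) (j - m + b) : ℝ) - f (i + 1 - m) (j - m + b)) -
        ((f (i + m + 1) (j - m + b) : ℝ) - f (i - m) (j - m + b)))| ≤ 2 := by
      intro b _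
      have h1 : |(f (i + 1 + m + 1) (j - m + b) : ℝ) - f (i + m + 1) (j - m + b)| ≤ 1 := by
        have := hf (i + m + 1) (j - m + b)
        rw [show i + (m : ℤ) + 1 + 1 = i + 1 + m + 1 by ring] at this
        exact_mod_cast this
      have h2 : |(f (i + 1 - m) (j - m + b) : ℝ) - f (i - m) (j - m + b)| ≤ 1 := by
        have := hf (i - m) (j - m + b)
        rw [show i - (m : ℤ) + 1 = i + 1 - m by ring] at this
        exact_mod_cast this
      rw [abs_le] at h1 h2 ⊢
      constructor <;> linarith
    refine (Finset.sum_le_sum this).trans ?_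
    simp only [sum_const, card_range, nsmul_eq_mul]
    push_cast
    linarith
  calc _ ≤ 2 * (2 * (m : ℝ) + 1) * (2 * (m : ℝ) + 1) := by gcongr
    _ = _ := by ring

lemma mol_aff {m : ℕ} (hm : 1 ≤ m) {f : ℤ → ℤ → ℤ} {i j : ℤ} (h : Aff (2 * m) f i j) :
    ∃ s : ℝ, (s = 1 ∨ s = -1) ∧ mol m f (i + 1) j - mol m f i j = s ∧
      mol m f i j - mol m f (i - 1) j = s := by
  obtain ⟨A, s, t, hs, ht, hA⟩ := h
  have key : ∀ a ∈ range (2 * m + 1), ∀ b ∈ range (2 * m + 1), ∀ z : ℤ, -1 ≤ z → z ≤ 1 →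
      (f (i + z - m + a) (j - m + b) : ℝ) = A + s * (z - m + a) + t * (-m + b) := by
    intro a ha b hb z hz hz'
    simp only [mem_range] at ha hb
    have := hA (z - m + a) (-m + b) (by rw [abs_le]; omega) (by rw [abs_le]; omega)
    rw [show i + z - (m : ℤ) + a = i + (z - m + a) by ring,
      show j - (m : ℤ) + b = j + (-m + b) by ring, this]
    push_cast; ring
  have key2 : ∀ z : ℤ, z = 0 ∨ z = -1 → mol m f (i + z + 1) j - mol m f (i + z) j = s := by
    intro z hz
    rw [mol_sub, div_eq_iff (by positivity)]
    have : ∀ a ∈ range (2 * m + 1), ∑ b ∈ range (2 * m + 1),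
        ((f (i + z - m + a + 1) (j - m + b) : ℝ) - f (i + z - m + a) (j - m + b))
          = (2 * m + 1) * s := by
      intro a ha
      have : ∀ b ∈ range (2 * m + 1),
        ((f (i + z - m + a + 1) (j - m + b) : ℝ) - f (i + z - m + a) (j - m + b)) = s := by
        intro b hb
        rw [key a ha b hb z (by omega) (by omega)]
        rw [show i + z - (m : ℤ) + a + 1 = i + (z + 1) - m + a by ring]
        rw [key a ha b hb (z + 1) (by omega) (by omega)]
        push_cast; ring
      rw [Finset.sum_congr rfl this]
      simp
    rw [Finset.sum_congr rfl this]
    simp only [sum_const, card_range, nsmul_eq_mul]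
    push_cast; ring
  refine ⟨s, ?_, ?_, ?_⟩
  · rcases hs with rfl | rfl <;> simp
  · have := key2 0 (Or.inl rfl)
    simpa using this
  · have := key2 (-1) (Or.inr rfl)
    simpa [sub_eq_add_neg] using this

lemma Aff_swap {W : ℤ} {f : ℤ → ℤ → ℤ} {i j : ℤ} (h : Aff W f i j) :
    Aff W (fun a b => f b a) j i := by
  obtain ⟨A, s, t, hs, ht, hA⟩ := h
  refine ⟨A, t, s, ht, hs, fun a b ha hb => ?_⟩
  show f (i + b) (j + a) = _
  rw [hA b a hb ha]; ring

lemma mol_refl_x (m : ℕ) {f : ℤ → ℤ → ℤ} {K : ℤ} (hf : ∀ i j, f (K - i) j = f i j) (i j : ℤ) :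
    mol m f (K - i) j = mol m f i j := by
  unfold mol
  congr 1
  rw [← Finset.sum_range_reflect]
  apply Finset.sum_congr rfl
  intro a ha
  apply Finset.sum_congr rfl
  intro b _
  simp only [mem_range] at ha
  rw [← hf]
  congr 2
  rw [Nat.cast_sub (by omega), Nat.cast_sub (by omega)]; push_cast; ring

lemma mol_zero (m : ℕ) {f : ℤ → ℤ → ℤ} (hf : ∀ i j, i ≤ (m : ℤ) → f i j = 0) (j : ℤ) :
    mol m f 0 j = 0 := by
  unfold mol
  rw [Finset.sum_eq_zero, zero_div]
  intro a ha
  apply Finset.sum_eq_zero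
  intro b _
  simp only [mem_range] at ha
  rw [hf _ _ (by omega)]; simp

lemma site_small {δ θ d1 d2 : ℝ} (h0 : 0 < δ) (hθ : θ ^ 2 ≤ 5 * δ) (h1 : |d1| ≤ 1) (h2 : |d2| ≤ 1)
    (h3 : (d2 - d1) ^ 2 ≤ δ) :
    (cos (θ * d1) + cos (θ * d2) - 2 * (1 - δ)) ^ 2 + (sin (θ * d2) - sin (θ * d1)) ^ 2
      ≤ 14 * δ ^ 2 := by
  have hc : ∀ d : ℝ, |d| ≤ 1 → 1 - 5 / 2 * δ ≤ cos (θ * d) := by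
    intro d hd
    have := Real.one_sub_sq_div_two_le_cos (x := θ * d)
    have h4 : d ^ 2 ≤ 1 := by rw [← sq_abs]; nlinarith [abs_nonneg d]
    have : θ ^ 2 * d ^ 2 ≤ θ ^ 2 * 1 := by gcongr
    nlinarith
  have hc1 := hc d1 h1
  have hc2 := hc d2 h2
  have hl1 := cos_le_one (θ * d1)
  have hl2 := cos_le_one (θ * d2)
  have e1 : (cos (θ * d1) + cos (θ * d2) - 2 * (1 - δ)) ^ 2 ≤ 9 * δ ^ 2 := by
    have : |cos (θ * d1) + cos (θ * d2) - 2 * (1 - δ)| ≤ 3 * δ := by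
      rw [abs_le]; constructor <;> linarith
    rw [← sq_abs]
    calc _ ≤ (3 * δ) ^ 2 := by gcongr
      _ = _ := by ring
  have e2 : (sin (θ * d2) - sin (θ * d1)) ^ 2 ≤ 5 * δ ^ 2 := by
    have : |sin (θ * d2) - sin (θ * d1)| ≤ |θ * d2 - θ * d1| := by
      have h5 := Real.sin_sub_sin (θ * d2) (θ * d1)
      rw [h5, abs_mul, abs_mul]
      have h6 : |sin ((θ * d2 - θ * d1) / 2)| ≤ |(θ * d2 - θ * d1) / 2| := Real.abs_sin_le_abs
      have h7 := Real.abs_cos_le_one ((θ * d2 + θ * d1) / 2)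
      calc |2| * |sin ((θ * d2 - θ * d1) / 2)| * |cos ((θ * d2 + θ * d1) / 2)|
          ≤ |2| * |(θ * d2 - θ * d1) / 2| * 1 := by gcongr
        _ = _ := by rw [mul_one, ← abs_mul]; congr 1; ring
    calc _ = |sin (θ * d2) - sin (θ * d1)| ^ 2 := (sq_abs _).symm
      _ ≤ |θ * d2 - θ * d1| ^ 2 := by gcongr
      _ = θ ^ 2 * (d2 - d1) ^ 2 := by rw [sq_abs]; ring
      _ ≤ 5 * δ * δ := by gcongr
      _ = _ := by ring
  linarith

lemma site_zero {δ θ s : ℝ} (hc : cos θ = 1 - δ) (hs : s = 1 ∨ s = -1) :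
    (cos (θ * s) + cos (θ * s) - 2 * (1 - δ)) ^ 2 + (sin (θ * s) - sin (θ * s)) ^ 2 = 0 := by
  rcases hs with rfl | rfl
  · rw [mul_one, hc]; ring
  · rw [mul_neg, mul_one, cos_neg, hc]; ring


lemma count_mod (P : ℕ) (hP : 0 < P) (S : Finset ℤ) (N : ℕ) :
    (((range N).filter (fun y : ℕ => ((y : ℤ) % (P : ℤ)) ∈ S)).card : ℝ) ≤
      ((N : ℝ) / P + 1) * S.card := by
  have h1 : ((range N).filter (fun y : ℕ => ((y : ℤ) % (P : ℤ)) ∈ S)).card ≤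
      (range (N / P + 1) ×ˢ S).card := by
    apply Finset.card_le_card_of_injOn (fun y : ℕ => (y / P, ((y : ℤ) % (P : ℤ))))
    · intro y hy
      simp only [coe_filter, mem_range, Set.mem_setOf_eq] at hy
      simp only [coe_product, Set.mem_prod, mem_coe, mem_range]
      exact ⟨Nat.lt_succ_of_le (Nat.div_le_div_right hy.1.le), hy.2⟩
    · intro y _ z _ hyz
      simp only [Prod.mk.injEq] at hyz
      have h2 : y % P = z % P := by exact_mod_cast hyz.2
      rw [← Nat.div_add_mod y P, ← Nat.div_add_mod z P, hyz.1, h2]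
  rw [card_product, card_range] at h1
  have h2 : (((range N).filter (fun y : ℕ => ((y : ℤ) % (P : ℤ)) ∈ S)).card : ℝ) ≤
      (((N / P + 1) * S.card : ℕ) : ℝ) := by exact_mod_cast h1
  refine h2.trans ?_
  push_cast
  gcongr
  exact Nat.cast_div_le

open Classical in
/-- indicator of bad sites in folded coordinates. -/
noncomputable def bad (W : ℕ) (x y : ℕ) : ℝ := if Gd W x y then 0 else 1

lemma bad_nonneg (W x y : ℕ) : 0 ≤ bad W x y := by
  unfold bad; split_ifs <;> norm_num

lemma bad_le_one (W x y : ℕ) : bad W x y ≤ 1 := by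
  unfold bad; split_ifs <;> norm_num

lemma bad_col {n x : ℕ} (W N : ℕ) (h1 : 2 ^ n + W ≤ x) (h2 : x + W < 2 * 2 ^ n) :
    ∑ y ∈ range N, bad W x y ≤ ((N : ℝ) / (4 * 2 ^ n) + 1) * (12 * W) := by
  have hx : hh (x : ℤ) = 2 ^ n := by
    apply hh_eq
    · exact_mod_cast (by omega : 2 ^ n ≤ x)
    · exact_mod_cast (by omega : x < 2 * 2 ^ n)
  set h : ℤ := 2 ^ n with hh'
  have hc : h = ((2 ^ n : ℕ) : ℤ) := by push_cast; rfl
  have h0 : ∑ y ∈ range N, bad W x y ≤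
      (((range N).filter (fun y : ℕ => ((y : ℤ) % ((4 * 2 ^ n : ℕ) : ℤ)) ∈
      Ico 0 (W : ℤ) ∪ Ico (2 * h - W + 1) (2 * h + W) ∪ Ico (4 * h - W) (4 * h) ∪
    Ico ((x : ℤ) - 2 * W + 1) (x + 2 * W) ∪ Ico (4 * h - x - 2 * W + 1) (4 * h - x + 2 * W))).card : ℝ) := by
    rw [Finset.card_filter]
    push_cast
    apply Finset.sum_le_sum
    intro y _
    unfold bad
    split_ifs with ha hb hb
    · norm_num
    · norm_num
    · norm_num
    · exfalso
      apply ha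
      have hp : (4 * 2 ^ n : ℤ) = 4 * h := rfl
      rw [hp] at hb
      simp only [mem_union, mem_Ico, not_or, not_and, not_lt] at hb
      have hm1 := Int.emod_nonneg (y : ℤ) (by omega : 4 * h ≠ 0)
      have hm2 := Int.emod_lt_of_pos (y : ℤ) (by omega : 0 < 4 * h)
      unfold Gd
      rw [hx]
      refine ⟨by omega, by omega, by omega, ?_⟩
      unfold Rr
      rcases abs_cases ((x : ℤ) - min ((y : ℤ) % (4 * h)) (4 * h - (y : ℤ) % (4 * h))) with h5 | h5 <;>
        omega
  refine h0.trans ((count_mod (4 * 2 ^ n) (by positivity) _ N).trans ?_)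
  push_cast
  gcongr
  have hcard : (Ico 0 (W : ℤ) ∪ Ico (2 * h - W + 1) (2 * h + W) ∪ Ico (4 * h - W) (4 * h) ∪
    Ico ((x : ℤ) - 2 * W + 1) (x + 2 * W) ∪ Ico (4 * h - x - 2 * W + 1) (4 * h - x + 2 * W)).card
      ≤ 12 * W := by
    refine (card_union_le _ _).trans ?_
    refine (Nat.add_le_add_right (card_union_le _ _) _).trans ?_
    refine (Nat.add_le_add_right (Nat.add_le_add_right (card_union_le _ _) _) _).trans ?_
    refine (Nat.add_le_add_right (Nat.add_le_add_right (Nat.add_le_add_right (card_union_le _ _) _) _) _).trans ?_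
    simp only [Int.card_Ico]
    omega
  exact_mod_cast hcard

lemma bad_block (n W N : ℕ) :
    ∑ x ∈ Ico (2 ^ n) (2 ^ (n + 1)), ∑ y ∈ range N, bad W x y ≤
      2 * W * N + (N / 4 + 2 ^ n) * (12 * W) := by
  have h1 : ∀ x ∈ Ico (2 ^ n) (2 ^ (n + 1)), ∑ y ∈ range N, bad W x y ≤
      (if x ∈ Ico (2 ^ n) (2 ^ n + W) ∪ Ico (2 * 2 ^ n - W) (2 * 2 ^ n) then (N : ℝ) else 0)
        + ((N : ℝ) / (4 * 2 ^ n) + 1) * (12 * W) := by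
    intro x hx
    simp only [mem_Ico, pow_succ] at hx
    split_ifs with h
    · have : ∑ y ∈ range N, bad W x y ≤ N := by
        refine (Finset.sum_le_sum (fun y _ => bad_le_one W x y)).trans ?_
        simp
      have : 0 ≤ ((N : ℝ) / (4 * 2 ^ n) + 1) * (12 * W) := by positivity
      linarith
    · simp only [mem_union, mem_Ico, not_or, not_and, not_lt] at h
      rw [zero_add]
      apply bad_col <;> omega
  refine (Finset.sum_le_sum h1).trans ?_
  rw [Finset.sum_add_distrib]
  apply add_le_add
  · rw [← Finset.sum_filter]
    simp only [sum_const, nsmul_eq_mul]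
    gcongr
    have : (filter (fun x => x ∈ Ico (2 ^ n) (2 ^ n + W) ∪ Ico (2 * 2 ^ n - W) (2 * 2 ^ n))
      (Ico (2 ^ n) (2 ^ (n + 1)))).card ≤ 2 * W := by
      refine (card_le_card (t := Ico (2 ^ n) (2 ^ n + W) ∪ Ico (2 * 2 ^ n - W) (2 * 2 ^ n)) ?_).trans ?_
      · intro x hx
        exact (mem_filter.1 hx).2
      · refine (card_union_le _ _).trans ?_
        simp only [Nat.card_Ico]; omega
    exact_mod_cast this
  · simp only [sum_const, nsmul_eq_mul, Nat.card_Ico]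
    have : ((2 ^ (n + 1) - 2 ^ n : ℕ) : ℝ) = 2 ^ n := by
      rw [show 2 ^ (n + 1) - 2 ^ n = 2 ^ n by rw [pow_succ]; omega]; push_cast; rfl
    rw [this]
    apply le_of_eq
    field_simp

lemma dyadic_sum {f : ℕ → ℝ} {B : ℝ} {n0 N : ℕ} (h : n0 ≤ N)
    (hB : ∀ n, n0 ≤ n → n ≤ N → ∑ x ∈ Ico (2 ^ n) (2 ^ (n + 1)), f x ≤ B) :
    ∑ x ∈ Ico (2 ^ n0) (2 ^ (N + 1)), f x ≤ ((N : ℝ) + 1 - n0) * B := by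
  induction N, h using Nat.le_induction with
  | base =>
    have := hB n0 le_rfl le_rfl
    linarith
  | succ N hN ih =>
    have h1 := ih (fun n h1 h2 => hB n h1 (by omega))
    have h2 := hB (N + 1) (by omega) le_rfl
    rw [← Finset.sum_Ico_consecutive f (Nat.pow_le_pow_right (by norm_num) (by omega : n0 ≤ N + 1))
      (Nat.pow_le_pow_right (by norm_num) (by omega : N + 1 ≤ N + 1 + 1))]
    push_cast
    linarith

lemma bad_total {m k : ℕ} (hm : 1 ≤ m) (hk : m ≤ k) :
    ∑ x ∈ range (k + 1), ∑ y ∈ range (k + 1), bad (2 * m) x y ≤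
      ((m : ℝ) * (k + 1)) * (1 + 34 * (3 + Real.log ((k : ℝ) / m) / Real.log 2)) := by
  set n0 := Nat.log 2 m
  set N := Nat.log 2 k
  have hn0 : 2 ^ n0 ≤ m := Nat.pow_log_le_self 2 (by omega)
  have hn0' : m < 2 ^ (n0 + 1) := Nat.lt_pow_succ_log_self (by norm_num) m
  have hN : 2 ^ N ≤ k := Nat.pow_log_le_self 2 (by omega)
  have hN' : k < 2 ^ (N + 1) := Nat.lt_pow_succ_log_self (by norm_num) k
  have hnN : n0 ≤ N := Nat.log_mono_right hk
  have hf0 : ∀ x, 0 ≤ ∑ y ∈ range (k + 1), bad (2 * m) x y :=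
    fun x => Finset.sum_nonneg fun y _ => bad_nonneg _ _ _
  have hf1 : ∀ x, ∑ y ∈ range (k + 1), bad (2 * m) x y ≤ (k : ℝ) + 1 := by
    intro x
    refine (Finset.sum_le_sum (fun y _ => bad_le_one _ x y)).trans ?_
    simp
  have hmp : (0 : ℝ) < m := by exact_mod_cast hm
  have hkp : (0 : ℝ) < k := by exact_mod_cast (by omega : 0 < k)
  have h1 : ∑ x ∈ range (k + 1), ∑ y ∈ range (k + 1), bad (2 * m) x y ≤
      ∑ x ∈ range (2 ^ n0), ∑ y ∈ range (k + 1), bad (2 * m) x y +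
      ∑ x ∈ Ico (2 ^ n0) (2 ^ (N + 1)), ∑ y ∈ range (k + 1), bad (2 * m) x y := by
    rw [Finset.sum_range_add_sum_Ico _ (Nat.pow_le_pow_right (by norm_num) (by omega))]
    apply Finset.sum_le_sum_of_subset_of_nonneg
    · intro x hx; simp only [mem_range] at hx ⊢; omega
    · intro x _ _; exact hf0 x
  have h2 : ∑ x ∈ range (2 ^ n0), ∑ y ∈ range (k + 1), bad (2 * m) x y ≤ m * ((k : ℝ) + 1) := by
    refine (Finset.sum_le_sum (fun x _ => hf1 x)).trans ?_
    simp only [sum_const, card_range, nsmul_eq_mul]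
    have : ((2 ^ n0 : ℕ) : ℝ) ≤ m := by exact_mod_cast hn0
    exact mul_le_mul_of_nonneg_right this (by positivity)
  have h3 : ∑ x ∈ Ico (2 ^ n0) (2 ^ (N + 1)), ∑ y ∈ range (k + 1), bad (2 * m) x y ≤
      ((N : ℝ) + 1 - n0) * (34 * (m * ((k : ℝ) + 1))) := by
    apply dyadic_sum hnN
    intro n hn1 hn2
    refine (bad_block n (2 * m) (k + 1)).trans ?_
    have h4 : (2 : ℝ) ^ n ≤ k := by
      have : 2 ^ n ≤ k := (Nat.pow_le_pow_right (by norm_num) hn2).trans hN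
      exact_mod_cast this
    push_cast
    have : (((k : ℝ) + 1) / 4 + 2 ^ n) * (12 * (2 * m)) ≤ (((k : ℝ) + 1) / 4 + k) * (12 * (2 * m)) := by gcongr
    nlinarith
  have h4 : (N : ℝ) + 1 - n0 ≤ 3 + Real.log ((k : ℝ) / m) / Real.log 2 := by
    have hl2 : 0 < Real.log 2 := Real.log_pos (by norm_num)
    have h5 : (N : ℝ) * Real.log 2 ≤ Real.log k := by
      rw [← Real.log_pow]
      apply Real.log_le_log (by positivity)
      exact_mod_cast hN
    have h6 : Real.log m ≤ ((n0 : ℝ) + 1) * Real.log 2 := by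
      have : ((n0 : ℝ) + 1) * Real.log 2 = Real.log (2 ^ (n0 + 1)) := by
        rw [Real.log_pow]; push_cast; rfl
      rw [this]
      apply Real.log_le_log hmp
      exact_mod_cast hn0'.le
    rw [Real.log_div hkp.ne' hmp.ne']
    have : (N : ℝ) - n0 - 1 ≤ (Real.log k - Real.log m) / Real.log 2 := by
      rw [le_div_iff₀ hl2]; linarith
    linarith
  have h5 : ((N : ℝ) + 1 - n0) * (34 * (m * ((k : ℝ) + 1))) ≤
      (3 + Real.log ((k : ℝ) / m) / Real.log 2) * (34 * (m * ((k : ℝ) + 1))) := by gcongr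
  nlinarith

lemma fold_sum (k : ℕ) {f : ℕ → ℝ} (hf : ∀ x, 0 ≤ f x) :
    ∑ i ∈ range (k + 1), f (min i (k - i)) ≤ 2 * ∑ i ∈ range (k + 1), f i := by
  have h1 : ∀ i ∈ range (k + 1), f (min i (k - i)) ≤ f i + f (k - i) := by
    intro i _
    rcases min_cases i (k - i) with h | h
    · rw [h.1]; linarith [hf (k - i)]
    · rw [h.1]; linarith [hf i]
  refine (Finset.sum_le_sum h1).trans ?_
  rw [Finset.sum_add_distrib]
  have h2 := Finset.sum_range_reflect f (k + 1)
  simp only [Nat.add_sub_cancel] at h2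
  rw [h2]; linarith

lemma mid_count (k w : ℕ) : (((range (k + 1)).filter (fun i : ℕ => |2 * (i : ℤ) - k| ≤ 2 * w)).card : ℝ)
    ≤ 2 * w + 1 := by
  have h1 : ((range (k + 1)).filter (fun i : ℕ => |2 * (i : ℤ) - k| ≤ 2 * w)).card ≤
      ((Icc (((k : ℤ) + 1) / 2 - w) ((k : ℤ) / 2 + w))).card := by
    apply Finset.card_le_card_of_injOn (fun i : ℕ => (i : ℤ))
    · intro i hi
      simp only [coe_filter, mem_range, Set.mem_setOf_eq, abs_le] at hi
      simp only [coe_Icc, Set.mem_Icc]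
      omega
    · intro a _ b _ hab
      have h3 : (a : ℤ) = b := hab
      exact_mod_cast h3
  rw [Int.card_Icc] at h1
  have : ((range (k + 1)).filter (fun i : ℕ => |2 * (i : ℤ) - k| ≤ 2 * w)).card ≤ 2 * w + 1 := by
    refine h1.trans ?_
    omega
  exact_mod_cast this


lemma sum_shift_le (k : ℕ) (h2 : 2 ≤ k) {g : ℕ → ℝ} (hg : ∀ i, 0 ≤ g i) :
    ∑ i ∈ range (k - 1), g (i + 1) ≤ ∑ i ∈ range (k + 1), g i := by
  have h1 : ∑ i ∈ range (k - 1), g (i + 1) ≤ ∑ i ∈ range k, g i := by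
    obtain ⟨l, rfl⟩ : ∃ l, k = l + 1 := ⟨k - 1, by omega⟩
    rw [Nat.add_sub_cancel, Finset.sum_range_succ']
    linarith [hg 0]
  rw [Finset.sum_range_succ]
  linarith [hg k]

lemma E_le_of_site {ε δ : ℝ} {k : ℕ} (hk : Kof ε = (k : ℤ)) (h2 : 2 ≤ k) (u : ℤ × ℤ → ℝ × ℝ)
    (b : ℕ → ℕ → ℝ) (hb : ∀ i j, 0 ≤ b i j)
    (hH : ∀ i j : ℕ, i + 2 ≤ k → j ≤ k →
      tri δ (u ((i : ℤ), (j : ℤ))) (u ((i : ℤ) + 1, (j : ℤ))) (u ((i : ℤ) + 2, (j : ℤ))) ≤ b (i + 1) j)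
    (hV : ∀ i j : ℕ, i ≤ k → j + 2 ≤ k →
      tri δ (u ((i : ℤ), (j : ℤ))) (u ((i : ℤ), (j : ℤ) + 1)) (u ((i : ℤ), (j : ℤ) + 2)) ≤ b i (j + 1)) :
    E ε δ u ≤ ε ^ 2 * ∑ i ∈ range (k + 1), ∑ j ∈ range (k + 1), b i j := by
  unfold E
  rw [Ehor_eq hk h2, Ever_eq hk h2]
  have h3 : ∑ j ∈ range (k + 1), ∑ i ∈ range (k - 1),
      tri δ (u ((i : ℤ), (j : ℤ))) (u ((i : ℤ) + 1, (j : ℤ))) (u ((i : ℤ) + 2, (j : ℤ))) ≤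
      ∑ i ∈ range (k + 1), ∑ j ∈ range (k + 1), b i j := by
    rw [Finset.sum_comm (s := range (k + 1)) (t := range (k + 1))]
    apply Finset.sum_le_sum
    intro j hj
    simp only [mem_range] at hj
    refine le_trans (Finset.sum_le_sum fun i hi => ?_) (sum_shift_le k h2 (g := fun i => b i j) fun i => hb i j)
    simp only [mem_range] at hi
    exact hH i j (by omega) (by omega)
  have h4 : ∑ i ∈ range (k + 1), ∑ j ∈ range (k - 1),
      tri δ (u ((i : ℤ), (j : ℤ))) (u ((i : ℤ), (j : ℤ) + 1)) (u ((i : ℤ), (j : ℤ) + 2)) ≤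
      ∑ i ∈ range (k + 1), ∑ j ∈ range (k + 1), b i j := by
    apply Finset.sum_le_sum
    intro i hi
    simp only [mem_range] at hi
    refine le_trans (Finset.sum_le_sum fun j hj => ?_) (sum_shift_le k h2 (g := fun j => b i j) fun j => hb i j)
    simp only [mem_range] at hj
    exact hV i j (by omega) (by omega)
  have hp : 0 ≤ ε ^ 2 / 2 := by positivity
  have h5 := mul_le_mul_of_nonneg_left h3 hp
  have h6 := mul_le_mul_of_nonneg_left h4 hp
  linarith

lemma dotp_comm (a b : ℝ × ℝ) : dotp a b = dotp b a := by
  unfold dotp; ring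

lemma per_of_fold {ε : ℝ} {u : ℤ × ℤ → ℝ × ℝ} (h0 : InS0 ε u)
    (hx : ∀ i j, u (Kof ε - i, j) = u (i, j)) (hy : ∀ i j, u (i, Kof ε - j) = u (i, j)) :
    InS0per ε u := by
  refine ⟨h0, fun l _ => ⟨?_, ?_⟩⟩
  · have h1 := hx 0 l
    rw [sub_zero] at h1
    rw [hx, h1, dotp_comm]
  · have h1 := hy l 0
    rw [sub_zero] at h1
    rw [hy, h1, dotp_comm]

/-- site weight for the branching construction. -/
noncomputable def wt (k m i j : ℕ) : ℝ :=
  (if |2 * (i : ℤ) - k| ≤ 2 * ((2 * m : ℕ) : ℤ) then 1 else 0) +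
  (if |2 * (j : ℤ) - k| ≤ 2 * ((2 * m : ℕ) : ℤ) then 1 else 0) +
  (if min i (k - i) ≤ m then 1 else 0) + bad (2 * m) (min i (k - i) - m) (min j (k - j))

lemma wt_nonneg (k m i j : ℕ) : 0 ≤ wt k m i j := by
  unfold wt
  have := bad_nonneg (2 * m) (min i (k - i) - m) (min j (k - j))
  split_ifs <;> linarith

lemma wt_dich {k m i j : ℕ} (hi : i ≤ k) (hj : j ≤ k) :
    1 ≤ wt k m i j ∨ Aff (2 * m) (Ph k m) i j := by
  by_cases h : 1 ≤ wt k m i j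
  · exact Or.inl h
  · right
    have hb := bad_nonneg (2 * m) (min i (k - i) - m) (min j (k - j))
    unfold wt at h
    have h1 : ¬ |2 * (i : ℤ) - k| ≤ 2 * ((2 * m : ℕ) : ℤ) := by
      intro hc; apply h; rw [if_pos hc]; split_ifs <;> linarith
    have h2 : ¬ |2 * (j : ℤ) - k| ≤ 2 * ((2 * m : ℕ) : ℤ) := by
      intro hc; apply h; rw [if_pos hc]; split_ifs <;> linarith
    have h3 : ¬ min i (k - i) ≤ m := by
      intro hc; apply h; rw [if_pos hc]; split_ifs <;> linarith
    rw [if_neg h1, if_neg h2, if_neg h3] at h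
    have h4 : Gd (2 * m : ℕ) ((min i (k - i) - m : ℕ) : ℤ) ((min j (k - j) : ℕ) : ℤ) := by
      by_contra hc
      apply h
      unfold bad
      rw [if_neg hc]; norm_num
    have e1 : ((min i (k - i) - m : ℕ) : ℤ) = min (i : ℤ) (k - i) - m := by omega
    have e2 : ((min j (k - j) : ℕ) : ℤ) = min (j : ℤ) (k - j) := by omega
    rw [e1, e2] at h4
    push_cast at h1 h2 h4
    exact Ph_aff (by positivity) (by omega) (by omega) (by omega) h4

lemma sum_trunc (k m : ℕ) {F : ℕ → ℝ} {B : ℝ} (h0 : ∀ x, 0 ≤ F x) (hB : F 0 ≤ B) :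
    ∑ x ∈ range (k + 1), F (x - m) ≤ m * B + ∑ x ∈ range (k + 1), F x := by
  have h1 : ∑ x ∈ range (k + 1), F (x - m) ≤ ∑ x ∈ range (m + (k + 1)), F (x - m) := by
    apply Finset.sum_le_sum_of_subset_of_nonneg
    · intro x hx; simp only [mem_range] at hx ⊢; omega
    · intro x _ _; exact h0 _
  refine h1.trans ?_
  rw [Finset.sum_range_add]
  have h2 : ∀ x ∈ range m, F (x - m) ≤ B := by
    intro x hx
    simp only [mem_range] at hx
    rw [Nat.sub_eq_zero_of_le hx.le]; exact hB
  have h3 := Finset.sum_le_sum h2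
  simp only [sum_const, card_range, nsmul_eq_mul] at h3
  simp only [Nat.add_sub_cancel_left]
  linarith

lemma wt_sum {k m : ℕ} (hm : 1 ≤ m) (hk : m ≤ k) :
    ∑ i ∈ range (k + 1), ∑ j ∈ range (k + 1), wt k m i j ≤
      ((m : ℝ) * (k + 1)) * (430 + 136 * (Real.log ((k : ℝ) / m) / Real.log 2)) := by
  have hmr : (1 : ℝ) ≤ m := by exact_mod_cast hm
  have hmid := mid_count k (2 * m)
  rw [Finset.card_filter] at hmid
  push_cast at hmid
  have e1 : ∑ i ∈ range (k + 1), ∑ j ∈ range (k + 1),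
      (if |2 * (i : ℤ) - k| ≤ 2 * ((2 * m : ℕ) : ℤ) then (1 : ℝ) else 0) ≤ (5 * m) * (k + 1) := by
    simp only [sum_const, card_range, nsmul_eq_mul]
    rw [← Finset.mul_sum]
    push_cast
    nlinarith
  have e2 : ∑ i ∈ range (k + 1), ∑ j ∈ range (k + 1),
      (if |2 * (j : ℤ) - k| ≤ 2 * ((2 * m : ℕ) : ℤ) then (1 : ℝ) else 0) ≤ (5 * m) * (k + 1) := by
    rw [Finset.sum_comm]; exact e1
  have e3 : ∑ i ∈ range (k + 1), ∑ j ∈ range (k + 1),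
      (if min i (k - i) ≤ m then (1 : ℝ) else 0) ≤ (4 * m) * (k + 1) := by
    simp only [sum_const, card_range, nsmul_eq_mul]
    rw [← Finset.mul_sum]
    have h1 := fold_sum k (f := fun x => if x ≤ m then (1 : ℝ) else 0)
      (fun x => by split_ifs <;> norm_num)
    have h2 : ∑ i ∈ range (k + 1), (if i ≤ m then (1 : ℝ) else 0) ≤ m + 1 := by
      rw [← Finset.sum_filter]
      simp only [sum_const, nsmul_eq_mul, mul_one]
      have : (filter (fun i => i ≤ m) (range (k + 1))).card ≤ (range (m + 1)).card := by
        apply card_le_card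
        intro x hx; simp only [mem_filter, mem_range] at hx ⊢; omega
      rw [card_range] at this
      exact_mod_cast this
    push_cast
    nlinarith
  have e4 : ∑ i ∈ range (k + 1), ∑ j ∈ range (k + 1),
      bad (2 * m) (min i (k - i) - m) (min j (k - j)) ≤
      4 * (m * (k + 1) + ∑ x ∈ range (k + 1), ∑ y ∈ range (k + 1), bad (2 * m) x y) := by
    have h1 := fold_sum k (f := fun x => ∑ j ∈ range (k + 1), bad (2 * m) (x - m) (min j (k - j)))
      (fun x => Finset.sum_nonneg fun y _ => bad_nonneg _ _ _)
    refine h1.trans ?_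
    have h2 : ∀ x ∈ range (k + 1), ∑ j ∈ range (k + 1), bad (2 * m) (x - m) (min j (k - j)) ≤
        2 * ∑ j ∈ range (k + 1), bad (2 * m) (x - m) j := by
      intro x _
      exact fold_sum k (f := fun j => bad (2 * m) (x - m) j) (fun _ => bad_nonneg _ _ _)
    have h3 := Finset.sum_le_sum h2
    rw [← Finset.mul_sum] at h3
    have h4 := sum_trunc k m (F := fun x => ∑ j ∈ range (k + 1), bad (2 * m) x j) (B := k + 1)
      (fun x => Finset.sum_nonneg fun y _ => bad_nonneg _ _ _) (by
        refine (Finset.sum_le_sum (fun y _ => bad_le_one _ 0 y)).trans ?_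
        simp)
    linarith
  have e5 := bad_total hm hk
  unfold wt
  simp only [Finset.sum_add_distrib]
  linarith

set_option maxHeartbeats 1000000 in
lemma construct_c {ε δ : ℝ} (h0 : 0 < ε) (h1 : ε < 1 / 2) (hδ : 0 < δ) (hδ1 : δ < 1)
    (hσ : ε / √δ < 1 / 100) : ∃ u, InS0per ε u ∧
      E ε δ u ≤ 20000 * (ε * (δ * √δ) * (|Real.log (ε / √δ)| + 1)) := by
  obtain ⟨k, hk, h2, hk1, hk2⟩ := Kof_facts h0 h1
  obtain ⟨hc, hθ0, -, -, hθ2⟩ := theta_facts hδ hδ1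
  obtain ⟨m, hm, hm1, hm2⟩ := m_facts hδ hδ1
  set θ := arccos (1 - δ)
  have hr : 0 < √δ := Real.sqrt_pos.2 hδ
  have hrr : √δ * √δ = δ := Real.mul_self_sqrt hδ.le
  have hmr : (1 : ℝ) ≤ m := by exact_mod_cast hm
  have hkr : (2 : ℝ) ≤ k := by exact_mod_cast h2
  have hmk : m ≤ k := by
    rw [div_lt_iff₀ hr] at hσ
    have h3 : (m : ℝ) * √δ ≤ k * √δ := by
      have : 1 / 2 ≤ k * ε := by nlinarith
      have : k * ε ≤ k * (1 / 100 * √δ) := by gcongr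
      linarith
    exact_mod_cast le_of_mul_le_mul_right h3 hr
  set M : ℤ → ℤ → ℝ := mol m (Ph k m) with hM
  have hswap : ∀ i j, M i j = mol m (fun a b => Ph k m b a) j i := fun i j => mol_swap _ _ _ _
  have hlx : ∀ i j : ℤ, |Ph k m (i + 1) j - Ph k m i j| ≤ 1 := Ph_lip_x k m
  have hly : ∀ i j : ℤ, |(fun a b => Ph k m b a) (i + 1) j - (fun a b => Ph k m b a) i j| ≤ 1 :=
    fun i j => Ph_lip_y k m j i
  have hx1 : ∀ i j, |M (i + 1) j - M i j| ≤ 1 := fun i j => mol_dx m hlx i j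
  have hx2 : ∀ i j, |(M (i + 2) j - M (i + 1) j) - (M (i + 1) j - M i j)| ≤ 2 / (2 * (m : ℝ) + 1) :=
    fun i j => mol_ddx m hlx i j
  have hx3 : ∀ i j, Aff (2 * m) (Ph k m) (i + 1) j → ∃ s : ℝ, (s = 1 ∨ s = -1) ∧
      M (i + 2) j - M (i + 1) j = s ∧ M (i + 1) j - M i j = s := by
    intro i j h
    obtain ⟨s, hs, hs1, hs2⟩ := mol_aff hm h
    rw [show i + 1 + 1 = i + 2 by ring] at hs1
    rw [add_sub_cancel_right] at hs2
    exact ⟨s, hs, hs1, hs2⟩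
  have hy1 : ∀ i j, |M i (j + 1) - M i j| ≤ 1 := by
    intro i j
    rw [hswap, hswap]; exact mol_dx m hly j i
  have hy2 : ∀ i j, |(M i (j + 2) - M i (j + 1)) - (M i (j + 1) - M i j)| ≤ 2 / (2 * (m : ℝ) + 1) := by
    intro i j
    rw [hswap, hswap, hswap]; exact mol_ddx m hly j i
  have hy3 : ∀ i j, Aff (2 * m) (Ph k m) i (j + 1) → ∃ s : ℝ, (s = 1 ∨ s = -1) ∧
      M i (j + 2) - M i (j + 1) = s ∧ M i (j + 1) - M i j = s := by
    intro i j h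
    obtain ⟨s, hs, hs1, hs2⟩ := mol_aff hm (Aff_swap h)
    rw [show j + 1 + 1 = j + 2 by ring, ← hswap, ← hswap] at hs1
    rw [add_sub_cancel_right, ← hswap, ← hswap] at hs2
    exact ⟨s, hs, hs1, hs2⟩
  have hM0 : ∀ j, M 0 j = 0 := fun j => mol_zero m (fun i j hij => Ph_zero k m i j hij) j
  have hMx : ∀ i j, M (k - i) j = M i j := fun i j =>
    mol_refl_x m (fun i j => Ph_refl_x k m i j) i j
  have hMy : ∀ i j, M i (k - j) = M i j := by
    intro i j
    rw [hswap, hswap]; exact mol_refl_x m (fun i j => Ph_refl_y k m j i) j i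
  clear hswap hlx hly
  clear_value M
  set u : ℤ × ℤ → ℝ × ℝ := fun p => (sin (θ * M p.1 p.2), cos (θ * M p.1 p.2)) with hu
  have hd : (2 / (2 * (m : ℝ) + 1)) ^ 2 ≤ δ := by
    have h3 : 2 / (2 * (m : ℝ) + 1) ≤ √δ := by
      rw [div_le_iff₀ (by positivity)]; nlinarith
    calc _ ≤ √δ ^ 2 := by gcongr
      _ = δ := Real.sq_sqrt hδ.le
  have hsmall : ∀ a b c : ℝ, |b - a| ≤ 1 → |c - b| ≤ 1 → |(c - b) - (b - a)| ≤ 2 / (2 * (m : ℝ) + 1) →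
      tri δ (sin (θ * a), cos (θ * a)) (sin (θ * b), cos (θ * b)) (sin (θ * c), cos (θ * c)) ≤ 14 * δ ^ 2 := by
    intro a b c hab hbc habc
    rw [tri_ang, ← mul_sub, ← mul_sub]
    apply site_small hδ hθ2 hab hbc
    rw [← sq_abs]
    refine le_trans ?_ hd
    gcongr
  have hzero : ∀ a b c s : ℝ, b - a = s → c - b = s → (s = 1 ∨ s = -1) →
      tri δ (sin (θ * a), cos (θ * a)) (sin (θ * b), cos (θ * b)) (sin (θ * c), cos (θ * c)) = 0 := by
    intro a b c s hab hbc hs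
    rw [tri_ang, ← mul_sub, ← mul_sub, hab, hbc]
    exact site_zero hc hs
  refine ⟨u, ?_, ?_⟩
  · apply per_of_fold
    · refine ⟨fun p _ => by simp [hu, sqnorm], fun j _ => ?_⟩
      simp [hu, hM0]
    · intro i j
      simp [hu, hk, hMx]
    · intro i j
      simp [hu, hk, hMy]
  · have hu' : ∀ i j, u (i, j) = (sin (θ * M i j), cos (θ * M i j)) := fun i j => rfl
    clear_value u
    have hE := E_le_of_site (δ := δ) hk h2 u (fun i j => 14 * δ ^ 2 * wt k m i j)
      (fun i j => mul_nonneg (by positivity) (wt_nonneg _ _ _ _))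
      (by
        intro i j hi hj
        rw [hu', hu', hu']
        rcases wt_dich (k := k) (m := m) (i := i + 1) (j := j) (by omega) hj with h | h
        · have e1 := hx1 ((i : ℤ) + 1) j
          rw [show (i : ℤ) + 1 + 1 = i + 2 by ring] at e1
          exact le_trans (hsmall _ _ _ (hx1 i j) e1 (hx2 i j)) (le_mul_of_one_le_right (by positivity) h)
        · obtain ⟨s, hs, hs1, hs2⟩ := hx3 i j (by exact_mod_cast h)
          refine le_of_eq_of_le (hzero _ _ _ s hs2 hs1 hs) ?_
          exact mul_nonneg (by positivity) (wt_nonneg _ _ _ _))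
      (by
        intro i j hi hj
        rw [hu', hu', hu']
        rcases wt_dich (k := k) (m := m) (i := i) (j := j + 1) hi (by omega) with h | h
        · have e1 := hy1 (i : ℤ) ((j : ℤ) + 1)
          rw [show (j : ℤ) + 1 + 1 = j + 2 by ring] at e1
          exact le_trans (hsmall _ _ _ (hy1 i j) e1 (hy2 i j)) (le_mul_of_one_le_right (by positivity) h)
        · obtain ⟨s, hs, hs1, hs2⟩ := hy3 i j (by exact_mod_cast h)
          refine le_of_eq_of_le (hzero _ _ _ s hs2 hs1 hs) ?_
          exact mul_nonneg (by positivity) (wt_nonneg _ _ _ _))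
    refine hE.trans ?_
    simp only [← Finset.mul_sum]
    have hW := wt_sum hm hmk
    set T := |Real.log (ε / √δ)| + 1 with hT
    have hT1 : 1 ≤ T := by rw [hT]; linarith [abs_nonneg (Real.log (ε / √δ))]
    have hL : Real.log ((k : ℝ) / m) ≤ T - 1 := by
      have h3 : (k : ℝ) / m ≤ (ε / √δ)⁻¹ := by
        rw [inv_div, div_le_div_iff₀ (by positivity) h0]
        nlinarith
      calc Real.log ((k : ℝ) / m) ≤ Real.log (ε / √δ)⁻¹ := Real.log_le_log (by positivity) h3
        _ = - Real.log (ε / √δ) := Real.log_inv _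
        _ ≤ |Real.log (ε / √δ)| := neg_le_abs _
        _ = T - 1 := by rw [hT]; ring
    have hl2 : 0 < Real.log 2 := Real.log_pos (by norm_num)
    have hL2 : Real.log ((k : ℝ) / m) / Real.log 2 ≤ 3 / 2 * (T - 1) := by
      rw [div_le_iff₀ hl2]
      have := Real.log_two_gt_d9
      nlinarith
    have hW2 : ∑ i ∈ range (k + 1), ∑ j ∈ range (k + 1), wt k m i j ≤ (m : ℝ) * (k + 1) * (430 * T) := by
      refine hW.trans ?_
      apply mul_le_mul_of_nonneg_left _ (by positivity)
      linarith
    have hk3 : ε * (k + 1) ≤ 3 / 2 := by nlinarith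
    calc ε ^ 2 * (14 * δ ^ 2 * ∑ i ∈ range (k + 1), ∑ j ∈ range (k + 1), wt k m i j)
        ≤ ε ^ 2 * (14 * δ ^ 2 * ((m : ℝ) * (k + 1) * (430 * T))) := by gcongr
      _ = 6020 * (ε * (k + 1)) * (ε * (δ * (m * (√δ * √δ))) * T) := by rw [hrr]; ring
      _ = 6020 * (ε * (k + 1)) * (ε * (δ * √δ) * T) * (m * √δ) := by ring
      _ ≤ 6020 * (3 / 2) * (ε * (δ * √δ) * T) * 2 := by gcongr
      _ ≤ _ := by
        have : 0 ≤ ε * (δ * √δ) * T := by positivity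
        linarith


/-- normalization with `Nrm 0 = 1`. -/
noncomputable def Nrm (z : ℂ) : ℂ := if z = 0 then 1 else z / (‖z‖ : ℂ)

lemma Nrm_norm (z : ℂ) : ‖Nrm z‖ = 1 := by
  unfold Nrm
  split_ifs with h
  · simp
  · rw [norm_div, Complex.norm_real, norm_norm, div_self (norm_ne_zero_iff.2 h)]

lemma Nrm_unit {z : ℂ} (h : ‖z‖ = 1) : Nrm z = z := by
  unfold Nrm
  have : z ≠ 0 := by rintro rfl; simp at h
  rw [if_neg this, h]; simp

lemma Nrm_mul {z w : ℂ} (hz : z ≠ 0) (hw : w ≠ 0) : Nrm (z * w) = Nrm z * Nrm w := by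
  unfold Nrm
  rw [if_neg hz, if_neg hw, if_neg (mul_ne_zero hz hw), norm_mul]
  push_cast
  rw [mul_div_mul_comm]

lemma Nrm_exp {p : ℂ} (hp : ‖p‖ ≤ 1 / 2) :
    1 + p ≠ 0 ∧ ‖Nrm (1 + p) - 1 - (p.im : ℂ) * Complex.I‖ ≤ 4 * ‖p‖ ^ 2 := by
  have hr : 1 / 2 ≤ ‖1 + p‖ := by
    have := norm_sub_norm_le (1 : ℂ) (-p)
    rw [norm_one, norm_neg, sub_neg_eq_add] at this
    linarith
  have hr2 : |‖1 + p‖ - 1| ≤ ‖p‖ := by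
    have := abs_norm_sub_norm_le (1 + p) 1
    rw [norm_one, add_sub_cancel_left] at this
    exact this
  have hne : 1 + p ≠ 0 := by
    intro h; rw [h, norm_zero] at hr; linarith
  refine ⟨hne, ?_⟩
  set r := ‖1 + p‖ with hrd
  have hr0 : 0 < r := by linarith
  have hrc : (r : ℂ) ≠ 0 := by exact_mod_cast hr0.ne'
  have e : Nrm (1 + p) - 1 - (p.im : ℂ) * Complex.I =
      (((1 + p.re - r : ℝ) : ℂ) + ((p.im * (1 - r) : ℝ) : ℂ) * Complex.I) / (r : ℂ) := by
    unfold Nrm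
    rw [if_neg hne, ← hrd]
    field_simp
    push_cast
    have hpp := Complex.re_add_im p
    linear_combination -hpp
  rw [e, norm_div, Complex.norm_real, Real.norm_of_nonneg hr0.le, div_le_iff₀ hr0]
  have hre := Complex.abs_re_le_norm p
  have him := Complex.abs_im_le_norm p
  have hsq : r ^ 2 = (1 + p.re) ^ 2 + p.im ^ 2 := by
    rw [hrd, Complex.sq_norm, Complex.normSq_apply]; simp; ring
  have h1 : |1 + p.re - r| ≤ ‖p‖ ^ 2 := by
    have hb : p.im ^ 2 ≤ ‖p‖ ^ 2 := by rw [← sq_abs]; gcongr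
    have ha := (abs_le.1 hre).1
    rw [abs_le]
    constructor <;> nlinarith [sq_nonneg p.im]
  have h2 : |p.im * (1 - r)| ≤ ‖p‖ ^ 2 := by
    rw [abs_mul, abs_sub_comm, sq]; gcongr
  have h3 : ‖((1 + p.re - r : ℝ) : ℂ) + ((p.im * (1 - r) : ℝ) : ℂ) * Complex.I‖ ≤
      |1 + p.re - r| + |p.im * (1 - r)| := by
    refine (norm_add_le _ _).trans ?_
    rw [norm_mul, Complex.norm_I, mul_one, Complex.norm_real, Complex.norm_real]
    rfl
  nlinarith [sq_nonneg ‖p‖]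

lemma Nrm_second {v0 v1 v2 : ℂ} (h : v1 ≠ 0) :
    ‖Nrm v0 - 2 * Nrm v1 + Nrm v2‖ ≤ ‖v0 - 2 * v1 + v2‖ / ‖v1‖ +
      16 * (‖v0 - v1‖ ^ 2 + ‖v2 - v1‖ ^ 2) / ‖v1‖ ^ 2 := by
  have hn : 0 < ‖v1‖ := norm_pos_iff.2 h
  set p0 := (v0 - v1) / v1 with hp0
  set p2 := (v2 - v1) / v1 with hp2
  have e : 16 * (‖v0 - v1‖ ^ 2 + ‖v2 - v1‖ ^ 2) / ‖v1‖ ^ 2 = 16 * (‖p0‖ ^ 2 + ‖p2‖ ^ 2) := by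
    rw [hp0, hp2, norm_div, norm_div]; field_simp
  have e2 : ‖v0 - 2 * v1 + v2‖ / ‖v1‖ = ‖p0 + p2‖ := by
    rw [← norm_div, hp0, hp2]
    congr 1; field_simp; ring
  rw [e, e2]
  by_cases hs : ‖p0‖ ≤ 1 / 2 ∧ ‖p2‖ ≤ 1 / 2
  · obtain ⟨n0, b0⟩ := Nrm_exp hs.1
    obtain ⟨n2, b2⟩ := Nrm_exp hs.2
    have f0 : Nrm v0 = Nrm v1 * Nrm (1 + p0) := by
      rw [← Nrm_mul h n0]; congr 1; rw [hp0]; field_simp; ring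
    have f2 : Nrm v2 = Nrm v1 * Nrm (1 + p2) := by
      rw [← Nrm_mul h n2]; congr 1; rw [hp2]; field_simp; ring
    have f : Nrm v0 - 2 * Nrm v1 + Nrm v2 = Nrm v1 * (((p0 + p2).im : ℂ) * Complex.I +
        ((Nrm (1 + p0) - 1 - (p0.im : ℂ) * Complex.I) + (Nrm (1 + p2) - 1 - (p2.im : ℂ) * Complex.I))) := by
      rw [f0, f2, Complex.add_im]; push_cast; ring
    rw [f, norm_mul, Nrm_norm, one_mul]
    refine (norm_add_le _ _).trans ?_
    have g1 : ‖((p0 + p2).im : ℂ) * Complex.I‖ ≤ ‖p0 + p2‖ := by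
      rw [norm_mul, Complex.norm_I, mul_one, Complex.norm_real]
      exact Complex.abs_im_le_norm _
    have g2 := norm_add_le (Nrm (1 + p0) - 1 - (p0.im : ℂ) * Complex.I) (Nrm (1 + p2) - 1 - (p2.im : ℂ) * Complex.I)
    nlinarith [sq_nonneg ‖p0‖, sq_nonneg ‖p2‖]
  · have h4 : ‖Nrm v0 - 2 * Nrm v1 + Nrm v2‖ ≤ 4 := by
      refine (norm_add_le _ _).trans ?_
      have := norm_sub_le (Nrm v0) (2 * Nrm v1)
      rw [norm_mul, Nrm_norm, Nrm_norm] at this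
      rw [Nrm_norm]
      have h2 : ‖(2 : ℂ)‖ = 2 := by simp
      linarith
    have h5 : 1 / 4 ≤ ‖p0‖ ^ 2 + ‖p2‖ ^ 2 := by
      rw [not_and_or] at hs
      rcases hs with hs | hs <;> push Not at hs <;>
        nlinarith [sq_nonneg ‖p0‖, sq_nonneg ‖p2‖]
    linarith [norm_nonneg (p0 + p2)]

/-- complex to spin. -/
def c2p (z : ℂ) : ℝ × ℝ := (z.im, z.re)

lemma tri_c2p (δ : ℝ) (a b c : ℂ) :
    tri δ (c2p a) (c2p b) (c2p c) = ‖a - 2 * b + c + ((2 * δ : ℝ) : ℂ) * b‖ ^ 2 := by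
  rw [Complex.sq_norm, Complex.normSq_apply]
  simp [tri, sqnorm, c2p]
  ring

lemma tri_symm (δ : ℝ) (a b c : ℝ × ℝ) : tri δ a b c = tri δ c b a := by
  unfold tri sqnorm; simp; ring

lemma tri_Nrm_le {δ : ℝ} (hδ : 0 < δ) {v0 v1 v2 : ℂ} (h : v1 ≠ 0) :
    tri δ (c2p (Nrm v0)) (c2p (Nrm v1)) (c2p (Nrm v2)) ≤ (‖v0 - 2 * v1 + v2‖ / ‖v1‖ +
      16 * (‖v0 - v1‖ ^ 2 + ‖v2 - v1‖ ^ 2) / ‖v1‖ ^ 2 + 2 * δ) ^ 2 := by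
  rw [tri_c2p]
  have h1 := Nrm_second (v0 := v0) (v2 := v2) h
  have h2 := norm_add_le (Nrm v0 - 2 * Nrm v1 + Nrm v2) (((2 * δ : ℝ) : ℂ) * Nrm v1)
  rw [norm_mul, Nrm_norm, Complex.norm_real, Real.norm_of_nonneg (by positivity : (0:ℝ) ≤ 2 * δ)] at h2
  gcongr
  linarith

lemma tri_Nrm_16 {δ : ℝ} (hδ : 0 < δ) (hδ1 : δ < 1) (v0 v1 v2 : ℂ) :
    tri δ (c2p (Nrm v0)) (c2p (Nrm v1)) (c2p (Nrm v2)) ≤ 16 := by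
  rw [tri_c2p]
  have e : Nrm v0 - 2 * Nrm v1 + Nrm v2 + ((2 * δ : ℝ) : ℂ) * Nrm v1 =
      Nrm v0 + (((2 * δ - 2 : ℝ) : ℂ) * Nrm v1 + Nrm v2) := by push_cast; ring
  have : ‖Nrm v0 - 2 * Nrm v1 + Nrm v2 + ((2 * δ : ℝ) : ℂ) * Nrm v1‖ ≤ 4 := by
    rw [e]
    refine (norm_add_le _ _).trans ?_
    have h2 := norm_add_le (((2 * δ - 2 : ℝ) : ℂ) * Nrm v1) (Nrm v2)
    rw [norm_mul, Nrm_norm, Nrm_norm, Complex.norm_real, Real.norm_eq_abs, abs_of_nonpos (by linarith)] at h2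
    rw [Nrm_norm]
    linarith
  calc _ ≤ (4 : ℝ) ^ 2 := by gcongr
    _ = 16 := by norm_num

lemma lor_tel (t : ℝ) : 1 / (1 + t ^ 2) ≤
    5 / 2 * ((t + 1 / 2) / (1 + |t + 1 / 2|) - (t - 1 / 2) / (1 + |t - 1 / 2|)) := by
  have hp : 0 < 1 + t ^ 2 := by positivity
  rcases le_total (1 / 2) t with h | h
  · rw [abs_of_nonneg (by linarith), abs_of_nonneg (by linarith)]
    rw [div_sub_div _ _ (by linarith) (by linarith), ← mul_div_assoc, div_le_div_iff₀ hp (by nlinarith)]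
    nlinarith [sq_nonneg (t - 1)]
  · rcases le_total t (-(1 / 2)) with h' | h'
    · rw [abs_of_nonpos (by linarith), abs_of_nonpos (by linarith)]
      rw [div_sub_div _ _ (by linarith) (by linarith), ← mul_div_assoc, div_le_div_iff₀ hp (by nlinarith)]
      nlinarith [sq_nonneg (t + 1)]
    · rw [abs_of_nonneg (by linarith), abs_of_nonpos (by linarith)]
      rw [div_sub_div _ _ (by linarith) (by linarith), ← mul_div_assoc, div_le_div_iff₀ hp (by nlinarith)]
      have : t ^ 2 ≤ 1 / 4 := by nlinarith
      nlinarith [sq_nonneg t]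

lemma lor_sum (n : ℕ) (r : ℝ) : ∑ y ∈ range n, 1 / (1 + ((y : ℝ) - r) ^ 2) ≤ 5 := by
  set F : ℝ → ℝ := fun t => t / (1 + |t|) with hF
  have hF1 : ∀ t, |F t| ≤ 1 := by
    intro t
    have : 0 < 1 + |t| := by positivity
    rw [hF]
    simp only
    rw [abs_div, abs_of_pos this, div_le_one this]; linarith
  have h1 : ∑ y ∈ range n, 1 / (1 + ((y : ℝ) - r) ^ 2) ≤
      ∑ y ∈ range n, 5 / 2 * (F (((y + 1 : ℕ) : ℝ) - r - 1 / 2) - F ((y : ℝ) - r - 1 / 2)) := by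
    apply Finset.sum_le_sum
    intro y _
    have := lor_tel ((y : ℝ) - r)
    rw [show ((y + 1 : ℕ) : ℝ) - r - 1 / 2 = (y : ℝ) - r + 1 / 2 by push_cast; ring]
    exact this
  rw [← Finset.mul_sum, Finset.sum_range_sub (fun y : ℕ => F ((y : ℝ) - r - 1 / 2))] at h1
  have h2 := (abs_le.1 (hF1 ((n : ℝ) - r - 1 / 2))).2
  have h3 := (abs_le.1 (hF1 (((0 : ℕ) : ℝ) - r - 1 / 2))).1
  linarith

lemma lor_scale {c t X : ℝ} (hc : 0 < c) (hc1 : c ≤ 1) (hX : c * t ^ 2 ≤ X) :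
    1 / (1 + X) ≤ 1 / c * (1 / (1 + t ^ 2)) := by
  have h0 : 0 ≤ t ^ 2 := sq_nonneg t
  have hX0 : 0 ≤ X := le_trans (by positivity) hX
  rw [div_mul_div_comm, one_mul, div_le_div_iff₀ (by positivity) (by positivity)]
  nlinarith

/-- first factor sum. -/
lemma sum_A (m : ℕ) (hm : 1 ≤ m) :
    ∑ x ∈ range m, 1 / (1 + (m : ℝ) ^ 2 * (1 - 2 * ((x : ℝ) / m)) ^ 2 / 8) ≤ 10 := by
  have hmr : (0 : ℝ) < m := by exact_mod_cast hm
  have h1 : ∀ x ∈ range m, 1 / (1 + (m : ℝ) ^ 2 * (1 - 2 * ((x : ℝ) / m)) ^ 2 / 8) ≤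
      1 / (1 / 2) * (1 / (1 + ((x : ℝ) - m / 2) ^ 2)) := by
    intro x _
    apply lor_scale (by norm_num) (by norm_num)
    apply le_of_eq
    field_simp
    ring
  refine (Finset.sum_le_sum h1).trans ?_
  rw [← Finset.mul_sum]
  linarith [lor_sum m (m / 2)]

lemma sum_B {θ : ℝ} {m k : ℕ} (hθ : 0 < θ) (hm : 2 ≤ (m : ℝ) ^ 2 * θ ^ 2) :
    ∑ y ∈ range (k + 1), 1 / (1 + (m : ℝ) ^ 2 * (1 + cos (θ * y)) / 8) ≤ 100 * (θ * k / 6 + 1) := by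
  have hπ := pi_pos
  set n := ⌊θ * k / (2 * π)⌋₊ with hn
  have h1 : ∀ y ∈ range (k + 1), 1 / (1 + (m : ℝ) ^ 2 * (1 + cos (θ * y)) / 8) ≤
      ∑ l ∈ range (n + 1), 20 * (1 / (1 + ((y : ℝ) - (2 * l + 1) * π / θ) ^ 2)) := by
    intro y hy
    simp only [mem_range] at hy
    have hyk : (y : ℝ) ≤ k := by exact_mod_cast (by omega : y ≤ k)
    set l := ⌊θ * y / (2 * π)⌋₊ with hl
    have hln : l ∈ range (n + 1) := by
      rw [mem_range]
      apply Nat.lt_succ_of_le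
      apply Nat.floor_le_floor
      gcongr
    have hl1 : (l : ℝ) * (2 * π) ≤ θ * y := by
      rw [← le_div_iff₀ (by positivity)]; exact Nat.floor_le (by positivity)
    have hl2 : θ * y < ((l : ℝ) + 1) * (2 * π) := by
      rw [← div_lt_iff₀ (by positivity)]; exact Nat.lt_floor_add_one _
    set β := θ * y - (2 * l + 1) * π with hβ
    have hb : |β| ≤ π := by
      rw [abs_le]; constructor <;> linarith
    have hcos : cos (θ * y) = - cos β := by
      rw [show θ * y = β + π + l * (2 * π) by rw [hβ]; ring, Real.cos_add_nat_mul_two_pi, Real.cos_add_pi]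
    have hq := Real.cos_le_one_sub_mul_cos_sq hb
    have hpi2 : π ^ 2 ≤ 10 := by nlinarith [pi_lt_d2, pi_pos]
    have h2 : 1 / 5 ≤ 2 / π ^ 2 := by
      rw [div_le_div_iff₀ (by norm_num) (by positivity)]; linarith
    have h3 : 1 / 5 * β ^ 2 ≤ 2 / π ^ 2 * β ^ 2 := by gcongr
    have hβ2 : β = θ * ((y : ℝ) - (2 * l + 1) * π / θ) := by
      rw [hβ]; field_simp
    refine le_trans ?_ (Finset.single_le_sum (f := fun l : ℕ => 20 * (1 / (1 + ((y : ℝ) - (2 * l + 1) * π / θ) ^ 2)))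
      (fun l _ => by positivity) hln)
    have h4 := lor_scale (c := 1 / 20) (t := (y : ℝ) - (2 * l + 1) * π / θ)
      (X := (m : ℝ) ^ 2 * (1 + cos (θ * y)) / 8) (by norm_num) (by norm_num) (by
        set t := (y : ℝ) - (2 * l + 1) * π / θ
        rw [hcos]
        have h5 : (m : ℝ) ^ 2 * (1 / 5 * β ^ 2) ≤ (m : ℝ) ^ 2 * (1 + - cos β) := by gcongr; linarith
        have h6 : 2 * t ^ 2 ≤ (m : ℝ) ^ 2 * θ ^ 2 * t ^ 2 := by gcongr
        have h7 : β ^ 2 = θ ^ 2 * t ^ 2 := by rw [hβ2, mul_pow]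
        rw [h7] at h5
        linarith)
    simpa using h4
  refine (Finset.sum_le_sum h1).trans ?_
  rw [Finset.sum_comm]
  have h7 : ∀ l ∈ range (n + 1), ∑ y ∈ range (k + 1), 20 * (1 / (1 + ((y : ℝ) - (2 * l + 1) * π / θ) ^ 2)) ≤ 100 := by
    intro l _
    rw [← Finset.mul_sum]
    linarith [lor_sum (k + 1) ((2 * l + 1) * π / θ)]
  refine (Finset.sum_le_sum h7).trans ?_
  simp only [sum_const, card_range, nsmul_eq_mul]
  push_cast
  have h8 : (n : ℝ) ≤ θ * k / (2 * π) := Nat.floor_le (by positivity)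
  have h9 : θ * k / (2 * π) ≤ θ * k / 6 := by
    gcongr; linarith [pi_gt_three]
  linarith


/-- unit complex number with angle `a`. -/
noncomputable def ee (a : ℝ) : ℂ := Complex.exp (Complex.I * a)

lemma ee_norm (a : ℝ) : ‖ee a‖ = 1 := by
  unfold ee; rw [mul_comm]; exact Complex.norm_exp_ofReal_mul_I a

lemma ee_add (a b : ℝ) : ee (a + b) = ee a * ee b := by
  unfold ee; push_cast; rw [mul_add, Complex.exp_add]

lemma ee_re (a : ℝ) : (ee a).re = cos a := by
  unfold ee; rw [mul_comm]; exact Complex.exp_ofReal_mul_I_re a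

lemma ee_im (a : ℝ) : (ee a).im = sin a := by
  unfold ee; rw [mul_comm]; exact Complex.exp_ofReal_mul_I_im a

lemma ee_zero : ee 0 = 1 := by simp [ee]

lemma ee_sub (a b : ℝ) : ‖ee a - ee b‖ ≤ |a - b| := by
  have : ee a - ee b = ee b * (ee (a - b) - 1) := by
    rw [mul_sub, ← ee_add]; ring_nf
  rw [this, norm_mul, ee_norm, one_mul]
  exact Real.norm_exp_I_mul_ofReal_sub_one_le

lemma ee_second (a θ : ℝ) : ee (a - θ) + ee (a + θ) = ((2 * cos θ : ℝ) : ℂ) * ee a := by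
  apply Complex.ext
  · rw [Complex.add_re, Complex.re_ofReal_mul, ee_re, ee_re, ee_re, cos_sub, cos_add]; ring
  · rw [Complex.add_im, Complex.im_ofReal_mul, ee_im, ee_im, ee_im, sin_sub, sin_add]; ring

/-- unnormalized field. -/
noncomputable def VV (θ : ℝ) (m : ℕ) (x y : ℤ) : ℂ :=
  if x ≤ m then ((1 - (x : ℝ) / m : ℝ) : ℂ) + (((x : ℝ) / m : ℝ) : ℂ) * ee (θ * y)
  else ee (θ * (y + x - m))

lemma VV_le {θ : ℝ} {m : ℕ} {x : ℤ} (h : x ≤ m) (y : ℤ) :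
    VV θ m x y = ((1 - (x : ℝ) / m : ℝ) : ℂ) + (((x : ℝ) / m : ℝ) : ℂ) * ee (θ * y) := if_pos h

lemma VV_ge {θ : ℝ} {m : ℕ} (hm : 1 ≤ m) {x : ℤ} (h : (m : ℤ) ≤ x) (y : ℤ) :
    VV θ m x y = ee (θ * (y + x - m)) := by
  rcases h.lt_or_eq with h | h
  · exact if_neg (by omega)
  · have hmr : (m : ℝ) ≠ 0 := by
      have : m ≠ 0 := by omega
      exact_mod_cast this
    rw [VV_le h.ge, ← h]
    simp [hmr]

section
variable {θ δ s : ℝ} {m : ℕ}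

lemma VV_dx (hm : 1 ≤ m) (hs : 0 < s) (hθ : |θ| ≤ 3 * s) (hms : 1 ≤ m * s) (x y : ℤ) :
    ‖VV θ m (x + 1) y - VV θ m x y‖ ≤ 3 * s := by
  have hmr : (0 : ℝ) < m := by exact_mod_cast hm
  by_cases h : x + 1 ≤ m
  · rw [VV_le h, VV_le (by omega)]
    have e : ((1 - ((x + 1 : ℤ) : ℝ) / m : ℝ) : ℂ) + ((((x + 1 : ℤ) : ℝ) / m : ℝ) : ℂ) * ee (θ * y) -
        (((1 - (x : ℝ) / m : ℝ) : ℂ) + (((x : ℝ) / m : ℝ) : ℂ) * ee (θ * y)) =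
        ((1 / (m : ℝ) : ℝ) : ℂ) * (ee (θ * y) - 1) := by
      push_cast; ring
    rw [e, norm_mul, Complex.norm_real, Real.norm_of_nonneg (by positivity)]
    have h1 := norm_sub_le (ee (θ * y)) 1
    rw [ee_norm, norm_one] at h1
    rw [div_mul_eq_mul_div, div_le_iff₀ hmr]
    nlinarith
  · rw [VV_ge hm (by omega), VV_ge hm (by omega)]
    refine (ee_sub _ _).trans ?_
    rw [show θ * ((y : ℝ) + ((x + 1 : ℤ) : ℝ) - m) - θ * (y + x - m) = θ by push_cast; ring]
    exact hθ

lemma VV_dy (hm : 1 ≤ m) (hθ : |θ| ≤ 3 * s) {x : ℤ} (hx : 0 ≤ x) (y : ℤ) :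
    ‖VV θ m x (y + 1) - VV θ m x y‖ ≤ 3 * s := by
  have hmr : (0 : ℝ) < m := by exact_mod_cast hm
  have hd : ∀ a : ℝ, ‖ee (a + θ) - ee a‖ ≤ 3 * s := by
    intro a
    refine (ee_sub _ _).trans ?_
    rw [add_sub_cancel_left]; exact hθ
  by_cases h : x ≤ m
  · rw [VV_le h, VV_le h, add_sub_add_left_eq_sub, ← mul_sub, norm_mul, Complex.norm_real]
    have hxr : (0 : ℝ) ≤ x := by exact_mod_cast hx
    have hxm : (x : ℝ) ≤ m := by exact_mod_cast h
    rw [Real.norm_of_nonneg (by positivity)]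
    have h1 := hd (θ * y)
    rw [show θ * (y : ℝ) + θ = θ * ((y + 1 : ℤ) : ℝ) by push_cast; ring] at h1
    have h2 : (x : ℝ) / m ≤ 1 := by rw [div_le_one hmr]; exact hxm
    calc _ ≤ 1 * (3 * s) := by gcongr
      _ = _ := one_mul _
  · rw [VV_ge hm (by omega), VV_ge hm (by omega)]
    have h1 := hd (θ * (y + x - m))
    rw [show θ * ((y : ℝ) + x - m) + θ = θ * (((y + 1 : ℤ) : ℝ) + x - m) by push_cast; ring] at h1
    exact h1

lemma near_of_lip {f : ℤ → ℂ} {L : ℝ} (hL : 0 ≤ L) (hf : ∀ x, ‖f (x + 1) - f x‖ ≤ L) {x x' : ℤ}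
    (h : |x' - x| ≤ 1) : ‖f x' - f x‖ ≤ L := by
  rw [abs_le] at h
  obtain rfl | rfl | rfl : x' = x ∨ x' = x + 1 ∨ x = x' + 1 := by omega
  · simpa using hL
  · exact hf x
  · rw [norm_sub_rev]; exact hf x'

lemma VV_ddx {x : ℤ} (h : x < m) (y : ℤ) :
    VV θ m (x - 1) y - 2 * VV θ m x y + VV θ m (x + 1) y = 0 := by
  rw [VV_le (by omega), VV_le (by omega), VV_le (by omega)]
  push_cast; ring

lemma VV_ddy (hm : 1 ≤ m) (hc : cos θ = 1 - δ) (hδ : 0 ≤ δ) {x : ℤ} (hx : 0 ≤ x) (h : x < m) (y : ℤ) :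
    ‖VV θ m x (y - 1) - 2 * VV θ m x y + VV θ m x (y + 1)‖ ≤ 2 * δ := by
  have hmr : (0 : ℝ) < m := by exact_mod_cast hm
  have hxr : (0 : ℝ) ≤ x := by exact_mod_cast hx
  have hxm : (x : ℝ) ≤ m := by exact_mod_cast h.le
  rw [VV_le h.le, VV_le h.le, VV_le h.le]
  have h1 := ee_second (θ * y) θ
  rw [hc, show θ * (y : ℝ) - θ = θ * ((y - 1 : ℤ) : ℝ) by push_cast; ring,
    show θ * (y : ℝ) + θ = θ * ((y + 1 : ℤ) : ℝ) by push_cast; ring] at h1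
  set t : ℝ := (x : ℝ) / m with ht
  have ht1 : t ≤ 1 := by rw [ht, div_le_one hmr]; exact hxm
  have ht0 : 0 ≤ t := by positivity
  have e : ((1 - t : ℝ) : ℂ) + (t : ℂ) * ee (θ * ((y - 1 : ℤ) : ℝ)) - 2 * (((1 - t : ℝ) : ℂ) + (t : ℂ) * ee (θ * y)) +
      (((1 - t : ℝ) : ℂ) + (t : ℂ) * ee (θ * ((y + 1 : ℤ) : ℝ))) = ((-(2 * δ * t) : ℝ) : ℂ) * ee (θ * y) := by
    push_cast at h1 ⊢
    linear_combination (t : ℂ) * h1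
  rw [e, norm_mul, ee_norm, Complex.norm_real, norm_neg, Real.norm_of_nonneg (by positivity)]
  nlinarith

lemma VV_hx (hm : 1 ≤ m) (hc : cos θ = 1 - δ) {x : ℤ} (h : (m : ℤ) < x) (y : ℤ) :
    VV θ m (x - 1) y - 2 * VV θ m x y + VV θ m (x + 1) y + ((2 * δ : ℝ) : ℂ) * VV θ m x y = 0 := by
  rw [VV_ge hm (by omega), VV_ge hm (by omega), VV_ge hm (by omega)]
  have h1 := ee_second (θ * (y + x - m)) θ
  rw [hc, show θ * ((y : ℝ) + x - m) - θ = θ * (y + ((x - 1 : ℤ) : ℝ) - m) by push_cast; ring,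
    show θ * ((y : ℝ) + x - m) + θ = θ * (y + ((x + 1 : ℤ) : ℝ) - m) by push_cast; ring] at h1
  push_cast at h1 ⊢
  linear_combination h1

lemma VV_hy (hm : 1 ≤ m) (hc : cos θ = 1 - δ) {x : ℤ} (h : (m : ℤ) ≤ x) (y : ℤ) :
    VV θ m x (y - 1) - 2 * VV θ m x y + VV θ m x (y + 1) + ((2 * δ : ℝ) : ℂ) * VV θ m x y = 0 := by
  rw [VV_ge hm h, VV_ge hm h, VV_ge hm h]
  have h1 := ee_second (θ * (y + x - m)) θ
  rw [hc, show θ * ((y : ℝ) + x - m) - θ = θ * (((y - 1 : ℤ) : ℝ) + x - m) by push_cast; ring,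
    show θ * ((y : ℝ) + x - m) + θ = θ * (((y + 1 : ℤ) : ℝ) + x - m) by push_cast; ring] at h1
  push_cast at h1 ⊢
  linear_combination h1

lemma VV_norm (hm : 1 ≤ m) {x : ℤ} (h : (m : ℤ) ≤ x) (y : ℤ) : ‖VV θ m x y‖ = 1 := by
  rw [VV_ge hm h, ee_norm]

lemma VV_zero (y : ℤ) : VV θ m 0 y = 1 := by
  rw [VV_le (by positivity)]; simp

lemma VV_sq (hm : 1 ≤ m) {x : ℤ} (hx : 0 ≤ x) (h : x < m) (y : ℤ) :
    ‖VV θ m x y‖ ≤ 1 ∧ ((1 - 2 * ((x : ℝ) / m)) ^ 2 + (1 + cos (θ * y))) / 8 ≤ ‖VV θ m x y‖ ^ 2 := by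
  have hmr : (0 : ℝ) < m := by exact_mod_cast hm
  have hxr : (0 : ℝ) ≤ x := by exact_mod_cast hx
  have hxm : (x : ℝ) ≤ m := by exact_mod_cast h.le
  rw [VV_le h.le]
  set t : ℝ := (x : ℝ) / m with ht
  have ht1 : t ≤ 1 := by rw [ht, div_le_one hmr]; exact hxm
  have ht0 : 0 ≤ t := by positivity
  constructor
  · refine (norm_add_le _ _).trans ?_
    rw [norm_mul, ee_norm, Complex.norm_real, Complex.norm_real, Real.norm_of_nonneg ht0,
      Real.norm_of_nonneg (by linarith)]
    linarith
  · rw [Complex.sq_norm, Complex.normSq_apply, Complex.add_re, Complex.add_im, Complex.re_ofReal_mul,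
      Complex.im_ofReal_mul, ee_re, ee_im, Complex.ofReal_re, Complex.ofReal_im]
    set c := cos (θ * y)
    set d := sin (θ * y)
    have hcd : c ^ 2 + d ^ 2 = 1 := cos_sq_add_sin_sq _
    have hc1 : c ≤ 1 := cos_le_one _
    have hc2 : -1 ≤ c := neg_one_le_cos _
    have e : (1 - t + t * c) * (1 - t + t * c) + (0 + t * d) * (0 + t * d) =
        (1 - 2 * t) ^ 2 + 2 * (t * (1 - t)) * (1 + c) := by
      linear_combination t ^ 2 * hcd
    rw [e]
    have hp : 0 ≤ t * (1 - t) := by nlinarith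
    have e2 : (1 - 2 * t) ^ 2 = 1 - 4 * (t * (1 - t)) := by ring
    rw [e2]
    have hp2 : 4 * (t * (1 - t)) ≤ 1 := by nlinarith [sq_nonneg (1 - 2 * t)]
    set p := t * (1 - t)
    nlinarith [mul_nonneg hp (by linarith : 0 ≤ 1 + c)]

/-- bound at unit sites. -/
lemma tri_unit (hδ : 0 < δ) (hδ1 : δ < 1) (hs : 0 < s) (hss : s ^ 2 = δ) {v0 v1 v2 : ℂ} (h1 : ‖v1‖ = 1)
    (a0 : ‖v0 - v1‖ ≤ 3 * s) (a2 : ‖v2 - v1‖ ≤ 3 * s) :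
    tri δ (c2p (Nrm v0)) (c2p (Nrm v1)) (c2p (Nrm v2)) ≤ 87616 * δ := by
  have hne : v1 ≠ 0 := by rintro rfl; simp at h1
  refine (tri_Nrm_le hδ hne).trans ?_
  rw [h1]
  have hd : ‖v0 - 2 * v1 + v2‖ ≤ 6 * s := by
    rw [show v0 - 2 * v1 + v2 = (v0 - v1) + (v2 - v1) by ring]
    exact (norm_add_le _ _).trans (by linarith)
  have b0 : ‖v0 - v1‖ ^ 2 ≤ (3 * s) ^ 2 := by gcongr
  have b2 : ‖v2 - v1‖ ^ 2 ≤ (3 * s) ^ 2 := by gcongr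
  have hs1 : s ≤ 1 := by nlinarith
  have hδs : δ ≤ s := by nlinarith
  rw [show 87616 * δ = (296 * s) ^ 2 by rw [← hss]; ring]
  have : ‖v0 - 2 * v1 + v2‖ / 1 + 16 * (‖v0 - v1‖ ^ 2 + ‖v2 - v1‖ ^ 2) / 1 ^ 2 + 2 * δ ≤ 296 * s := by
    rw [one_pow, div_one, div_one]; nlinarith
  gcongr

lemma tri_core (hδ : 0 < δ) (hδ1 : δ < 1) (hs : 0 < s) (hss : s ^ 2 = δ) (hms : m * s ≤ 2) {v0 v1 v2 : ℂ}
    (h1 : ‖v1‖ ≤ 1) (a0 : ‖v0 - v1‖ ≤ 3 * s) (a2 : ‖v2 - v1‖ ≤ 3 * s)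
    (hd : ‖v0 - 2 * v1 + v2‖ ≤ 2 * δ) {A B : ℝ} (hA : 0 ≤ A) (hB : 0 ≤ B) (hAB : (A + B) / 8 ≤ ‖v1‖ ^ 2) :
    tri δ (c2p (Nrm v0)) (c2p (Nrm v1)) (c2p (Nrm v2)) ≤
      1172 ^ 2 * (1 / (1 + (m : ℝ) ^ 2 * A / 8) * (1 / (1 + (m : ℝ) ^ 2 * B / 8))) := by
  set T := tri δ (c2p (Nrm v0)) (c2p (Nrm v1)) (c2p (Nrm v2)) with hT
  have hT0 : 0 ≤ T := tri_nonneg _ _ _ _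
  have hT16 : T ≤ 16 := tri_Nrm_16 hδ hδ1 _ _ _
  set q := (m : ℝ) ^ 2 * ‖v1‖ ^ 2 with hq
  have hq0 : 0 ≤ q := by positivity
  have hmd : (m : ℝ) ^ 2 * δ ≤ 4 := by
    rw [← hss, ← mul_pow]
    have : 0 ≤ m * s := by positivity
    nlinarith
  have key : T * (1 + q) ^ 2 ≤ 1172 ^ 2 := by
    by_cases hne : v1 = 0
    · have : q = 0 := by rw [hq, hne]; simp
      rw [this]; linarith
    · have hn : 0 < ‖v1‖ := norm_pos_iff.2 hne
      have hn2 : ‖v1‖ ^ 2 ≤ ‖v1‖ := by nlinarith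
      have b0 : ‖v0 - v1‖ ^ 2 ≤ (3 * s) ^ 2 := by gcongr
      have b2 : ‖v2 - v1‖ ^ 2 ≤ (3 * s) ^ 2 := by gcongr
      have hX : T ≤ (292 * δ / ‖v1‖ ^ 2) ^ 2 := by
        refine (tri_Nrm_le hδ hne).trans ?_
        have c1 : ‖v0 - 2 * v1 + v2‖ / ‖v1‖ ≤ 2 * δ / ‖v1‖ ^ 2 := by gcongr
        have c2 : 16 * (‖v0 - v1‖ ^ 2 + ‖v2 - v1‖ ^ 2) / ‖v1‖ ^ 2 ≤ 288 * δ / ‖v1‖ ^ 2 := by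
          apply div_le_div_of_nonneg_right _ (by positivity)
          nlinarith
        have c3 : 2 * δ ≤ 2 * δ / ‖v1‖ ^ 2 := by
          rw [le_div_iff₀ (by positivity)]; nlinarith
        have c4 : 292 * δ / ‖v1‖ ^ 2 = 2 * δ / ‖v1‖ ^ 2 + 288 * δ / ‖v1‖ ^ 2 + 2 * δ / ‖v1‖ ^ 2 := by ring
        rw [c4]
        gcongr
      have r1 : √T ≤ 4 := by
        rw [Real.sqrt_le_left (by norm_num)]; linarith
      have r2 : √T ≤ 292 * δ / ‖v1‖ ^ 2 := by
        rw [Real.sqrt_le_left (by positivity)]; exact hX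
      have r3 : √T * q ≤ 1168 := by
        calc √T * q ≤ 292 * δ / ‖v1‖ ^ 2 * q := by gcongr
          _ = 292 * (m ^ 2 * δ) := by rw [hq]; field_simp
          _ ≤ 1168 := by linarith
      have r4 : √T * (1 + q) ≤ 1172 := by linarith
      calc T * (1 + q) ^ 2 = (√T * (1 + q)) ^ 2 := by rw [mul_pow, Real.sq_sqrt hT0]
        _ ≤ 1172 ^ 2 := by gcongr
  have hm2 : 0 ≤ (m : ℝ) ^ 2 := by positivity
  have hA' : 0 ≤ (m : ℝ) ^ 2 * A / 8 := by positivity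
  have hB' : 0 ≤ (m : ℝ) ^ 2 * B / 8 := by positivity
  have hABq : (m : ℝ) ^ 2 * A / 8 + (m : ℝ) ^ 2 * B / 8 ≤ q := by
    have := mul_le_mul_of_nonneg_left hAB hm2
    linarith
  set A' := (m : ℝ) ^ 2 * A / 8
  set B' := (m : ℝ) ^ 2 * B / 8
  rw [div_mul_div_comm, one_mul, mul_one_div, le_div_iff₀ (by positivity)]
  refine le_trans ?_ key
  gcongr
  nlinarith [mul_nonneg hA' hB']

end


/-- core weight. -/
noncomputable def GG (θ : ℝ) (m x y : ℕ) : ℝ :=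
  if x < m then 1 / (1 + (m : ℝ) ^ 2 * (1 - 2 * ((x : ℝ) / m)) ^ 2 / 8) *
    (1 / (1 + (m : ℝ) ^ 2 * (1 + cos (θ * y)) / 8)) else 0

lemma GG_nonneg (θ : ℝ) (m x y : ℕ) : 0 ≤ GG θ m x y := by
  unfold GG
  have : 0 ≤ 1 + cos (θ * y) := by linarith [neg_one_le_cos (θ * y)]
  split_ifs <;> positivity

/-- middle indicator. -/
noncomputable def md (k i : ℕ) : ℝ := if |2 * (i : ℤ) - k| ≤ 2 * ((1 : ℕ) : ℤ) then 1 else 0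

lemma md_nonneg (k i : ℕ) : 0 ≤ md k i := by unfold md; split_ifs <;> norm_num

/-- site weight of the vortex construction. -/
noncomputable def wb (θ δ : ℝ) (k m i j : ℕ) : ℝ :=
  1172 ^ 2 * GG θ m (min i (k - i)) (min j (k - j)) +
  16 * ((if min i (k - i) < m then 1 else 0) * md k j) +
  87616 * δ * ((if min i (k - i) = m then 1 else 0) + md k i + md k j)

lemma wb_nonneg {θ δ : ℝ} (hδ : 0 < δ) (k m i j : ℕ) : 0 ≤ wb θ δ k m i j := by
  unfold wb
  have h1 := GG_nonneg θ m (min i (k - i)) (min j (k - j))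
  have h2 := md_nonneg k i
  have h3 := md_nonneg k j
  split_ifs <;> positivity

lemma md_sum (k : ℕ) : ∑ i ∈ range (k + 1), md k i ≤ 3 := by
  have h := mid_count k 1
  rw [Finset.card_filter] at h
  unfold md
  push_cast at h ⊢
  linarith

lemma GG_sum {θ : ℝ} {m k : ℕ} (hm : 1 ≤ m) (hmk : m ≤ k) (hθ : 0 < θ) (h2 : 2 ≤ (m : ℝ) ^ 2 * θ ^ 2) :
    ∑ x ∈ range (k + 1), ∑ y ∈ range (k + 1), GG θ m x y ≤ 1000 * (θ * k / 6 + 1) := by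
  have hB := sum_B (k := k) hθ h2
  have hA := sum_A m hm
  have hB0 : 0 ≤ ∑ y ∈ range (k + 1), 1 / (1 + (m : ℝ) ^ 2 * (1 + cos (θ * y)) / 8) := by
    apply Finset.sum_nonneg
    intro y _
    have : 0 ≤ 1 + cos (θ * y) := by linarith [neg_one_le_cos (θ * y)]
    positivity
  have e : ∑ x ∈ range (k + 1), ∑ y ∈ range (k + 1), GG θ m x y =
      (∑ x ∈ range m, 1 / (1 + (m : ℝ) ^ 2 * (1 - 2 * ((x : ℝ) / m)) ^ 2 / 8)) *
      ∑ y ∈ range (k + 1), 1 / (1 + (m : ℝ) ^ 2 * (1 + cos (θ * y)) / 8) := by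
    rw [Finset.sum_mul_sum]
    symm
    have h3 : range m ⊆ range (k + 1) := by
      intro x hx; simp only [mem_range] at hx ⊢; omega
    rw [← Finset.sum_subset h3 (f := fun x => ∑ y ∈ range (k + 1), GG θ m x y)]
    · apply Finset.sum_congr rfl
      intro x hx
      simp only [mem_range] at hx
      apply Finset.sum_congr rfl
      intro y _
      unfold GG
      rw [if_pos hx]
    · intro x _ hx
      simp only [mem_range] at hx
      apply Finset.sum_eq_zero
      intro y _
      unfold GG
      rw [if_neg hx]
  rw [e]
  calc _ ≤ 10 * (100 * (θ * k / 6 + 1)) := by gcongr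
    _ = _ := by ring

lemma wb_sum {θ δ : ℝ} {m k : ℕ} (hm : 1 ≤ m) (hmk : m ≤ k) (hθ : 0 < θ) (hδ : 0 < δ)
    (h2 : 2 ≤ (m : ℝ) ^ 2 * θ ^ 2) :
    ∑ i ∈ range (k + 1), ∑ j ∈ range (k + 1), wb θ δ k m i j ≤
      1172 ^ 2 * (4000 * (θ * k / 6 + 1)) + 96 * m + 87616 * δ * (8 * (k + 1)) := by
  have hmd := md_sum k
  have e1 : ∑ i ∈ range (k + 1), ∑ j ∈ range (k + 1), GG θ m (min i (k - i)) (min j (k - j)) ≤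
      4000 * (θ * k / 6 + 1) := by
    have h1 := fold_sum k (f := fun x => ∑ j ∈ range (k + 1), GG θ m x (min j (k - j)))
      (fun x => Finset.sum_nonneg fun y _ => GG_nonneg _ _ _ _)
    refine h1.trans ?_
    have h2' : ∀ x ∈ range (k + 1), ∑ j ∈ range (k + 1), GG θ m x (min j (k - j)) ≤
        2 * ∑ j ∈ range (k + 1), GG θ m x j := by
      intro x _
      exact fold_sum k (f := fun j => GG θ m x j) (fun _ => GG_nonneg _ _ _ _)
    have h3 := Finset.sum_le_sum h2'
    rw [← Finset.mul_sum] at h3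
    have h4 := GG_sum hm hmk hθ h2
    linarith
  have e2 : ∑ i ∈ range (k + 1), (if min i (k - i) < m then (1 : ℝ) else 0) ≤ 2 * m := by
    have h1 := fold_sum k (f := fun x => if x < m then (1 : ℝ) else 0)
      (fun x => by split_ifs <;> norm_num)
    refine h1.trans ?_
    have h3 : ∑ i ∈ range (k + 1), (if i < m then (1 : ℝ) else 0) ≤ m := by
      rw [← Finset.sum_filter]
      simp only [sum_const, nsmul_eq_mul, mul_one]
      have : (filter (fun i => i < m) (range (k + 1))).card ≤ (range m).card := by
        apply card_le_card
        intro x hx; simp only [mem_filter, mem_range] at hx ⊢; omega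
      rw [card_range] at this
      exact_mod_cast this
    linarith
  have e3 : ∑ i ∈ range (k + 1), (if min i (k - i) = m then (1 : ℝ) else 0) ≤ 2 := by
    have h1 := fold_sum k (f := fun x => if x = m then (1 : ℝ) else 0)
      (fun x => by split_ifs <;> norm_num)
    refine h1.trans ?_
    rw [Finset.sum_ite_eq']
    split_ifs <;> norm_num
  have e4 : ∑ i ∈ range (k + 1), ∑ j ∈ range (k + 1), (if min i (k - i) < m then (1 : ℝ) else 0) * md k j
      ≤ 6 * m := by
    rw [← Finset.sum_mul_sum]
    have h5 : 0 ≤ ∑ i ∈ range (k + 1), md k i := Finset.sum_nonneg fun i _ => md_nonneg k i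
    calc _ ≤ (2 * (m : ℝ)) * 3 := by gcongr
      _ = _ := by ring
  have e5 : ∑ i ∈ range (k + 1), ∑ j ∈ range (k + 1),
      ((if min i (k - i) = m then (1 : ℝ) else 0) + md k i + md k j) ≤ 8 * (k + 1) := by
    simp only [Finset.sum_add_distrib, sum_const, card_range, nsmul_eq_mul]
    rw [← Finset.mul_sum, ← Finset.mul_sum]
    push_cast
    have : (0 : ℝ) ≤ (k : ℝ) + 1 := by positivity
    nlinarith
  unfold wb
  simp only [Finset.sum_add_distrib (f := fun j => _ + _), ← Finset.mul_sum]
  simp only [Finset.sum_add_distrib, ← Finset.mul_sum] at e1 e4 e5 ⊢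
  have hδ' : 0 ≤ 87616 * δ := by positivity
  have := mul_le_mul_of_nonneg_left e5 hδ'
  linarith

/-- integer fold. -/
def fd (k : ℕ) (i : ℤ) : ℤ := min i (k - i)

lemma fd_trip (k : ℕ) (i : ℤ) : |fd k i - fd k (i + 1)| ≤ 1 ∧ |fd k (i + 2) - fd k (i + 1)| ≤ 1 ∧
    (|2 * (i + 1) - k| ≤ 2 ∨ (fd k i = fd k (i + 1) - 1 ∧ fd k (i + 2) = fd k (i + 1) + 1) ∨
      (fd k (i + 2) = fd k (i + 1) - 1 ∧ fd k i = fd k (i + 1) + 1)) := by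
  unfold fd
  simp only [abs_le]
  omega

lemma fd_nat {k i : ℕ} (h : i ≤ k) : fd k i = ((min i (k - i) : ℕ) : ℤ) := by
  unfold fd; omega

lemma tri_zero {δ : ℝ} {a b c : ℂ} (ha : ‖a‖ = 1) (hb : ‖b‖ = 1) (hc : ‖c‖ = 1)
    (h : a - 2 * b + c + ((2 * δ : ℝ) : ℂ) * b = 0) :
    tri δ (c2p (Nrm a)) (c2p (Nrm b)) (c2p (Nrm c)) = 0 := by
  rw [Nrm_unit ha, Nrm_unit hb, Nrm_unit hc, tri_c2p, h]; simp

set_option maxHeartbeats 1000000 in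
lemma construct_b {ε δ : ℝ} (h0 : 0 < ε) (h1 : ε < 1 / 2) (hδ : 0 < δ) (hδ1 : δ < 1)
    (hσ : ε / √δ < 1 / 100) (hεδ : ε ≤ δ) : ∃ u, InS0per ε u ∧ E ε δ u ≤ 10 ^ 11 * (ε * √δ) := by
  obtain ⟨k, hk, h2, hk1, hk2⟩ := Kof_facts h0 h1
  obtain ⟨hc, hθ0, -, hθ1, hθ2⟩ := theta_facts hδ hδ1
  obtain ⟨m, hm, hm1, hm2⟩ := m_facts hδ hδ1
  set θ := arccos (1 - δ)
  clear_value θ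
  have hs : 0 < √δ := Real.sqrt_pos.2 hδ
  have hss : √δ ^ 2 = δ := Real.sq_sqrt hδ.le
  set s := √δ
  clear_value s
  have hmr : (1 : ℝ) ≤ m := by exact_mod_cast hm
  have hkr : (2 : ℝ) ≤ k := by exact_mod_cast h2
  have hkε : 1 / 2 ≤ k * ε := by nlinarith
  have hs1 : s ≤ 1 := by nlinarith
  have hmk : 25 * m ≤ k := by
    rw [div_lt_iff₀ hs] at hσ
    have h3 : (25 * m : ℝ) * s ≤ k * s := by
      have : k * ε ≤ k * (1 / 100 * s) := by gcongr
      linarith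
    exact_mod_cast le_of_mul_le_mul_right h3 hs
  have hθ3 : |θ| ≤ 3 * s := by
    rw [abs_of_pos hθ0]; nlinarith
  have hmθ : 2 ≤ (m : ℝ) ^ 2 * θ ^ 2 := by
    have : 1 ≤ ((m : ℝ) * s) ^ 2 := by nlinarith
    rw [mul_pow, hss] at this
    have h4 : (m : ℝ) ^ 2 * (2 * δ) ≤ (m : ℝ) ^ 2 * θ ^ 2 := by gcongr
    linarith
  set V : ℤ → ℤ → ℂ := VV θ m with hV
  have hnx : ∀ {x x' : ℤ} (y : ℤ), |x' - x| ≤ 1 → ‖V x' y - V x y‖ ≤ 3 * s := fun {x x'} y h =>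
    near_of_lip (f := fun x => V x y) (by positivity) (fun x => VV_dx hm hs hθ3 hm1 x y) h
  have hny : ∀ {x : ℤ}, 0 ≤ x → ∀ {y y' : ℤ}, |y' - y| ≤ 1 → ‖V x y' - V x y‖ ≤ 3 * s := fun {x} hx {y y'} h =>
    near_of_lip (f := fun y => V x y) (by positivity) (fun y => VV_dy hm hθ3 hx y) h
  have hddx : ∀ {x : ℤ}, x < m → ∀ y, V (x - 1) y - 2 * V x y + V (x + 1) y = 0 := fun h y => VV_ddx h y
  have hddy : ∀ {x : ℤ}, 0 ≤ x → x < m → ∀ y, ‖V x (y - 1) - 2 * V x y + V x (y + 1)‖ ≤ 2 * δ :=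
    fun hx h y => VV_ddy hm hc hδ.le hx h y
  have hhx : ∀ {x : ℤ}, (m : ℤ) < x → ∀ y,
      V (x - 1) y - 2 * V x y + V (x + 1) y + ((2 * δ : ℝ) : ℂ) * V x y = 0 := fun h y => VV_hx hm hc h y
  have hhy : ∀ {x : ℤ}, (m : ℤ) ≤ x → ∀ y,
      V x (y - 1) - 2 * V x y + V x (y + 1) + ((2 * δ : ℝ) : ℂ) * V x y = 0 := fun h y => VV_hy hm hc h y
  have hn1 : ∀ {x : ℤ}, (m : ℤ) ≤ x → ∀ y, ‖V x y‖ = 1 := fun h y => VV_norm hm h y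
  have hz : ∀ y, V 0 y = 1 := fun y => VV_zero y
  have hcore : ∀ {x : ℕ} (y : ℕ), x < m → ∀ {v0 v2 : ℂ}, ‖v0 - V x y‖ ≤ 3 * s → ‖v2 - V x y‖ ≤ 3 * s →
      ‖v0 - 2 * V x y + v2‖ ≤ 2 * δ →
      tri δ (c2p (Nrm v0)) (c2p (Nrm (V x y))) (c2p (Nrm v2)) ≤ 1172 ^ 2 * GG θ m x y := by
    intro x y hx v0 v2 a0 a2 hd
    obtain ⟨g1, g2⟩ := VV_sq (θ := θ) hm (x := x) (by positivity) (by exact_mod_cast hx) y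
    have := tri_core hδ hδ1 hs hss hm2 g1 a0 a2 hd (sq_nonneg _) (by linarith [neg_one_le_cos (θ * ((y : ℤ) : ℝ))]) g2
    unfold GG
    rw [if_pos hx]
    simpa only [Int.cast_natCast] using this
  clear_value V
  set u : ℤ × ℤ → ℝ × ℝ := fun p => c2p (Nrm (V (fd k p.1) (fd k p.2))) with hu
  have hu' : ∀ i j, u (i, j) = c2p (Nrm (V (fd k i) (fd k j))) := fun i j => rfl
  refine ⟨u, ?_, ?_⟩
  · have hrefl : ∀ i, fd k (k - i) = fd k i := by intro i; unfold fd; omega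
    apply per_of_fold
    · refine ⟨fun p _ => ?_, fun j _ => ?_⟩
      · rw [hu]
        have := Nrm_norm (V (fd k p.1) (fd k p.2))
        have h3 : ‖Nrm (V (fd k p.1) (fd k p.2))‖ ^ 2 = 1 := by rw [this]; norm_num
        rw [Complex.sq_norm, Complex.normSq_apply] at h3
        simp only [sqnorm, c2p]
        linarith
      · rw [hu', show fd k 0 = 0 by unfold fd; omega, hz, Nrm_unit (by simp)]
        simp [c2p]
    · intro i j
      rw [hu', hu', hk, hrefl]
    · intro i j
      rw [hu', hu', hk, hrefl]
  · clear_value u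
    have hE := E_le_of_site (δ := δ) hk h2 u (wb θ δ k m) (fun i j => wb_nonneg hδ k m i j)
      (by
        intro i j hi hj
        rw [hu', hu', hu']
        obtain ⟨t0, t2, ht⟩ := fd_trip k i
        have hx : fd k ((i : ℤ) + 1) = ((min (i + 1) (k - (i + 1)) : ℕ) : ℤ) := by
          rw [← fd_nat (by omega)]; push_cast; rfl
        have hy : fd k (j : ℤ) = ((min j (k - j) : ℕ) : ℤ) := fd_nat hj
        have hG := GG_nonneg θ m (min (i + 1) (k - (i + 1))) (min j (k - j))
        have hM1 := md_nonneg k (i + 1)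
        have hM2 := md_nonneg k j
        have hmid : |2 * ((i : ℤ) + 1) - k| ≤ 2 → (m : ℤ) < fd k ((i : ℤ) + 1) ∧ md k (i + 1) = 1 := by
          intro h
          constructor
          · unfold fd; rw [abs_le] at h; omega
          · unfold md; rw [if_pos (by push_cast; linarith)]
        unfold wb
        rw [hy]
        set X := min (i + 1) (k - (i + 1))
        set Y := min j (k - j)
        clear_value X Y
        set x0 := fd k (i : ℤ)
        set x2 := fd k ((i : ℤ) + 2)
        clear_value x0 x2
        rw [hx] at t0 t2 ht hmid ⊢
        clear hx hy
        rcases lt_trichotomy X m with hX | hX | hX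
        · have hXi : (X : ℤ) < m := by exact_mod_cast hX
          have hd : V x0 Y - 2 * V X Y + V x2 Y = 0 := by
            rcases ht with ht | ⟨ha, hb⟩ | ⟨ha, hb⟩
            · have := (hmid ht).1; omega
            · rw [ha, hb]; exact hddx hXi Y
            · rw [ha, hb]; rw [← hddx hXi Y]; ring
          have := hcore (x := X) Y hX (hnx Y t0) (hnx Y t2) (by rw [hd, norm_zero]; positivity)
          refine this.trans ?_
          rw [if_pos hX, if_neg hX.ne]
          have : 0 ≤ 87616 * δ * (0 + md k (i + 1) + md k j) := by positivity
          linarith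
        · have hXi : (m : ℤ) ≤ X := by exact_mod_cast hX.ge
          have := tri_unit hδ hδ1 hs hss (hn1 hXi Y) (hnx Y t0) (hnx Y t2)
          refine this.trans ?_
          rw [if_pos hX, if_neg hX.ge.not_gt]
          have : 0 ≤ 87616 * δ * (md k (i + 1) + md k j) := by positivity
          linarith
        · have hXi : (m : ℤ) < X := by exact_mod_cast hX
          rw [if_neg hX.ne', if_neg hX.le.not_gt]
          rcases ht with ht | ht
          · have := tri_unit hδ hδ1 hs hss (hn1 hXi.le Y) (hnx Y t0) (hnx Y t2)
            refine this.trans ?_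
            rw [(hmid ht).2]
            have : 0 ≤ 87616 * δ * md k j := by positivity
            linarith
          · have hd : V x0 Y - 2 * V X Y + V x2 Y + ((2 * δ : ℝ) : ℂ) * V X Y = 0 := by
              rcases ht with ⟨ha, hb⟩ | ⟨ha, hb⟩
              · rw [ha, hb]; exact hhx hXi Y
              · rw [ha, hb]; rw [← hhx hXi Y]; ring
            rw [tri_zero (hn1 (by omega) Y) (hn1 hXi.le Y) (hn1 (by omega) Y) hd]
            positivity)
      (by
        intro i j hi hj
        rw [hu', hu', hu']
        obtain ⟨t0, t2, ht⟩ := fd_trip k j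
        have hy : fd k ((j : ℤ) + 1) = ((min (j + 1) (k - (j + 1)) : ℕ) : ℤ) := by
          rw [← fd_nat (by omega)]; push_cast; rfl
        have hx : fd k (i : ℤ) = ((min i (k - i) : ℕ) : ℤ) := fd_nat hi
        have hG := GG_nonneg θ m (min i (k - i)) (min (j + 1) (k - (j + 1)))
        have hM1 := md_nonneg k i
        have hM2 := md_nonneg k (j + 1)
        have hmid : |2 * ((j : ℤ) + 1) - k| ≤ 2 → md k (j + 1) = 1 := by
          intro h
          unfold md; rw [if_pos (by push_cast; linarith)]
        unfold wb
        rw [hx]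
        set X := min i (k - i)
        set Y := min (j + 1) (k - (j + 1))
        clear_value X Y
        set y0 := fd k (j : ℤ)
        set y2 := fd k ((j : ℤ) + 2)
        clear_value y0 y2
        rw [hy] at t0 t2 ht ⊢
        clear hx hy
        have hX0 : (0 : ℤ) ≤ X := by positivity
        rcases lt_or_ge X m with hX | hX
        · have hXi : (X : ℤ) < m := by exact_mod_cast hX
          rw [if_pos hX, if_neg hX.ne]
          rcases ht with ht | ht
          · refine (tri_Nrm_16 hδ hδ1 _ _ _).trans ?_
            rw [hmid ht]
            have : 0 ≤ 87616 * δ * (0 + md k i + 1) := by positivity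
            linarith
          · have hd : ‖V X y0 - 2 * V X Y + V X y2‖ ≤ 2 * δ := by
              rcases ht with ⟨ha, hb⟩ | ⟨ha, hb⟩
              · rw [ha, hb]; exact hddy hX0 hXi Y
              · rw [ha, hb]
                convert hddy hX0 hXi Y using 2; ring
            refine (hcore (x := X) Y hX (hny hX0 t0) (hny hX0 t2) hd).trans ?_
            have : 0 ≤ 87616 * δ * (0 + md k i + md k (j + 1)) := by positivity
            linarith
        · have hXi : (m : ℤ) ≤ X := by exact_mod_cast hX
          rw [if_neg hX.not_gt]
          have hI : (0 : ℝ) ≤ if X = m then 1 else 0 := by split_ifs <;> norm_num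
          rcases ht with ht | ht
          · have := tri_unit hδ hδ1 hs hss (hn1 hXi Y) (hny hX0 t0) (hny hX0 t2)
            refine this.trans ?_
            rw [hmid ht]
            have : 0 ≤ 87616 * δ * ((if X = m then 1 else 0) + md k i) := by positivity
            linarith
          · have hd : V X y0 - 2 * V X Y + V X y2 + ((2 * δ : ℝ) : ℂ) * V X Y = 0 := by
              rcases ht with ⟨ha, hb⟩ | ⟨ha, hb⟩
              · rw [ha, hb]; exact hhy hXi Y
              · rw [ha, hb]; rw [← hhy hXi Y]; ring
            rw [tri_zero (hn1 hXi _) (hn1 hXi Y) (hn1 hXi _) hd]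
            positivity)
    refine hE.trans ?_
    have hW := wb_sum (k := k) hm (by omega) hθ0 hδ hmθ
    have hks : 1 ≤ 2 * (k * s ^ 2) := by
      rw [hss]
      have : k * ε ≤ k * δ := by gcongr
      linarith
    have hks1 : 1 ≤ 2 * (k * s) := by nlinarith
    have hmks : (m : ℝ) ≤ 4 * (k * s) := by
      have h5 : (m : ℝ) * s ≤ 4 * (k * s) * s := by nlinarith
      exact le_of_mul_le_mul_right h5 hs
    have hδks : δ * (k + 1) ≤ 2 * (k * s) := by
      have h6 : δ ≤ s := by nlinarith
      have h7 : δ * (k + 1) ≤ s * (k + k) := by gcongr; linarith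
      linarith
    have hθks : θ * k ≤ 3 * (k * s) := by
      have h8 : θ ≤ 3 * s := by rwa [abs_of_pos hθ0] at hθ3
      have h9 : θ * k ≤ 3 * s * k := by gcongr
      linarith
    have hW2 : ∑ i ∈ range (k + 1), ∑ j ∈ range (k + 1), wb θ δ k m i j ≤ 10 ^ 11 * (k * s) := by
      refine hW.trans ?_
      nlinarith
    calc ε ^ 2 * ∑ i ∈ range (k + 1), ∑ j ∈ range (k + 1), wb θ δ k m i j
        ≤ ε ^ 2 * (10 ^ 11 * (k * s)) := by gcongr
      _ = 10 ^ 11 * (ε * s) * (k * ε) := by ring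
      _ ≤ 10 ^ 11 * (ε * s) * 1 := by gcongr
      _ = _ := by ring


lemma eps_le_delta {ε δ : ℝ} (h0 : 0 < ε) (hδ : 0 < δ) (hδ1 : δ < 1)
    (hσ : ε / √δ < 1 / 100) (hT : 1 < (|Real.log (ε / √δ)| + 1) * δ) : ε ≤ δ := by
  have hs : 0 < √δ := Real.sqrt_pos.2 hδ
  have hss : √δ * √δ = δ := Real.mul_self_sqrt hδ.le
  by_contra hc
  push Not at hc
  have hσ0 : 0 < ε / √δ := by positivity
  obtain ⟨e1, -, -⟩ := log_bound hσ0 (by linarith)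
  rw [e1] at hT
  have h1 : √δ ≤ ε / √δ := by
    rw [le_div_iff₀ hs, hss]; exact hc.le
  have h2 : Real.log (1 / (ε / √δ)) ≤ Real.log (1 / √δ) := by
    apply Real.log_le_log (by positivity)
    exact one_div_le_one_div_of_le hs h1
  have h3 : Real.log (1 / √δ) = 1 / 2 * Real.log (1 / δ) := by
    rw [one_div (√δ), one_div δ, Real.log_inv, Real.log_inv, Real.log_sqrt hδ.le]; ring
  have h4 := Real.log_le_sub_one_of_pos (by positivity : 0 < 1 / δ)
  have h5 : 1 / δ * δ = 1 := by field_simp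
  have h6 : (Real.log (1 / (ε / √δ)) + 1) * δ ≤ (1 / 2 * (1 / δ - 1) + 1) * δ := by
    apply mul_le_mul_of_nonneg_right _ hδ.le
    linarith
  nlinarith

/-- Theorem 6.1: scaling law with periodic boundary conditions. -/
theorem scaling_law_periodic :
    (∃ C : ℝ, 0 < C ∧ ∀ ε δ : ℝ, ε ∈ Set.Ioo (0 : ℝ) (1 / 2) → δ ∈ Set.Ioo (0 : ℝ) 1 →
      ∃ u : ℤ × ℤ → ℝ × ℝ, InS0per ε u ∧ E ε δ u ≤ C * sfun ε δ) ∧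
    (∃ δbar ∈ Set.Ioo (0 : ℝ) 1, ∃ c : ℝ, 0 < c ∧
      (∀ ε ∈ Set.Ioo (0 : ℝ) (1 / 2), ∀ δ ∈ Set.Ico δbar 1,
        ∀ u : ℤ × ℤ → ℝ × ℝ, InS0per ε u → c * (ε * Real.sqrt δ) ≤ E ε δ u) ∧
      (∀ δ ∈ Set.Ioo (0 : ℝ) δbar, ∀ ε ∈ Set.Ico δ (1 / 2),
        ∀ u : ℤ × ℤ → ℝ × ℝ, InS0per ε u →
          c * min (δ ^ 2) (ε * (δ * Real.sqrt δ) * (|Real.log (ε / Real.sqrt δ)| + 1))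
            ≤ E ε δ u)) := by
  
  constructor
  · refine ⟨10 ^ 11, by norm_num, ?_⟩
    rintro ε δ ⟨h0, h1⟩ ⟨hδ, hδ1⟩
    have hs : 0 < √δ := Real.sqrt_pos.2 hδ
    have hss : √δ * √δ = δ := Real.mul_self_sqrt hδ.le
    have hσ0 : 0 < ε / √δ := by positivity
    by_cases hσ : 1 / 100 ≤ ε / √δ
    · obtain ⟨a, b⟩ := const_bound (δ := δ) h0 h1
      have hA := caseA h0 h1 hδ hδ1 hσ
      refine ⟨_, a, b.trans (hA.trans ?_)⟩
      have : 0 ≤ sfun ε δ := by nlinarith [sq_nonneg δ]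
      nlinarith
    · push Not at hσ
      obtain ⟨e1, e2, e3⟩ := log_bound hσ0 (by linarith)
      have hT0 : 1 ≤ |Real.log (ε / √δ)| + 1 := by linarith [abs_nonneg (Real.log (ε / √δ))]
      have hTδ : ε * (δ * √δ) * (|Real.log (ε / √δ)| + 1) ≤ δ ^ 2 := by
        rw [← e1] at e2
        have h3 : √(ε / √δ) ≤ 1 / 2 := by
          rw [Real.sqrt_le_left (by norm_num)]; norm_num; linarith
        have h4 : ε * (δ * √δ) * (|Real.log (ε / √δ)| + 1) =
            (ε / √δ * (|Real.log (ε / √δ)| + 1)) * (δ * (√δ * √δ)) := by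
          field_simp
        rw [h4, hss]
        nlinarith [mul_pos hδ hδ]
      by_cases hT : (|Real.log (ε / √δ)| + 1) * δ ≤ 1
      · obtain ⟨u, a, b⟩ := construct_c h0 h1 hδ hδ1 hσ
        refine ⟨u, a, b.trans ?_⟩
        have h5 : ε * (δ * √δ) * (|Real.log (ε / √δ)| + 1) ≤ sfun ε δ := by
          unfold sfun
          refine le_min hTδ (le_min le_rfl ?_)
          have : 0 < ε * √δ := by positivity
          nlinarith
        have : 0 ≤ ε * (δ * √δ) * (|Real.log (ε / √δ)| + 1) := by positivity
        linarith
      · push Not at hT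
        obtain ⟨u, a, b⟩ := construct_b h0 h1 hδ hδ1 hσ (eps_le_delta h0 hδ hδ1 hσ hT)
        refine ⟨u, a, b.trans ?_⟩
        have h5 : ε * √δ ≤ sfun ε δ := by
          have h6 : ε * √δ ≤ ε * (δ * √δ) * (|Real.log (ε / √δ)| + 1) := by
            have : 0 < ε * √δ := by positivity
            nlinarith
          unfold sfun
          exact le_min (h6.trans hTδ) (le_min h6 le_rfl)
        linarith
  · refine ⟨1 / 100, ⟨by norm_num, by norm_num⟩, 1 / 336 ^ 4 / 10 ^ 6, by norm_num, ?_, ?_⟩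
    · intro ε hε δ hδ u hu
      refine le_trans ?_ (lower_large hε hδ u hu.1)
      have : 0 ≤ ε * √δ := mul_nonneg hε.1.le (Real.sqrt_nonneg _)
      apply mul_le_mul_of_nonneg_right _ this
      norm_num
    · intro δ hδ ε hε u hu
      exact lower_small rfl rfl hδ.1 hδ.2 hε.1 hε.2 u hu.1
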